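/- (Main Theorem, unit weight case.) Let k be a field of characteristic 0 and let n be an even integer with n ≥ 4 and n ≠ 6. Let P = k[t_M] be the polynomial ring with one variable t_M for each perfect matching M on {1,…,n}, and let φ : P → A be the k-algebra homomorphism sending t_M to the graph monomial m_M. Then the ideal ker φ (the full ideal of relations among the degree 1 invariants of n points on ℙ¹) is generated by its homogeneous elements of degree 1 together with the simple binomial quadrics t_{M₁}·t_{M₂} − t_{M₃}·t_{M₄}, taken over all quadruples of perfect matchings M₁, M₂, M₃, M₄ on {1,…,n} such that the multiset union of the edges of M₁ and M₂ equals the multiset union of the edges of M₃ and M₄. -/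

import Mathlib

/-!
Let `I` be the ideal on the right-hand side and `Q = P / I`. Since `I` contains all linear
relations, there is a linear map `L₁` on the invariants of degree one with `L₁ (m_M)` the class of
`t_M`, and the binomial quadrics say that `L₁ (ac) L₁ (bd) = L₁ (ad) L₁ (bc)` whenever `a, b` have
valence `x` and `c, d` have the complementary valence (`PtRel.HBin`). The proof constructs linear
maps `L_d` on the invariants of degree `d`, for all `d ≥ 1`, with `L_{d+1} (f g) = L₁ (f) L_d (g)`
(`PtRel.exists_tower`). On homogeneous polynomials of degree `d` the composite `L_d ∘ φ` is then the
quotient map `P → Q`, and as `ker φ` is homogeneous it is contained in `I`.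

Given `L_d`, split the points into two halves. By Kempe's argument the invariants of degree `d + 1`
are spanned by the monomials of bipartite `(d + 1)`-regular graphs `Γ`. Such a graph contains a
perfect matching `M`, and the value of `L_{d+1}` on it has to be
`ψ (Γ) = L₁ (m_M) L_d (m_{Γ - M})` (`PtRel.psi`). Two things have to be checked.

* `ψ (Γ)` does not depend on `M`. This is the exchange identity `PtRel.Star`, which reduces to
  exchanging `[ab][cd]` and `[ac][bd]` on four points (`PtRel.star_of_B4`). In degree two the latter
  is a binomial quadric, and in degree at least four it follows from Hall's theorem and
  multiplicativity (`PtRel.B4_large`). In degree three (`PtRel.B4_one`) the obstruction is reduced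
  to pairs of paths joining `a, b, c, d`. It vanishes for paths with evenly many interior vertices;
  for oddly many it is symmetric enough to be forced to vanish when there are at least eight points,
  whereas for four points no such paths exist. This is where `n ≠ 6` is used.
* `ψ` respects the linear relations between bipartite graph monomials. These are generated by the
  `3 × 3` minors of the matrix of brackets `[ab]`, with `a` in one half and `b` in the other
  (`PtRel.factor`): graphs without three strictly decreasing edges have linearly independent
  monomials (`PtRel.free_indep`), and the minors rewrite every other graph in terms of graphs of
  larger weight `∑ ab`. A minor relation for `ψ` is clear when the part common to its six graphs
  contains a perfect matching, which is always so in degree at least four (`PtRel.mnr_large`).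
  Otherwise a violation of Hall's condition decomposes the common part into components, and the
  relation becomes a determinant identity in degree three (`PtRel.mnr_one`) and an exchange of the
  ends of a component in degree two (`PtRel.mnr_zero`).
-/

open MvPolynomial

/-- The polynomial ring `A = k[x_1, y_1, …, x_n, y_n]`: variable `(i, 0)` is `x_i`
and `(i, 1)` is `y_i`. -/
abbrev PtRing (k : Type) [CommRing k] (n : ℕ) := MvPolynomial (Fin n × Fin 2) k

/-- The bracket `[ab] = x_a y_b − x_b y_a`. -/
noncomputable def bracket (k : Type) [CommRing k] (n : ℕ) (a b : Fin n) : PtRing k n :=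
  X (a, 0) * X (b, 1) - X (b, 0) * X (a, 1)

/-- The graph monomial `m_Γ = ∏_{(a,b) ∈ Γ} [ab]` of a directed graph `Γ`,
viewed as a multiset of directed edges. -/
noncomputable def graphMonomial (k : Type) [CommRing k] (n : ℕ)
    (Γ : Multiset (Fin n × Fin n)) : PtRing k n :=
  (Γ.map fun e => bracket k n e.1 e.2).prod

/-- The `k`-algebra endomorphism of `A` induced by a `2×2` matrix `g = ((p,q),(r,s))`:
`x_i ↦ p·x_i + r·y_i` and `y_i ↦ q·x_i + s·y_i`. -/
noncomputable def subst (k : Type) [CommRing k] (n : ℕ) (g : Matrix (Fin 2) (Fin 2) k) :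
    PtRing k n →ₐ[k] PtRing k n :=
  aeval fun p =>
    if p.2 = 0 then C (g 0 0) * X (p.1, 0) + C (g 1 0) * X (p.1, 1)
    else C (g 0 1) * X (p.1, 0) + C (g 1 1) * X (p.1, 1)

/-- The valence vector of a directed graph: the `i`-th entry is the number of edges
(with multiplicity) having `i` as an endpoint. -/
def valence (n : ℕ) (Γ : Multiset (Fin n × Fin n)) : Fin n → ℕ :=
  fun i => (Γ.map Prod.fst).count i + (Γ.map Prod.snd).count i

/-- `R_v`: the space of `SL₂(k)`-invariant multihomogeneous polynomials of multidegree `v`. -/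
noncomputable def Rv (k : Type) [CommRing k] (n : ℕ) (v : Fin n → ℕ) :
    Submodule k (PtRing k n) :=
  (⨅ g : Matrix.SpecialLinearGroup (Fin 2) k,
      LinearMap.ker ((subst k n (g : Matrix (Fin 2) (Fin 2) k)).toLinearMap
        - (LinearMap.id : PtRing k n →ₗ[k] PtRing k n))) ⊓
  weightedHomogeneousSubmodule k (fun p : Fin n × Fin 2 => Finsupp.single p.1 1)
    (Finsupp.equivFunOnFinite.symm v)

/-- A perfect matching on `{1,…,n}`: every vertex lies on exactly one edge and every edge
`(a,b)` satisfies `a < b`. -/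
def IsPerfectMatching (n : ℕ) (Γ : Multiset (Fin n × Fin n)) : Prop :=
  (∀ e ∈ Γ, e.1 < e.2) ∧
  ∀ i : Fin n, (Γ.map Prod.fst).count i + (Γ.map Prod.snd).count i = 1

/-- The type of perfect matchings on `{1,…,n}`. -/
def Matching (n : ℕ) : Type :=
  {M : Multiset (Fin n × Fin n) // IsPerfectMatching n M}

/-- The `k`-algebra homomorphism `φ : k[t_M] → A` sending the variable `t_M` attached to a
perfect matching `M` to its graph monomial `m_M`. -/
noncomputable def phi (k : Type) [CommRing k] (n : ℕ) :
    MvPolynomial (Matching n) k →ₐ[k] PtRing k n :=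
  aeval fun M => graphMonomial k n M.1

/-! ### Graph monomials and Kempe's spanning sets -/

namespace PtRel

variable {k : Type} [Field k] {n : ℕ}

/-- The indicator vector of the vertex `a`. -/
def dl (a : Fin n) : Fin n → ℕ := Pi.single a 1

lemma dl_apply (a i : Fin n) : dl a i = if i = a then 1 else 0 := by
  simp [dl, Pi.single_apply]

lemma sum_dl (S : Finset (Fin n)) (a : Fin n) :
    ∑ i ∈ S, dl a i = if a ∈ S then 1 else 0 := by
  simp [dl_apply]

variable (k) in
/-- The bracket `[ab]`. -/
noncomputable abbrev br (a b : Fin n) : PtRing k n := bracket k n a b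

variable (k) in
/-- The graph monomial of `Γ`. -/
noncomputable abbrev gm (Γ : Multiset (Fin n × Fin n)) : PtRing k n := graphMonomial k n Γ

lemma plucker (a b c d : Fin n) :
    br k a b * br k c d - br k a c * br k b d + br k a d * br k b c = 0 := by
  simp only [bracket]; ring

lemma br_swap (a b : Fin n) : br k b a = - br k a b := by
  simp only [bracket]; ring

lemma br_self (a : Fin n) : br k a a = 0 := by
  simp only [bracket]; ring

lemma gm_zero : gm k (0 : Multiset (Fin n × Fin n)) = 1 := by simp [graphMonomial]

lemma gm_cons (e : Fin n × Fin n) (Γ : Multiset (Fin n × Fin n)) :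
    gm k (e ::ₘ Γ) = br k e.1 e.2 * gm k Γ := by simp [graphMonomial]

lemma gm_add (Γ Γ' : Multiset (Fin n × Fin n)) :
    gm k (Γ + Γ') = gm k Γ * gm k Γ' := by simp [graphMonomial]

lemma val_zero : valence n 0 = 0 := by ext; simp [valence]

lemma val_cons (e : Fin n × Fin n) (Γ : Multiset (Fin n × Fin n)) :
    valence n (e ::ₘ Γ) = dl e.1 + dl e.2 + valence n Γ := by
  ext i; simp only [valence, Multiset.map_cons, Multiset.count_cons, Pi.add_apply, dl_apply]; omega

lemma val_add (Γ Γ' : Multiset (Fin n × Fin n)) :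
    valence n (Γ + Γ') = valence n Γ + valence n Γ' := by
  ext i; simp only [valence, Multiset.map_add, Multiset.count_add, Pi.add_apply]; omega

variable (k) in
/-- The span of the graph monomials of valence `v`. -/
noncomputable def R (v : Fin n → ℕ) : Submodule k (PtRing k n) :=
  Submodule.span k {f | ∃ Γ, valence n Γ = v ∧ f = gm k Γ}

lemma gm_mem' (Γ : Multiset (Fin n × Fin n)) {v : Fin n → ℕ} (h : valence n Γ = v) :
    gm k Γ ∈ R k v := Submodule.subset_span ⟨Γ, h, rfl⟩

lemma gm_mem (Γ : Multiset (Fin n × Fin n)) : gm k Γ ∈ R k (valence n Γ) := gm_mem' Γ rfl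

lemma br_mem (a b : Fin n) : br k a b ∈ R k (dl a + dl b) := by
  have := gm_mem' (k := k) ((a, b) ::ₘ 0) (v := dl a + dl b)
    (by rw [val_cons, val_zero]; simp)
  rw [gm_cons, gm_zero] at this
  simpa using this

lemma one_mem : (1 : PtRing k n) ∈ R k (0 : Fin n → ℕ) := by
  rw [← gm_zero]; exact gm_mem' _ val_zero

lemma R_mul {v w : Fin n → ℕ} {f g : PtRing k n} (hf : f ∈ R k v) (hg : g ∈ R k w) :
    f * g ∈ R k (v + w) := by
  refine Submodule.span_induction₂ (p := fun f g _ _ => f * g ∈ R k (v + w))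
    ?_ ?_ ?_ ?_ ?_ ?_ ?_ hf hg
  · rintro _ _ ⟨Γ, hΓ, rfl⟩ ⟨Γ', hΓ', rfl⟩
    rw [← gm_add]
    exact gm_mem' _ (by rw [val_add, hΓ, hΓ'])
  · intro y _; simp
  · intro y _; simp
  · intro x y z _ _ _ h1 h2; rw [add_mul]; exact add_mem h1 h2
  · intro x y z _ _ _ h1 h2; rw [mul_add]; exact add_mem h1 h2
  · intro r x y _ _ h; rw [smul_mul_assoc]; exact Submodule.smul_mem _ _ h
  · intro r x y _ _ h; rw [mul_smul_comm]; exact Submodule.smul_mem _ _ h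

lemma R_mul' {u v w : Fin n → ℕ} {f g : PtRing k n} (hf : f ∈ R k v) (hg : g ∈ R k w)
    (h : u = v + w) : f * g ∈ R k u := h ▸ R_mul hf hg

lemma R_cast {u v : Fin n → ℕ} {f : PtRing k n} (hf : f ∈ R k v) (h : u = v) : f ∈ R k u := h ▸ hf

lemma val_eq_zero {Γ : Multiset (Fin n × Fin n)} (h : valence n Γ = 0) : Γ = 0 := by
  induction Γ using Multiset.induction_on with
  | empty => rfl
  | cons e Γ _ =>
    rw [val_cons] at h
    have := congrFun h e.1
    simp [dl_apply] at this

lemma R_zero {f : PtRing k n} (hf : f ∈ R k (0 : Fin n → ℕ)) : ∃ c : k, f = c • 1 := by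
  refine Submodule.span_induction (p := fun f _ => ∃ c : k, f = c • 1) ?_ ?_ ?_ ?_ hf
  · rintro _ ⟨Γ, hΓ, rfl⟩
    rw [val_eq_zero hΓ, gm_zero]; exact ⟨1, by simp⟩
  · exact ⟨0, by simp⟩
  · rintro x y _ _ ⟨c, rfl⟩ ⟨d, rfl⟩; exact ⟨c + d, by rw [add_smul]⟩
  · rintro r x _ ⟨c, rfl⟩; exact ⟨r * c, by rw [mul_smul]⟩

lemma gm_swap_mem {S : Submodule k (PtRing k n)} {a b : Fin n} {f : PtRing k n}
    (h : br k a b * f ∈ S) : br k b a * f ∈ S := by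
  rw [br_swap, neg_mul]; exact neg_mem h

/-- A graph having `s` as an endpoint has an edge at `s`. -/
lemma exists_edge {Γ : Multiset (Fin n × Fin n)} {s : Fin n} (hs : 0 < valence n Γ s) :
    ∃ e Γ', Γ = e ::ₘ Γ' ∧ (e.1 = s ∨ e.2 = s) := by
  have : s ∈ Γ.map Prod.fst ∨ s ∈ Γ.map Prod.snd := by
    by_contra! h
    simp only [valence, Multiset.count_eq_zero_of_notMem h.1,
      Multiset.count_eq_zero_of_notMem h.2] at hs
    omega
  rcases this with h | h <;> obtain ⟨e, he, rfl⟩ := Multiset.mem_map.1 h <;>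
    obtain ⟨Γ', hΓ'⟩ := Multiset.exists_cons_of_mem he
  · exact ⟨e, Γ', hΓ', Or.inl rfl⟩
  · exact ⟨e, Γ', hΓ', Or.inr rfl⟩

/-- `R v` is spanned by the products `[sx] G` as soon as `v s > 0`. -/
lemma R_extract {v : Fin n → ℕ} (s : Fin n) (hs : 0 < v s) (S : Submodule k (PtRing k n))
    (h : ∀ x v' G, v = dl s + dl x + v' → G ∈ R k v' → x ≠ s → br k s x * G ∈ S) :
    R k v ≤ S := by
  refine Submodule.span_le.2 ?_
  rintro _ ⟨Γ, rfl, rfl⟩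
  obtain ⟨⟨a, b⟩, Γ', rfl, hab⟩ := exists_edge hs
  rw [val_cons] at h
  simp only [SetLike.mem_coe, gm_cons]
  dsimp only at *
  by_cases hh : a = b
  · subst hh; rw [br_self, zero_mul]; exact zero_mem _
  rcases hab with rfl | rfl
  · exact h _ _ _ rfl (gm_mem _) (Ne.symm hh)
  · exact gm_swap_mem (h _ _ _ (by abel) (gm_mem _) hh)

/-- number of edges inside `S` -/
lemma sum_val (S : Finset (Fin n)) (Γ : Multiset (Fin n × Fin n)) :
    ∑ i ∈ S, valence n Γ i = (Γ.countP (fun e => e.1 ∈ S)) + (Γ.countP (fun e => e.2 ∈ S)) := by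
  induction Γ using Multiset.induction_on with
  | empty => simp [valence]
  | cons e Γ ih =>
    simp only [val_cons, Pi.add_apply, Finset.sum_add_distrib, ih, sum_dl, Multiset.countP_cons]
    omega

/-- Balance between the edges inside `S` and the edges inside the complement of `S`. -/
lemma sum_val_balance (S : Finset (Fin n)) (Γ : Multiset (Fin n × Fin n)) :
    ∑ i ∈ S, valence n Γ i + 2 * Γ.countP (fun e => e.1 ∉ S ∧ e.2 ∉ S)
      = ∑ i ∈ Sᶜ, valence n Γ i + 2 * Γ.countP (fun e => e.1 ∈ S ∧ e.2 ∈ S) := by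
  induction Γ using Multiset.induction_on with
  | empty => simp [valence]
  | cons e Γ ih =>
    simp only [val_cons, Pi.add_apply, Finset.sum_add_distrib, sum_dl, Multiset.countP_cons,
      Finset.mem_compl]
    by_cases h1 : e.1 ∈ S <;> by_cases h2 : e.2 ∈ S <;> simp [h1, h2] <;> omega

/-- Straightening: if `S` carries at most half of the total valence, then `R v` is spanned by
the graphs without edges inside `S`. -/
lemma kempe (S : Finset (Fin n)) {v : Fin n → ℕ} (hv : ∑ i ∈ S, v i ≤ ∑ i ∈ Sᶜ, v i)
    (T : Submodule k (PtRing k n))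
    (h : ∀ Γ, valence n Γ = v → (∀ e ∈ Γ, ¬ (e.1 ∈ S ∧ e.2 ∈ S)) → gm k Γ ∈ T) :
    R k v ≤ T := by
  refine Submodule.span_le.2 ?_
  rintro _ ⟨Γ, hΓ, rfl⟩
  rw [SetLike.mem_coe]
  induction hN : Γ.countP (fun e => e.1 ∈ S ∧ e.2 ∈ S) using Nat.strong_induction_on
    generalizing Γ with
  | _ N ih =>
    by_cases h0 : ∀ e ∈ Γ, ¬ (e.1 ∈ S ∧ e.2 ∈ S)
    · exact h Γ hΓ h0
    push Not at h0
    obtain ⟨⟨a, b⟩, he, ha, hb⟩ := h0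
    dsimp only at ha hb
    obtain ⟨Γ, rfl⟩ := Multiset.exists_cons_of_mem he
    have hbal := sum_val_balance S ((a, b) ::ₘ Γ)
    rw [hΓ] at hbal
    have hpos : 0 < Γ.countP (fun e => e.1 ∉ S ∧ e.2 ∉ S) := by
      rw [Multiset.countP_cons, Multiset.countP_cons] at hbal
      simp only [ha, hb] at hbal
      simp at hbal
      omega
    obtain ⟨⟨c, d⟩, he', hc, hd⟩ := Multiset.countP_pos.1 hpos
    dsimp only at hc hd
    obtain ⟨Γ, rfl⟩ := Multiset.exists_cons_of_mem he'
    simp only [val_cons] at hΓ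
    simp only [Multiset.countP_cons, ha, hb, hc, hd] at hN
    have h1 := ih (((a, c) ::ₘ (b, d) ::ₘ Γ).countP (fun e => e.1 ∈ S ∧ e.2 ∈ S))
      (by simp only [Multiset.countP_cons, ha, hb, hc, hd]; simp at hN ⊢; omega)
      ((a, c) ::ₘ (b, d) ::ₘ Γ) (by simp only [val_cons]; rw [← hΓ]; abel) rfl
    have h2 := ih (((a, d) ::ₘ (b, c) ::ₘ Γ).countP (fun e => e.1 ∈ S ∧ e.2 ∈ S))
      (by simp only [Multiset.countP_cons, ha, hb, hc, hd]; simp at hN ⊢; omega)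
      ((a, d) ::ₘ (b, c) ::ₘ Γ) (by simp only [val_cons]; rw [← hΓ]; abel) rfl
    simp only [gm_cons] at h1 h2 ⊢
    have : br k a b * (br k c d * gm k Γ) =
      br k a c * (br k b d * gm k Γ) - br k a d * (br k b c * gm k Γ) := by
      linear_combination (gm k Γ) * plucker (k := k) a b c d
    rw [this]
    exact sub_mem h1 h2

/-- `Γ` is bipartite: every edge goes from `S` to its complement. -/
def Bip (S : Finset (Fin n)) (Γ : Multiset (Fin n × Fin n)) : Prop :=
  ∀ e ∈ Γ, e.1 ∈ S ∧ e.2 ∉ S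

lemma exists_orient (S : Finset (Fin n)) (Γ : Multiset (Fin n × Fin n))
    (h : ∀ e ∈ Γ, (e.1 ∈ S ∧ e.2 ∉ S) ∨ (e.1 ∉ S ∧ e.2 ∈ S)) :
    ∃ Γ', Bip S Γ' ∧ valence n Γ' = valence n Γ ∧ (gm k Γ' = gm k Γ ∨ gm k Γ' = - gm k Γ) := by
  induction Γ using Multiset.induction_on with
  | empty => exact ⟨0, by simp [Bip], rfl, Or.inl rfl⟩
  | cons e Γ ih =>
    obtain ⟨a, b⟩ := e
    obtain ⟨Γ', h1, h2, h3⟩ := ih (fun e he => h e (Multiset.mem_cons_of_mem he))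
    have := h _ (Multiset.mem_cons_self (a, b) Γ)
    dsimp only at this
    rcases this with hab | hab
    · refine ⟨(a, b) ::ₘ Γ', ?_, by simp only [val_cons, h2], ?_⟩
      · intro e he
        rcases Multiset.mem_cons.1 he with rfl | he
        · exact hab
        · exact h1 e he
      · simp only [gm_cons]
        rcases h3 with h3 | h3 <;> rw [h3] <;> simp
    · refine ⟨(b, a) ::ₘ Γ', ?_, by simp only [val_cons, h2]; abel, ?_⟩
      · intro e he
        rcases Multiset.mem_cons.1 he with rfl | he
        · exact hab.symm
        · exact h1 e he
      · simp only [gm_cons, br_swap a b]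
        rcases h3 with h3 | h3 <;> rw [h3] <;> simp

/-- If `S` carries exactly half of the total valence, `R v` is spanned by bipartite graphs. -/
lemma kempe_bip (S : Finset (Fin n)) {v : Fin n → ℕ} (hv : ∑ i ∈ S, v i = ∑ i ∈ Sᶜ, v i)
    (T : Submodule k (PtRing k n))
    (h : ∀ Γ, valence n Γ = v → Bip S Γ → gm k Γ ∈ T) :
    R k v ≤ T := by
  refine kempe S hv.le T fun Γ hΓ hS => ?_
  have hbal := sum_val_balance S Γ
  rw [hΓ, hv, Multiset.countP_eq_zero.2 hS] at hbal
  have h0 : Γ.countP (fun e => e.1 ∉ S ∧ e.2 ∉ S) = 0 := by omega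
  rw [Multiset.countP_eq_zero] at h0
  obtain ⟨Γ', h1, h2, h3⟩ := exists_orient (k := k) S Γ (fun e he => by
    have := hS e he
    have := h0 e he
    tauto)
  have := h Γ' (h2.trans hΓ) h1
  rcases h3 with h3 | h3 <;> rw [h3] at this
  · exact this
  · simpa using this

end PtRel

/-! ### Matchings in bipartite graphs -/

namespace PtRel

variable {k : Type} [Field k] {n : ℕ}

/-- The indicator vector of a set of vertices. -/
def ind (X : Finset (Fin n)) : Fin n → ℕ := fun i => if i ∈ X then 1 else 0

lemma ind_apply (X : Finset (Fin n)) (i : Fin n) : ind X i = if i ∈ X then 1 else 0 := rfl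

lemma sum_ind (S X : Finset (Fin n)) : ∑ i ∈ S, ind X i = (S ∩ X).card := by
  simp only [ind, Finset.sum_boole, Finset.filter_mem_eq_inter, Nat.cast_id]

/-- The neighbours of `U` inside `B`. -/
def nb (Γ : Multiset (Fin n × Fin n)) (B U : Finset (Fin n)) : Finset (Fin n) :=
  B.filter (fun b => ∃ a ∈ U, (a, b) ∈ Γ)

lemma mem_nb {Γ : Multiset (Fin n × Fin n)} {B U : Finset (Fin n)} {b : Fin n} :
    b ∈ nb Γ B U ↔ b ∈ B ∧ ∃ a ∈ U, (a, b) ∈ Γ := by simp [nb]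

/-- Hall's theorem for the edges of `Γ` from `A` to `B`. -/
lemma hall (Γ : Multiset (Fin n × Fin n)) (A B : Finset (Fin n)) (hAB : Disjoint A B)
    (hc : A.card = B.card) (h : ∀ U ⊆ A, U.card ≤ (nb Γ B U).card) :
    ∃ M ≤ Γ, valence n M = ind (A ∪ B) ∧ ∀ e ∈ M, e.1 ∈ A ∧ e.2 ∈ B := by
  classical
  have key := (Finset.all_card_le_biUnion_card_iff_exists_injective
    (fun a : A => nb Γ B {a.1})).1 (by
      intro s
      have := h (s.map (Function.Embedding.subtype _)) (by
        intro x hx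
        simp only [Finset.mem_map, Function.Embedding.subtype_apply] at hx
        obtain ⟨y, _, rfl⟩ := hx
        exact y.2)
      rw [Finset.card_map] at this
      refine this.trans (Finset.card_le_card ?_)
      intro b hb
      rw [mem_nb] at hb
      obtain ⟨hb, a, ha, hab⟩ := hb
      simp only [Finset.mem_map, Function.Embedding.subtype_apply] at ha
      obtain ⟨y, hy, rfl⟩ := ha
      exact Finset.mem_biUnion.2 ⟨y, hy, mem_nb.2 ⟨hb, y.1, by simp, hab⟩⟩)
  obtain ⟨f, hf, hft⟩ := key
  have hft' : ∀ a : A, f a ∈ B ∧ (a.1, f a) ∈ Γ := by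
    intro a
    have := mem_nb.1 (hft a)
    simpa using this
  refine ⟨A.attach.val.map (fun a => (a.1, f a)), ?_, ?_, ?_⟩
  · rw [Multiset.le_iff_subset]
    · intro e he
      obtain ⟨a, _, rfl⟩ := Multiset.mem_map.1 he
      exact (hft' a).2
    · refine Multiset.Nodup.map ?_ A.attach.nodup
      intro a b hab
      exact Subtype.ext (congrArg Prod.fst hab)
  · have himg : A.attach.image f = B := by
      refine Finset.eq_of_subset_of_card_le ?_ ?_
      · intro b hb
        obtain ⟨a, _, rfl⟩ := Finset.mem_image.1 hb
        exact (hft' a).1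
      · rw [Finset.card_image_of_injective _ hf, Finset.card_attach, hc]
    ext i
    simp only [valence, Multiset.map_map, Function.comp_def, ind_apply, Finset.mem_union]
    have h1 : (Multiset.map (fun a : A => a.1) A.attach.val) = A.val :=
      Multiset.attach_map_val _
    have h2 : (Multiset.map f A.attach.val) = B.val := by
      rw [← himg, Finset.image_val_of_injOn hf.injOn]
    rw [h1, h2]
    rw [Multiset.count_eq_of_nodup A.nodup, Multiset.count_eq_of_nodup B.nodup]
    simp only [Finset.mem_val]
    have h5 : i ∈ A → i ∉ B := fun h => Finset.disjoint_left.1 hAB h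
    by_cases h3 : i ∈ A <;> by_cases h4 : i ∈ B <;> simp_all
  · intro e he
    obtain ⟨a, _, rfl⟩ := Multiset.mem_map.1 he
    exact ⟨a.2, (hft' a).1⟩

/-- Counting the edges at `U ⊆ S` in a bipartite graph. -/
lemma bip_count_left {S U : Finset (Fin n)} {Γ : Multiset (Fin n × Fin n)} (hΓ : Bip S Γ)
    (hU : U ⊆ S) : ∑ i ∈ U, valence n Γ i = Γ.countP (fun e => e.1 ∈ U) := by
  rw [sum_val, Nat.add_eq_left, Multiset.countP_eq_zero]
  intro e he h
  exact (hΓ e he).2 (hU h)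

lemma bip_count_right {S U : Finset (Fin n)} {Γ : Multiset (Fin n × Fin n)} (hΓ : Bip S Γ)
    (hU : Disjoint U S) : ∑ i ∈ U, valence n Γ i = Γ.countP (fun e => e.2 ∈ U) := by
  rw [sum_val, Nat.add_eq_right, Multiset.countP_eq_zero]
  intro e he h
  exact Finset.disjoint_left.1 hU h (hΓ e he).1

lemma nb_subset (Γ : Multiset (Fin n × Fin n)) (B U : Finset (Fin n)) : nb Γ B U ⊆ B :=
  Finset.filter_subset _ _

lemma nb_disj (Γ : Multiset (Fin n × Fin n)) (S U : Finset (Fin n)) :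
    Disjoint (nb Γ Sᶜ U) S := by
  rw [Finset.disjoint_left]
  intro x hx
  simpa using nb_subset _ _ _ hx

lemma countP_split (Γ : Multiset (Fin n × Fin n)) (p q : Fin n × Fin n → Prop) [DecidablePred p]
    [DecidablePred q] :
    Γ.countP p = Γ.countP (fun e => p e ∧ q e) + Γ.countP (fun e => p e ∧ ¬ q e) := by
  induction Γ using Multiset.induction_on with
  | empty => simp
  | cons e Γ ih =>
    simp only [Multiset.countP_cons, ih]
    by_cases h1 : p e <;> by_cases h2 : q e <;> simp [h1, h2] <;> omega

/-- Edge count between `U` and its neighbours: the surplus of valence of the neighbours is the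
number of edges reaching them from outside `U`. -/
lemma bip_count_nb {S U : Finset (Fin n)} {Γ : Multiset (Fin n × Fin n)} (hΓ : Bip S Γ)
    (hU : U ⊆ S) : ∑ i ∈ nb Γ Sᶜ U, valence n Γ i =
      ∑ i ∈ U, valence n Γ i + Γ.countP (fun e => e.2 ∈ nb Γ Sᶜ U ∧ ¬ e.1 ∈ U) := by
  rw [bip_count_left hΓ hU, bip_count_right hΓ (nb_disj _ _ _),
    countP_split Γ (fun e => e.2 ∈ nb Γ Sᶜ U) (fun e => e.1 ∈ U)]
  congr 1
  refine Multiset.countP_congr rfl fun e he => ?_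
  refine propext ⟨fun h => h.2, fun h => ⟨mem_nb.2 ⟨?_, e.1, h, he⟩, h⟩⟩
  simpa using (hΓ e he).2

lemma bip_mono {S : Finset (Fin n)} {Γ Γ' : Multiset (Fin n × Fin n)} (h : Bip S Γ)
    (hle : Γ' ≤ Γ) : Bip S Γ' := fun e he => h e (Multiset.mem_of_le hle he)

lemma bip_add {S : Finset (Fin n)} {Γ Γ' : Multiset (Fin n × Fin n)} (h : Bip S Γ)
    (h' : Bip S Γ') : Bip S (Γ + Γ') := fun e he =>
  (Multiset.mem_add.1 he).elim (h e) (h' e)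

lemma bip_cons {S : Finset (Fin n)} {Γ : Multiset (Fin n × Fin n)} {e : Fin n × Fin n}
    (h1 : e.1 ∈ S) (h2 : e.2 ∉ S) (h' : Bip S Γ) : Bip S (e ::ₘ Γ) := fun e' he => by
  rcases Multiset.mem_cons.1 he with rfl | he
  · exact ⟨h1, h2⟩
  · exact h' _ he

lemma ind_univ : ind (Finset.univ : Finset (Fin n)) = 1 := by ext; simp [ind]

/-- Hall's theorem for perfect matchings: either a perfect matching exists in the bipartite
graph `Γ`, or some `U` has too few neighbours. -/
lemma hall_or {S : Finset (Fin n)} (hS : S.card = Sᶜ.card) {Γ : Multiset (Fin n × Fin n)} :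
    (∃ M ≤ Γ, valence n M = 1) ∨ ∃ U ⊆ S, (nb Γ Sᶜ U).card < U.card := by
  by_cases h : ∀ U ⊆ S, U.card ≤ (nb Γ Sᶜ U).card
  · obtain ⟨M, h1, h2, _⟩ := hall Γ S Sᶜ disjoint_compl_right hS h
    exact Or.inl ⟨M, h1, by rw [h2, Finset.union_compl, ind_univ]⟩
  · push Not at h
    exact Or.inr h

lemma val_sub {M Γ : Multiset (Fin n × Fin n)} (h : M ≤ Γ) :
    valence n Γ = valence n M + valence n (Γ - M) := by
  rw [← val_add, add_tsub_cancel_of_le h]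

/-- Regular bipartite graphs have perfect matchings. -/
lemma regular_matching {S : Finset (Fin n)} (hS : S.card = Sᶜ.card)
    {Γ : Multiset (Fin n × Fin n)} (hΓ : Bip S Γ) {d : ℕ}
    (hd : valence n Γ = (d + 1) • (1 : Fin n → ℕ)) : ∃ M ≤ Γ, valence n M = 1 := by
  rcases hall_or hS (Γ := Γ) with h | ⟨U, hU, hlt⟩
  · exact h
  · exfalso
    have := bip_count_nb hΓ hU
    rw [hd] at this
    simp at this
    nlinarith

end PtRel

/-! ### The exchange identity -/

namespace PtRel

variable {k : Type} [Field k] {n : ℕ} {Q : Type} [CommRing Q] [Algebra k Q]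

/-- The difference `L₁(ZY) L'(Y'W) - L₁(ZY') L'(YW)`, as a linear map in `Y`. -/
noncomputable def bet (L1 LE : PtRing k n →ₗ[k] Q) (Z W Y' : PtRing k n) : PtRing k n →ₗ[k] Q where
  toFun Y := L1 (Z * Y) * LE (Y' * W) - L1 (Z * Y') * LE (Y * W)
  map_add' Y1 Y2 := by simp only [mul_add, add_mul, map_add]; ring
  map_smul' c Y := by
    simp only [mul_smul_comm, smul_mul_assoc, map_smul, RingHom.id_apply, smul_sub]

lemma bet_apply (L1 LE : PtRing k n →ₗ[k] Q) (Z W Y' Y : PtRing k n) :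
    bet L1 LE Z W Y' Y = L1 (Z * Y) * LE (Y' * W) - L1 (Z * Y') * LE (Y * W) := rfl

lemma bet_anti (L1 LE : PtRing k n →ₗ[k] Q) (Z W Y' Y : PtRing k n) :
    bet L1 LE Z W Y' Y = - bet L1 LE Z W Y Y' := by
  simp only [bet_apply]; ring

/-- The exchange identity for `Y, Y'` of valence `y`. -/
def Star (e : ℕ) (L1 LE : PtRing k n →ₗ[k] Q) (y : Fin n → ℕ) : Prop :=
  ∀ z, z + y = 1 → ∀ Z ∈ R k z, ∀ W ∈ R k (e • 1 + z), ∀ Y ∈ R k y, ∀ Y' ∈ R k y,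
    bet L1 LE Z W Y' Y = 0

/-- The exchange identity on four points. -/
def B4 (e : ℕ) (L1 LE : PtRing k n →ₗ[k] Q) : Prop :=
  ∀ a b c d x, x + dl a + dl b + dl c + dl d = 1 → ∀ Z ∈ R k x, ∀ W ∈ R k (e • 1 + x),
    bet L1 LE Z W (br k a c * br k b d) (br k a b * br k c d) = 0

/-- The exchange of a product `Y1 * Y2` reduces to the exchanges of its factors. -/
lemma star_split {e : ℕ} {L1 LE : PtRing k n →ₗ[k] Q} {y1 y2 z : Fin n → ℕ}
    (h2 : Star e L1 LE y2) (hz : z + (y1 + y2) = 1)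
    {Z W Y1 Y1' Y2 Y2' : PtRing k n} (hZ : Z ∈ R k z) (hW : W ∈ R k (e • 1 + z))
    (hY1 : Y1 ∈ R k y1) (hY1' : Y1' ∈ R k y1) (hY2 : Y2 ∈ R k y2) (hY2' : Y2' ∈ R k y2)
    (h1 : bet L1 LE (Z * Y2) (Y2' * W) Y1' Y1 = 0) :
    bet L1 LE Z W (Y1' * Y2') (Y1 * Y2) = 0 := by
  have h3 := h2 (z + y1) (by rw [← hz]; abel) (Z * Y1') (R_mul hZ hY1')
    (Y1 * W) (R_mul' hY1 hW (by abel)) Y2 hY2 Y2' hY2'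
  rw [bet_apply] at h1 h3 ⊢
  rw [show Z * (Y1 * Y2) = Z * Y2 * Y1 by ring, show Y1' * Y2' * W = Y1' * (Y2' * W) by ring,
    show Z * (Y1' * Y2') = Z * Y1' * Y2' by ring, show Y1 * Y2 * W = Y2 * (Y1 * W) by ring]
  rw [show Z * Y1' * Y2 = Z * Y2 * Y1' by ring, show Y2' * (Y1 * W) = Y1 * (Y2' * W) by ring] at h3
  linear_combination h1 + h3

/-- A common factor may be ignored in an exchange. -/
lemma star_share {e : ℕ} {L1 LE : PtRing k n →ₗ[k] Q} {y1 y2 z : Fin n → ℕ}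
    (h2 : Star e L1 LE y2) (hz : z + (y1 + y2) = 1)
    {Z W E Y2 Y2' : PtRing k n} (hZ : Z ∈ R k z) (hW : W ∈ R k (e • 1 + z))
    (hE : E ∈ R k y1) (hY2 : Y2 ∈ R k y2) (hY2' : Y2' ∈ R k y2) :
    bet L1 LE Z W (E * Y2') (E * Y2) = 0 :=
  star_split h2 hz hZ hW hE hE hY2 hY2' (by rw [bet_apply]; ring)

lemma two_cancel [CharZero k] {q : Q} (h : q + q = 0) : q = 0 := by
  have h2 : (2 : k) • q = 0 := by rw [two_smul, h]
  exact (smul_eq_zero_iff_right (two_ne_zero)).1 h2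

/-- The linear algebra on six points: three functionals whose alternating sum vanishes, which
vanish on the multiples of `[af]` and when an edge of the corresponding matching of
`{b, c, d, e}` occurs. -/
lemma six_solve [CharZero k] (l1 l2 l3 : PtRing k n →ₗ[k] Q) (a b c d e f : Fin n)
    (hs : ∀ N, l1 N - l2 N + l3 N = 0)
    (h1 : ∀ p q r s, (p, q, r, s) ∈ ({(b, c, d, e), (b, d, c, e), (b, e, c, d), (d, e, b, c),
       (c, e, b, d), (c, d, b, e)} : Set (Fin n × Fin n × Fin n × Fin n)) →
       l1 (br k a f * br k p q * br k r s) = 0 ∧ l2 (br k a f * br k p q * br k r s) = 0 ∧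
       l3 (br k a f * br k p q * br k r s) = 0)
    (hbc : ∀ p q r s, (p, q, r, s) ∈ ({(a, d, f, e), (a, e, f, d)} :
      Set (Fin n × Fin n × Fin n × Fin n)) → l1 (br k p q * br k r s * br k b c) = 0)
    (hde : l1 (br k a c * br k f b * br k d e) = 0)
    (hbd : l2 (br k a c * br k f e * br k b d) = 0)
    (hce : l2 (br k a d * br k f b * br k c e) = 0)
    (hbe : l3 (br k a c * br k f d * br k b e) = 0)
    (hcd : l3 (br k a e * br k f b * br k c d) = 0) :
    l1 (br k a b * br k c d * br k e f) = 0 := by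
  have P := plucker (k := k) (n := n)
  have S := br_swap (k := k) (n := n)
  have sw : ∀ p q r s, br k a p * br k f q * br k r s =
      br k a q * br k f p * br k r s + br k a f * br k p q * br k r s := by
    intro p q r s
    linear_combination -br k r s * P a f p q
  -- changing the partners of `a` and `f`
  have w1 := congrArg l1 (sw e c b d)
  have w3 := congrArg l3 (sw e c b d)
  have w2 := congrArg l2 (sw d e b c)
  have w2' := congrArg l2 (sw d c b e)
  have w4 := congrArg l1 (sw e b c d)
  simp only [map_add] at w1 w3 w2 w2' w4
  have t1 := congrArg l1 (show br k a c * br k f e * br k b d =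
    - (br k a c * br k f b * br k d e) + br k a c * br k f d * br k b e by
      linear_combination br k a c * (P f e b d) + br k a c * br k f b * S d e
        - br k a c * br k f d * S b e)
  have t2 := congrArg l2 (show br k a d * br k f e * br k b c =
    - (br k a d * br k f b * br k c e) + br k a d * br k f c * br k b e by
      linear_combination br k a d * (P f e b c) + br k a d * br k f b * S c e
        - br k a d * br k f c * S b e)
  have t3 := congrArg l3 (show br k a e * br k f d * br k b c =
    - (br k a e * br k f b * br k c d) + br k a e * br k f c * br k b d by
      linear_combination br k a e * (P f d b c) + br k a e * br k f b * S c d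
        - br k a e * br k f c * S b d)
  have t4 := congrArg l1 (show br k a e * br k f d * br k b c =
    - (br k a e * br k f b * br k c d) + br k a e * br k f c * br k b d by
      linear_combination br k a e * (P f d b c) + br k a e * br k f b * S c d
        - br k a e * br k f c * S b d)
  simp only [map_add, map_neg] at t1 t2 t3 t4
  have z1 := (h1 c e b d (by simp)).1
  have z3 := (h1 c e b d (by simp)).2.2
  have z2 := (h1 d e b c (by simp)).2.1
  have z2' := (h1 c d b e (by simp)).2.1
  have z4 := (h1 b e c d (by simp)).1
  have sg : ∀ (l : PtRing k n →ₗ[k] Q) p q r s, l (br k a f * br k p q * br k r s) = 0 →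
      l (br k a f * br k q p * br k r s) = 0 := by
    intro l p q r s h
    rw [S p q, show br k a f * -br k p q * br k r s = -(br k a f * br k p q * br k r s) by ring,
      map_neg, h, neg_zero]
  rw [sg _ _ _ _ _ z1] at w1
  rw [sg _ _ _ _ _ z3] at w3
  rw [z2] at w2
  rw [sg _ _ _ _ _ z2'] at w2'
  rw [sg _ _ _ _ _ z4] at w4
  have u1 := hs (br k a c * br k f e * br k b d)
  have u2 := hs (br k a c * br k f d * br k b e)
  have u3 := hs (br k a e * br k f d * br k b c)
  rw [hbc a e f d (by simp)] at u3
  rw [hbc a e f d (by simp)] at t4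
  have w5 := congrArg l2 (sw e d b c)
  have z5 := sg _ _ _ _ _ z2
  rw [map_add, z5] at w5
  have fin : br k a b * br k c d * br k e f = -(br k a b * br k f e * br k c d) := by
    rw [S f e]; ring
  rw [fin, map_neg, neg_eq_zero]
  rw [hde] at t1
  rw [hce] at t2
  rw [hcd] at t3
  rw [hbd] at u1
  rw [hbe] at u2
  apply two_cancel (k := k)
  linear_combination (-2 : Q) * w4 + 2 * t4 + 2 * w1 + t1 + u2 - w2' - t2 + w2 - u3 + t3 + w3 + u1

lemma sum_dl_univ (a : Fin n) : ∑ i, dl a i = 1 := by simp [sum_dl]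

/-- The exchange identity on four points implies the general one. -/
lemma star_of_B4 [CharZero k] {e : ℕ} {L1 LE : PtRing k n →ₗ[k] Q} (hB : B4 e L1 LE)
    (y : Fin n → ℕ) : Star e L1 LE y := by
  induction hm : ∑ i, y i using Nat.strong_induction_on generalizing y with
  | _ m ih =>
  subst hm
  replace ih : ∀ y' : Fin n → ℕ, ∑ i, y' i < ∑ i, y i → Star e L1 LE y' :=
    fun y' h => ih _ h y' rfl
  intro z hz Z hZ W hW Y hY Y' hY'
  have hy1 : ∀ i, y i ≤ 1 := fun i => by
    have := congrFun hz i
    simp only [Pi.add_apply, Pi.one_apply] at this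
    omega
  by_cases h0 : ∀ i, y i = 0
  · have : y = 0 := funext h0
    subst this
    obtain ⟨c, rfl⟩ := R_zero hY
    obtain ⟨c', rfl⟩ := R_zero hY'
    simp only [bet_apply, mul_smul_comm, smul_mul_assoc, map_smul]
    rw [sub_self, smul_zero]
  push Not at h0
  obtain ⟨b, hb⟩ := h0
  suffices H : R k y ≤ LinearMap.ker (bet L1 LE Z W Y') from H hY
  refine R_extract b (by omega) _ fun a v G hv hG hab => ?_
  rw [LinearMap.mem_ker, bet_anti, neg_eq_zero]
  suffices H : R k y ≤ LinearMap.ker (bet L1 LE Z W (br k b a * G)) from H hY'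
  refine R_extract b (by omega) _ fun c v' G' hv' hG' hcb => ?_
  rw [LinearMap.mem_ker, bet_anti, neg_eq_zero]
  have sumlt : ∀ (p q : Fin n) (u : Fin n → ℕ), y = dl p + dl q + u → ∑ i, u i < ∑ i, y i := by
    intro p q u h
    rw [h]
    simp only [Pi.add_apply, Finset.sum_add_distrib, sum_dl_univ]
    omega
  by_cases hca : c = a
  · subst hca
    have : v = v' := by
      rw [hv] at hv'
      exact add_left_cancel hv'
    subst this
    exact star_share (ih v (sumlt _ _ _ hv)) (by rw [← hv, hz]) hZ hW (br_mem _ _) hG hG'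
  have vc : 0 < v c := by
    have h1 := congrFun hv c
    have h2 := congrFun hv' c
    have := hy1 c
    simp only [Pi.add_apply, dl_apply, hca, hcb, if_true, if_false] at h1 h2
    omega
  rw [← LinearMap.mem_ker, show br k b a * G = LinearMap.mulLeft k (br k b a) G from rfl,
    ← Submodule.mem_comap]
  refine R_extract c vc _ (fun d v2 G2 hv2 hG2 hdc => ?_) hG
  rw [Submodule.mem_comap, LinearMap.mulLeft_apply, LinearMap.mem_ker, bet_anti, neg_eq_zero]
  have vd : 0 < v' d ∧ d ≠ b ∧ d ≠ a := by
    have h1 := congrFun hv d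
    have h2 := congrFun hv' d
    have h3 := congrFun hv2 d
    have := hy1 d
    simp only [Pi.add_apply, dl_apply, hdc, if_true, if_false] at h1 h2 h3
    refine ⟨by split_ifs at h1 h2 h3 <;> omega, ?_, ?_⟩ <;> rintro rfl <;> simp at h1 <;> omega
  obtain ⟨vd, hdb, hda⟩ := vd
  rw [← LinearMap.mem_ker, show br k b c * G' = LinearMap.mulLeft k (br k b c) G' from rfl,
    ← Submodule.mem_comap]
  refine R_extract d vd _ (fun e' v2' G2' hv2' hG2' hed => ?_) hG'
  rw [Submodule.mem_comap, LinearMap.mulLeft_apply, LinearMap.mem_ker, bet_anti, neg_eq_zero]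
  by_cases hea : e' = a
  · subst hea
    have : v2 = v2' := by
      have h : (dl b + dl e' + dl c + dl d) + v2 = (dl b + dl e' + dl c + dl d) + v2' := by
        have := hv.symm.trans hv'
        rw [hv2, hv2'] at this
        calc _ = dl b + dl e' + (dl c + dl d + v2) := by abel
          _ = _ := this
          _ = _ := by abel
      exact add_left_cancel h
    subst this
    have hs := star_split (L1 := L1) (LE := LE) (e := e) (z := z) (y1 := dl b + dl e' + dl c + dl d)
      (y2 := v2) (ih v2 ?_) ?_ hZ hW
      (Y1 := br k b e' * br k c d) (Y1' := br k b c * br k d e') (Y2 := G2) (Y2' := G2')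
      (R_mul' (br_mem _ _) (br_mem _ _) (by abel)) (R_mul' (br_mem _ _) (br_mem _ _) (by abel))
      hG2 hG2' ?_
    · simpa only [mul_assoc] using hs
    · rw [hv, hv2]
      simp only [Pi.add_apply, Finset.sum_add_distrib, sum_dl_univ]
      omega
    · rw [← hz, hv, hv2]; abel
    · have := hB b e' c d (z + v2) (by rw [← hz, hv, hv2]; abel) (Z * G2) (R_mul hZ hG2)
        (G2' * W) (R_mul' hG2' hW (by abel))
      rw [br_swap e' d, bet_anti, mul_neg, map_neg, ← bet_anti, this, neg_zero]
  have v2e : 0 < v2 e' ∧ e' ≠ b ∧ e' ≠ c := by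
    have h1 := congrFun hv e'
    have h2 := congrFun hv' e'
    have h3 := congrFun hv2 e'
    have h4 := congrFun hv2' e'
    have := hy1 e'
    simp only [Pi.add_apply, dl_apply, hed, hea, if_true, if_false] at h1 h2 h3 h4
    refine ⟨by split_ifs at h1 h2 h3 <;> omega, ?_, ?_⟩ <;> rintro rfl <;> simp at h2 <;> omega
  obtain ⟨v2e, heb, hec⟩ := v2e
  rw [← LinearMap.mem_ker, show br k b a * (br k c d * G2) =
    LinearMap.mulLeft k (br k b a * br k c d) G2 by simp,
    ← Submodule.mem_comap]
  refine R_extract e' v2e _ (fun f u U hu hU hfe => ?_) hG2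
  rw [Submodule.mem_comap, LinearMap.mulLeft_apply, LinearMap.mem_ker]
  have hyu : y = dl b + dl c + dl d + dl e' + (dl a + dl f + u) := by
    rw [hv, hv2, hu]; abel
  have hU' : G2' ∈ R k (dl a + dl f + u) := by
    refine R_cast hG2' ?_
    have h : (dl b + dl c + dl d + dl e') + (dl a + dl f + u)
      = (dl b + dl c + dl d + dl e') + v2' := by
      rw [← hyu, hv', hv2']; abel
    exact add_left_cancel h
  have key := six_solve (k := k)
    (bet L1 LE Z W (br k b c * br k d e' * G2') ∘ₗ LinearMap.mulRight k U)
    (bet L1 LE Z W (br k b d * br k c e' * G2') ∘ₗ LinearMap.mulRight k U)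
    (bet L1 LE Z W (br k b e' * br k c d * G2') ∘ₗ LinearMap.mulRight k U) a b c d e' f ?_ ?_ ?_
    ?_ ?_ ?_ ?_ ?_
  · rw [LinearMap.comp_apply, LinearMap.mulRight_apply] at key
    rw [br_swap a b, show -br k a b * br k c d * (br k e' f * U) =
      -(br k a b * br k c d * br k e' f * U) by ring, map_neg, neg_eq_zero]
    simpa only [mul_assoc] using key
  · intro N
    simp only [LinearMap.comp_apply, LinearMap.mulRight_apply]
    rw [bet_anti, bet_anti _ _ _ _ (br k b d * br k c e' * G2'),
      bet_anti _ _ _ _ (br k b e' * br k c d * G2')]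
    have := congrArg (bet L1 LE Z W (N * U)) (show br k b c * br k d e' * G2' -
      br k b d * br k c e' * G2' + br k b e' * br k c d * G2' = 0 by
      linear_combination G2' * plucker (k := k) b c d e')
    simp only [map_add, map_sub, map_zero] at this
    linear_combination -this
  all_goals
    have hlt1 : ∑ i, (dl b + dl c + dl d + dl e') i < ∑ i, y i := by
      rw [hyu]
      simp only [Pi.add_apply, Finset.sum_add_distrib, sum_dl_univ]
      omega
    have hlt2 : ∑ i, (dl a + dl f + u) i < ∑ i, y i := by
      rw [hyu]
      simp only [Pi.add_apply, Finset.sum_add_distrib, sum_dl_univ]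
      omega
    have share : ∀ p q r s p' q' r' s' : Fin n, y = dl p + dl q + (dl r + dl s +
        (dl p' + dl q' + u)) → y = dl p + dl q + (dl r' + dl s' + (dl a + dl f + u)) →
      (bet L1 LE Z W (br k p q * br k r' s' * G2')) (br k r s * br k p' q' * br k p q * U) = 0 := by
      intro p q r s p' q' r' s' h1 h2
      have := star_share (L1 := L1) (LE := LE) (e := e) (z := z) (y1 := dl p + dl q)
        (y2 := dl r + dl s + (dl p' + dl q' + u)) (ih _ (sumlt p q _ h1)) (by rw [← h1, hz]) hZ hW
        (br_mem p q) (R_mul (br_mem r s) (R_mul (br_mem p' q') hU)) (Y2' := br k r' s' * G2')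
        (R_mul' (br_mem r' s') hU' (add_left_cancel (h1.symm.trans h2)))
      rw [show br k r s * br k p' q' * br k p q * U =
        br k p q * (br k r s * (br k p' q' * U)) by ring, mul_assoc]
      exact this
  · intro p q r s h
    simp only [LinearMap.comp_apply, LinearMap.mulRight_apply]
    have hpqrs : dl b + dl c + dl d + dl e' = dl p + dl q + (dl r + dl s) := by
      simp only [Set.mem_insert_iff, Set.mem_singleton_iff, Prod.mk.injEq] at h
      rcases h with h | h | h | h | h | h <;> obtain ⟨rfl, rfl, rfl, rfl⟩ := h <;> abel
    have main : ∀ N' ∈ R k (dl b + dl c + dl d + dl e'),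
      bet L1 LE Z W (N' * G2') (br k a f * br k p q * br k r s * U) = 0 := by
      intro N' hN'
      have hz2 : z + (dl b + dl c + dl d + dl e' + (dl a + dl f + u)) = 1 := by
        rw [← hz, hyu]
      have hNN := R_mul' (k := k) (br_mem p q) (br_mem r s) hpqrs
      have h3 := star_split (L1 := L1) (LE := LE) (e := e) (z := z)
        (y1 := dl b + dl c + dl d + dl e') (y2 := dl a + dl f + u) (ih _ hlt2)
        hz2 hZ hW hNN hN' (R_mul (br_mem a f) hU) hU'
        (ih _ hlt1 (z + (dl a + dl f + u)) (by rw [← hz2]; abel) _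
          (R_mul hZ (R_mul (br_mem a f) hU)) _ (R_mul' hU' hW (by abel)) _ hNN _ hN')
      rw [show br k a f * br k p q * br k r s * U = br k p q * br k r s * (br k a f * U) by ring]
      exact h3
    exact ⟨main _ (R_mul' (br_mem _ _) (br_mem _ _) (by abel)),
      main _ (R_mul' (br_mem _ _) (br_mem _ _) (by abel)),
      main _ (R_mul' (br_mem _ _) (br_mem _ _) (by abel))⟩
  · intro p q r s h
    simp only [LinearMap.comp_apply, LinearMap.mulRight_apply]
    simp only [Set.mem_insert_iff, Set.mem_singleton_iff, Prod.mk.injEq] at h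
    rcases h with h | h <;> obtain ⟨rfl, rfl, rfl, rfl⟩ := h <;>
    exact share b c _ _ _ _ _ _ (by rw [hyu]; abel) (by rw [hyu]; abel)
  all_goals simp only [LinearMap.comp_apply, LinearMap.mulRight_apply]
  · rw [mul_comm (br k b c)]
    exact share d e' _ _ _ _ _ _ (by rw [hyu]; abel) (by rw [hyu]; abel)
  · exact share b d _ _ _ _ _ _ (by rw [hyu]; abel) (by rw [hyu]; abel)
  · rw [mul_comm (br k b d)]
    exact share c e' _ _ _ _ _ _ (by rw [hyu]; abel) (by rw [hyu]; abel)
  · exact share b e' _ _ _ _ _ _ (by rw [hyu]; abel) (by rw [hyu]; abel)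
  · rw [mul_comm (br k b e')]
    exact share c d _ _ _ _ _ _ (by rw [hyu]; abel) (by rw [hyu]; abel)

end PtRel

/-! ### Multiplicative functionals and the candidate for the next degree -/

namespace PtRel

variable {k : Type} [Field k] {n : ℕ} {Q : Type} [CommRing Q] [Algebra k Q]

/-- Compatibility of `L1` with the binomial quadrics. -/
def HBin (L1 : PtRing k n →ₗ[k] Q) : Prop :=
  ∀ x y, x + y = 1 → ∀ a ∈ R k x, ∀ b ∈ R k x, ∀ c ∈ R k y, ∀ d ∈ R k y,
    L1 (a * c) * L1 (b * d) = L1 (a * d) * L1 (b * c)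

/-- Multiplicativity of the functionals in degrees `1`, `e`, `e + 1`. -/
def HMul (e : ℕ) (L1 Le Le1 : PtRing k n →ₗ[k] Q) : Prop :=
  ∀ f ∈ R k (1 : Fin n → ℕ), ∀ g ∈ R k (e • (1 : Fin n → ℕ)), Le1 (f * g) = L1 f * Le g

/-- In degree two the exchange identity on four points is the compatibility of `L1` with the
binomial quadrics. -/
lemma B4_zero {L1 : PtRing k n →ₗ[k] Q} (h : HBin L1) : B4 0 L1 L1 := by
  intro a b c d x hx Z hZ W hW
  rw [bet_apply, sub_eq_zero, mul_comm _ W, mul_comm _ W]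
  exact h x (dl a + dl b + dl c + dl d) (by rw [← hx]; abel) Z hZ W (R_cast hW (by simp))
    _ (R_mul' (br_mem _ _) (br_mem _ _) (by abel)) _ (R_mul' (br_mem _ _) (br_mem _ _) (by abel))

/-- `bet` as a linear map in `W`. -/
noncomputable def betW (L1 LE : PtRing k n →ₗ[k] Q) (Z Y' Y : PtRing k n) :
    PtRing k n →ₗ[k] Q where
  toFun W := bet L1 LE Z W Y' Y
  map_add' W1 W2 := by simp only [bet_apply, mul_add, map_add]; ring
  map_smul' c Y := by
    simp only [bet_apply, mul_smul_comm, map_smul, RingHom.id_apply, smul_sub]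

lemma betW_apply (L1 LE : PtRing k n →ₗ[k] Q) (Z Y' Y W : PtRing k n) :
    betW L1 LE Z Y' Y W = bet L1 LE Z W Y' Y := rfl

/-- A half-size vertex set containing `P` and avoiding `N`. -/
lemma exists_half (hn : Even n) (P N : Finset (Fin n)) (h : Disjoint P N) (hP : 2 * P.card ≤ n)
    (hN : 2 * N.card ≤ n) : ∃ S : Finset (Fin n), P ⊆ S ∧ Disjoint S N ∧ S.card = Sᶜ.card := by
  obtain ⟨m, hm⟩ := hn
  obtain ⟨S, h1, h2, h3⟩ := Finset.exists_subsuperset_card_eq (s := P) (t := Nᶜ) (n := m)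
    (Finset.subset_compl_iff_disjoint_right.2 h) (by omega)
    (by rw [Finset.card_compl, Fintype.card_fin]; omega)
  refine ⟨S, h1, ?_, ?_⟩
  · exact Finset.disjoint_left.2 fun x hx hxN => by simpa [hxN] using h2 hx
  · rw [Finset.card_compl, Fintype.card_fin]; omega

lemma dl_ne {x : Fin n → ℕ} {a b : Fin n} (h : x + dl a + dl b = 1) : a ≠ b := by
  rintro rfl
  have := congrFun h a
  simp [dl_apply] at this

/-- From degree four on, the exchange identity on four points follows from multiplicativity. With
`a, b` on one side and `c, d` on the other, a bipartite graph of valence `(e + 2) • 1 + x` contains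
a perfect matching `M` by Hall's theorem, and splitting off `M` makes both products equal. -/
lemma B4_large (hn : Even n) {e : ℕ} {L1 Le Le1 : PtRing k n →ₗ[k] Q} (h : HMul (e + 2) L1 Le Le1) :
    B4 (e + 2) L1 Le1 := by
  intro a b c d x hx Z hZ W hW
  have hne : a ≠ b ∧ a ≠ c ∧ a ≠ d ∧ b ≠ c ∧ b ≠ d ∧ c ≠ d := by
    refine ⟨dl_ne (x := x + dl c + dl d) ?_, dl_ne (x := x + dl b + dl d) ?_,
      dl_ne (x := x + dl b + dl c) ?_, dl_ne (x := x + dl a + dl d) ?_,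
      dl_ne (x := x + dl a + dl c) ?_, dl_ne (x := x + dl a + dl b) ?_⟩ <;> rw [← hx] <;> abel
  obtain ⟨hab, hac, had, hbc, hbd, hcd⟩ := hne
  have h4 : ({a, b, c, d} : Finset (Fin n)).card ≤ n := by
    simpa using Finset.card_le_univ ({a, b, c, d} : Finset (Fin n))
  have h4' : ({a, b, c, d} : Finset (Fin n)).card = 4 := by
    rw [Finset.card_insert_of_notMem, Finset.card_insert_of_notMem, Finset.card_pair] <;> simp_all
  obtain ⟨S, hS1, hS2, hS3⟩ := exists_half hn {a, b} {c, d} (by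
    rw [Finset.disjoint_left]; simp_all) (by rw [Finset.card_pair hab]; omega)
    (by rw [Finset.card_pair hcd]; omega)
  have haS : a ∈ S := hS1 (by simp)
  have hbS : b ∈ S := hS1 (by simp)
  have hcS : c ∉ S := fun h => Finset.disjoint_left.1 hS2 h (by simp)
  have hdS : d ∉ S := fun h => Finset.disjoint_left.1 hS2 h (by simp)
  have sumx : ∀ U : Finset (Fin n), ∑ i ∈ U, x i + ∑ i ∈ U, dl a i + ∑ i ∈ U, dl b i
      + ∑ i ∈ U, dl c i + ∑ i ∈ U, dl d i = U.card := by
    intro U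
    have := congrArg (fun f : Fin n → ℕ => ∑ i ∈ U, f i) hx
    simpa [Finset.sum_add_distrib] using this
  suffices H : R k ((e + 2) • 1 + x) ≤ LinearMap.ker (betW L1 Le1 Z (br k a c * br k b d)
    (br k a b * br k c d)) from H hW
  refine kempe_bip S ?_ _ fun Γ hΓ hbip => ?_
  · have h1 := sumx S
    have h2 := sumx Sᶜ
    simp only [sum_dl, Finset.mem_compl, haS, hbS, hcS, hdS] at h1 h2
    simp at h1 h2
    simp [Finset.sum_add_distrib]
    rw [← hS3] at h2 ⊢
    omega
  rw [LinearMap.mem_ker, betW_apply]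
  rcases hall_or hS3 (Γ := Γ) with ⟨M, hM, hMv⟩ | ⟨U, hU, hlt⟩
  · have hv := val_sub hM
    rw [hΓ, hMv] at hv
    have hv' : valence n (Γ - M) = (e + 1) • 1 + x := by
      have : 1 + ((e + 1) • 1 + x) = 1 + valence n (Γ - M) := by
        rw [← hv]; ext i; simp; ring
      exact (add_left_cancel this).symm
    have hG := gm_mem' (k := k) _ hv'
    have hM' := gm_mem' (k := k) _ hMv
    have hΓM : gm k Γ = gm k M * gm k (Γ - M) := by
      rw [← gm_add, add_tsub_cancel_of_le hM]
    have key : ∀ Y ∈ R k (dl a + dl b + dl c + dl d), ∀ Y' ∈ R k (dl a + dl b + dl c + dl d),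
      L1 (Z * Y) * Le1 (Y' * gm k Γ) = L1 (gm k M) * Le1 (Z * Y * Y' * gm k (Γ - M)) := by
      intro Y hY Y' hY'
      have m1 : Y' * gm k (Γ - M) ∈ R k ((e + 2) • 1) := R_mul' hY' hG (by
        have : (e + 2) • (1 : Fin n → ℕ) = 1 + (e + 1) • 1 := by ext; simp; ring
        rw [this]
        nth_rewrite 1 [← hx]
        abel)
      have m2 : Z * Y ∈ R k 1 := R_mul' hZ hY (by rw [← hx]; abel)
      rw [hΓM, show Y' * (gm k M * gm k (Γ - M)) = gm k M * (Y' * gm k (Γ - M)) by ring,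
        h _ hM' _ m1, show Z * Y * Y' * gm k (Γ - M) = (Z * Y) * (Y' * gm k (Γ - M)) by ring,
        h _ m2 _ m1]
      ring
    have g1 : br k a c * br k b d ∈ R k (dl a + dl b + dl c + dl d) :=
      R_mul' (br_mem _ _) (br_mem _ _) (by abel)
    have g2 : br k a b * br k c d ∈ R k (dl a + dl b + dl c + dl d) :=
      R_mul' (br_mem _ _) (br_mem _ _) (by abel)
    rw [bet_apply, key _ g2 _ g1, key _ g1 _ g2, sub_eq_zero]
    congr 2
    ring
  · exfalso
    have h1 := bip_count_nb hbip hU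
    have h2 := sumx U
    have h3 := sumx (nb Γ Sᶜ U)
    rw [hΓ] at h1
    have hcU : c ∉ U := fun h => hcS (hU h)
    have hdU : d ∉ U := fun h => hdS (hU h)
    simp only [sum_dl, hcU, hdU] at h2
    simp [Finset.sum_add_distrib] at h1 h2
    have h4 : U.card ≤ ∑ i ∈ U, x i + 2 := by
      rw [← h2]; split_ifs <;> omega
    have h5 : ∑ i ∈ nb Γ Sᶜ U, x i ≤ (nb Γ Sᶜ U).card := by omega
    nlinarith

/-- The candidate value in degree `e + 2` of the graph `Γ`, computed with any perfect matching
contained in `Γ` (and `0` if there is none). -/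
noncomputable def psi (L1 LE : PtRing k n →ₗ[k] Q) (Γ : Multiset (Fin n × Fin n)) : Q :=
  open Classical in
  if h : ∃ M ≤ Γ, valence n M = 1 then
    L1 (gm k h.choose) * LE (gm k (Γ - h.choose)) else 0

/-- The exchange identity makes `psi` independent of the perfect matching. -/
lemma psi_eq {e : ℕ} {L1 LE : PtRing k n →ₗ[k] Q} (hs : ∀ y, Star e L1 LE y)
    {Γ M : Multiset (Fin n × Fin n)} (hΓ : valence n Γ = (e + 2) • 1)
    (hM : M ≤ Γ) (hMv : valence n M = 1) :
    psi L1 LE Γ = L1 (gm k M) * LE (gm k (Γ - M)) := by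
  have hex : ∃ M ≤ Γ, valence n M = 1 := ⟨M, hM, hMv⟩
  rw [psi, dif_pos hex]
  obtain ⟨hM', hMv'⟩ := hex.choose_spec
  generalize hex.choose = M' at hM' hMv'
  have e1 : M = M ∩ M' + (M - M') := by
    ext e; simp only [Multiset.count_add, Multiset.count_inter, Multiset.count_sub]; omega
  have e2 : M' = M ∩ M' + (M' - M) := by
    ext e; simp only [Multiset.count_add, Multiset.count_inter, Multiset.count_sub]; omega
  have e3 : Γ - M = (M' - M) + (Γ - (M ∪ M')) := by
    ext e
    have h1 := Multiset.le_iff_count.1 hM e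
    have h2 := Multiset.le_iff_count.1 hM' e
    simp only [Multiset.count_add, Multiset.count_union, Multiset.count_sub]; omega
  have e4 : Γ - M' = (M - M') + (Γ - (M ∪ M')) := by
    ext e
    have h1 := Multiset.le_iff_count.1 hM e
    have h2 := Multiset.le_iff_count.1 hM' e
    simp only [Multiset.count_add, Multiset.count_union, Multiset.count_sub]; omega
  have v1 : valence n (M ∩ M') + valence n (M - M') = 1 := by rw [← val_add, ← e1, hMv]
  have v2 : valence n (M ∩ M') + valence n (M' - M) = 1 := by rw [← val_add, ← e2, hMv']
  have v3 : valence n (M' - M) = valence n (M - M') := add_left_cancel (v2.trans v1.symm)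
  have v4 : valence n (Γ - (M ∪ M')) = e • 1 + valence n (M ∩ M') := by
    have h1 := val_sub hM
    rw [e3, val_add, hΓ, hMv, v3] at h1
    ext i
    have h1 := congrFun h1 i
    have h2 := congrFun v1 i
    simp at h1 h2 ⊢
    omega
  have key := hs (valence n (M - M')) (valence n (M ∩ M')) v1 _ (gm_mem (M ∩ M')) _
    (gm_mem' (Γ - (M ∪ M')) v4) _ (gm_mem (M - M')) _ (gm_mem' (M' - M) v3)
  rw [bet_apply] at key
  rw [e3, e4]
  rw [← gm_add, ← gm_add, ← gm_add, ← gm_add, ← e1, ← e2] at key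
  linear_combination -key

end PtRel

/-! ### The four-point exchange in degree three: the obstruction -/

namespace PtRel

variable {k : Type} [Field k] {n : ℕ} {Q : Type} [CommRing Q] [Algebra k Q]

/-- The four-point obstruction `L₁(Z[ab][cd]) L₂([ac][bd]W) - L₁(Z[ac][bd]) L₂([ab][cd]W)`. -/
noncomputable def Ph (L1 L2 : PtRing k n →ₗ[k] Q) (a b c d : Fin n) :
    PtRing k n →ₗ[k] PtRing k n →ₗ[k] Q :=
  LinearMap.mk₂ k (fun Z W => bet L1 L2 Z W (br k a c * br k b d) (br k a b * br k c d))
    (fun Z Z' W => by simp only [bet_apply, add_mul, map_add]; ring)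
    (fun r Z W => by simp only [bet_apply, smul_mul_assoc, map_smul, smul_sub])
    (fun Z W W' => by simp only [bet_apply, mul_add, map_add]; ring)
    (fun r Z W => by simp only [bet_apply, mul_smul_comm, map_smul, smul_sub])

lemma Ph_apply (L1 L2 : PtRing k n →ₗ[k] Q) (a b c d : Fin n) (Z W : PtRing k n) :
    Ph L1 L2 a b c d Z W = L1 (Z * (br k a b * br k c d)) * L2 (br k a c * br k b d * W) -
      L1 (Z * (br k a c * br k b d)) * L2 (br k a b * br k c d * W) := rfl

lemma Ph_swap23 (L1 L2 : PtRing k n →ₗ[k] Q) (a b c d : Fin n) :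
    Ph L1 L2 a c b d = - Ph L1 L2 a b c d := by
  refine LinearMap.ext fun Z => LinearMap.ext fun W => ?_
  simp only [Ph_apply, LinearMap.neg_apply]; ring

lemma Ph_swap12 (L1 L2 : PtRing k n →ₗ[k] Q) (a b c d : Fin n) :
    Ph L1 L2 b a c d = - Ph L1 L2 a b c d := by
  refine LinearMap.ext fun Z => LinearMap.ext fun W => ?_
  simp only [Ph_apply, LinearMap.neg_apply]
  have h1 : br k b a * br k c d = -(br k a b * br k c d) := by rw [br_swap a b]; ring
  have h2 : br k b c * br k a d = br k a c * br k b d - br k a b * br k c d := by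
    linear_combination plucker (k := k) a b c d
  rw [h1, h2]
  simp only [mul_sub, sub_mul, map_sub, mul_neg, neg_mul, map_neg]
  ring

lemma Ph_swap34 (L1 L2 : PtRing k n →ₗ[k] Q) (a b c d : Fin n) :
    Ph L1 L2 a b d c = - Ph L1 L2 a b c d := by
  refine LinearMap.ext fun Z => LinearMap.ext fun W => ?_
  simp only [Ph_apply, LinearMap.neg_apply]
  have h1 : br k a b * br k d c = -(br k a b * br k c d) := by rw [br_swap c d]; ring
  have h2 : br k a d * br k b c = br k a c * br k b d - br k a b * br k c d := by
    linear_combination plucker (k := k) a b c d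
  rw [h1, h2]
  simp only [mul_sub, sub_mul, map_sub, mul_neg, neg_mul, map_neg]
  ring

/-- The standing hypotheses for the four-point exchange in degree three. -/
structure Ctx (L1 L2 : PtRing k n →ₗ[k] Q) (a b c d : Fin n) (x : Fin n → ℕ) : Prop where
  hb : HBin L1
  hm : HMul 1 L1 L1 L2
  hx : x + dl a + dl b + dl c + dl d = 1

variable {L1 L2 : PtRing k n →ₗ[k] Q} {a b c d : Fin n} {x : Fin n → ℕ}

lemma Ctx.swap12 (C : Ctx L1 L2 a b c d x) : Ctx L1 L2 b a c d x :=
  ⟨C.hb, C.hm, by rw [← C.hx]; abel⟩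
lemma Ctx.swap23 (C : Ctx L1 L2 a b c d x) : Ctx L1 L2 a c b d x :=
  ⟨C.hb, C.hm, by rw [← C.hx]; abel⟩
lemma Ctx.swap34 (C : Ctx L1 L2 a b c d x) : Ctx L1 L2 a b d c x :=
  ⟨C.hb, C.hm, by rw [← C.hx]; abel⟩

/-- The obstruction vanishes on products of an element of valence `x` and one of valence `1`. -/
lemma Ctx.kill (C : Ctx L1 L2 a b c d x) {Z f g : PtRing k n} {u v : Fin n → ℕ} (hZ : Z ∈ R k x)
    (hf : f ∈ R k u) (hg : g ∈ R k v) (hu : u = x) (hv : v = x + dl a + dl b + dl c + dl d) :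
    Ph L1 L2 a b c d Z (f * g) = 0 := by
  subst hu
  rw [C.hx] at hv
  subst hv
  rw [Ph_apply]
  have m1 : br k a b * br k c d ∈ R k (dl a + dl b + dl c + dl d) :=
    R_mul' (br_mem _ _) (br_mem _ _) (by abel)
  have m2 : br k a c * br k b d ∈ R k (dl a + dl b + dl c + dl d) :=
    R_mul' (br_mem _ _) (br_mem _ _) (by abel)
  have e1 := C.hm (f * (br k a c * br k b d)) (R_mul' hf m2 (by rw [← C.hx]; abel)) g (by simpa)
  have e2 := C.hm (f * (br k a b * br k c d)) (R_mul' hf m1 (by rw [← C.hx]; abel)) g (by simpa)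
  have e3 := C.hb u (dl a + dl b + dl c + dl d) (by rw [← C.hx]; abel) Z hZ f hf _ m1 _ m2
  rw [show br k a c * br k b d * (f * g) = f * (br k a c * br k b d) * g by ring, e1,
    show br k a b * br k c d * (f * g) = f * (br k a b * br k c d) * g by ring, e2]
  linear_combination L1 g * e3

/-! ### Paths -/

variable (k) in
/-- The product of the brackets along the path from `q` to `r` through the vertices of `l`. -/
noncomputable def pth (q : Fin n) : List (Fin n) → Fin n → PtRing k n
  | [], r => br k q r
  | y :: l, r => br k q y * pth y l r

/-- The valence vector counting the entries of a list. -/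
def cnt : List (Fin n) → Fin n → ℕ
  | [] => 0
  | y :: l => dl y + cnt l

lemma cnt_append (l l' : List (Fin n)) : cnt (l ++ l') = cnt l + cnt l' := by
  induction l with
  | nil => simp [cnt]
  | cons y l ih => simp only [List.cons_append, cnt, ih]; abel

lemma cnt_perm {l l' : List (Fin n)} (h : l.Perm l') : cnt l = cnt l' := by
  induction h with
  | nil => rfl
  | cons y _ ih => simp only [cnt, ih]
  | swap y z l => simp only [cnt]; abel
  | trans _ _ h1 h2 => exact h1.trans h2

lemma sum_cnt (l : List (Fin n)) : ∑ i, cnt l i = l.length := by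
  induction l with
  | nil => simp [cnt]
  | cons y l ih =>
    simp only [cnt, Pi.add_apply, Finset.sum_add_distrib, sum_dl_univ, ih, List.length_cons]; omega

lemma pth_append (q r y : Fin n) (l l' : List (Fin n)) :
    pth k q (l ++ y :: l') r = pth k q l y * pth k y l' r := by
  induction l generalizing q with
  | nil => simp [pth]
  | cons z l ih => simp only [List.cons_append, pth, ih]; ring

lemma pth_reverse (q r : Fin n) (l : List (Fin n)) :
    pth k r l.reverse q = (-1) ^ (l.length + 1) * pth k q l r := by
  induction l generalizing q with
  | nil => simp only [List.reverse_nil, pth, List.length_nil]; rw [br_swap]; ring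
  | cons y l ih =>
    rw [List.reverse_cons, pth_append, ih]
    simp only [pth, List.length_cons]
    rw [br_swap q y]; ring

lemma pth_fst (l : List (Fin n)) (r : Fin n) : ∃ p P, ∀ t, pth k t l r = br k t p * P := by
  cases l with
  | nil => exact ⟨r, 1, fun t => by simp [pth]⟩
  | cons y l => exact ⟨y, pth k y l r, fun t => rfl⟩

lemma pth_snd (l : List (Fin n)) (q : Fin n) : ∃ p P, ∀ t, pth k q l t = P * br k p t := by
  induction l generalizing q with
  | nil => exact ⟨q, 1, fun t => by simp [pth]⟩
  | cons y l ih =>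
    obtain ⟨p, P, h⟩ := ih y
    exact ⟨p, br k q y * P, fun t => by simp only [pth, h]; ring⟩

/-- A path with an even number of inner vertices is a product of two matchings. -/
lemma pth_even (q r : Fin n) (l : List (Fin n)) (h : Even l.length) :
    ∃ f ∈ R k (cnt l), ∃ g ∈ R k (cnt l + dl q + dl r), pth k q l r = f * g := by
  induction hm : l.length using Nat.strong_induction_on generalizing l q with
  | _ m ih =>
  subst hm
  match l, h with
  | [], _ => exact ⟨1, one_mem, br k q r, R_cast (br_mem q r) (by simp [cnt]), by simp [pth]⟩
  | [y], h => simp at h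
  | y :: z :: l, h =>
    obtain ⟨f, hf, g, hg, e⟩ := ih l.length (by simp) z l (by
      simp only [List.length_cons] at h
      rw [Nat.even_iff] at *; omega) rfl
    refine ⟨br k y z * f, R_mul' (br_mem _ _) hf (by simp only [cnt]; abel), br k q y * g,
      R_mul' (br_mem _ _) hg (by simp only [cnt]; abel), ?_⟩
    simp only [pth, e]; ring

/-- The obstruction vanishes on pairs of paths with evenly many interior vertices, since such
paths are products as in `Ctx.kill`. -/
lemma Ctx.kill_pth (C : Ctx L1 L2 a b c d x) {Z : PtRing k n} (hZ : Z ∈ R k x)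
    (q1 q2 q3 q4 : Fin n) (l1 l2 : List (Fin n)) (h1 : Even l1.length) (h2 : Even l2.length)
    (hl : cnt l1 + cnt l2 = x)
    (hq : dl q1 + dl q2 + dl q3 + dl q4 = dl a + dl b + dl c + dl d) :
    Ph L1 L2 a b c d Z (pth k q1 l1 q2 * pth k q3 l2 q4) = 0 := by
  obtain ⟨f1, hf1, g1, hg1, e1⟩ := pth_even (k := k) q1 q2 l1 h1
  obtain ⟨f2, hf2, g2, hg2, e2⟩ := pth_even (k := k) q3 q4 l2 h2
  rw [e1, e2, show f1 * g1 * (f2 * g2) = f1 * f2 * (g1 * g2) by ring]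
  refine C.kill hZ (R_mul hf1 hf2) (R_mul hg1 hg2) hl ?_
  calc _ = (cnt l1 + cnt l2) + (dl q1 + dl q2 + dl q3 + dl q4) := by abel
    _ = _ := by rw [hl, hq]; abel

lemma exists_sub_dl {x : Fin n → ℕ} {y : Fin n} (h : 0 < x y) : ∃ x', x = dl y + x' := by
  refine ⟨fun i => x i - dl y i, ?_⟩
  ext i
  simp only [Pi.add_apply, dl_apply]
  split_ifs with hi
  · subst hi; omega
  · omega

/-- `R (2x + δ_c + δ_d)` is spanned by paths from `c` to `d`. -/
lemma span_path2 (x : Fin n → ℕ) (c d : Fin n) (T : Submodule k (PtRing k n))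
    (h : ∀ l, cnt l = x → pth k c l d ∈ T) : R k (x + x + dl c + dl d) ≤ T := by
  induction hm : ∑ i, x i using Nat.strong_induction_on generalizing x c T with
  | _ m ih =>
  subst hm
  have step : ∀ (y : Fin n) (G : PtRing k n) (v : Fin n → ℕ), 0 < x y → G ∈ R k v →
      x + x + dl d = dl y + v → br k c y * G ∈ T := by
    intro y G v hy hG hv
    obtain ⟨x', hx'⟩ := exists_sub_dl hy
    have hv' : v = x' + x' + dl y + dl d := by
      have : dl y + v = dl y + (x' + x' + dl y + dl d) := by rw [← hv, hx']; abel
      exact add_left_cancel this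
    subst hv'
    have := ih (∑ i, x' i) (by
      rw [hx']
      simp only [Pi.add_apply, Finset.sum_add_distrib, sum_dl_univ]; omega) x' y
      (T.comap (LinearMap.mulLeft k (br k c y))) (fun l hl => ?_) rfl hG
    · exact this
    · rw [Submodule.mem_comap, LinearMap.mulLeft_apply]
      exact h (y :: l) (by simp only [cnt]; rw [hl, hx'])
  refine R_extract c (by simp [dl_apply]) _ fun y v G hv hG hy => ?_
  have hv2 : x + x + dl d = dl y + v := by
    have : dl c + (x + x + dl d) = dl c + (dl y + v) := by
      rw [← add_assoc (dl c) (dl y), ← hv]; abel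
    exact add_left_cancel this
  by_cases hyd : y = d
  · subst hyd
    have hv3 : v = x + x := by
      have : dl y + v = dl y + (x + x) := by rw [← hv2]; abel
      exact add_left_cancel this
    subst hv3
    by_cases h0 : ∀ i, x i = 0
    · have : x = 0 := funext h0
      subst this
      obtain ⟨r, rfl⟩ := R_zero (by simpa using hG)
      rw [mul_smul_comm, mul_one]
      exact T.smul_mem _ (h [] rfl)
    push Not at h0
    obtain ⟨w, hw⟩ := h0
    rw [← LinearMap.mulLeft_apply (R := k), ← Submodule.mem_comap]
    refine R_extract w (by simp only [Pi.add_apply]; omega) _ (fun u v' G' hv' hG' hu => ?_) hG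
    rw [Submodule.mem_comap, LinearMap.mulLeft_apply]
    have hxu : 0 < x u := by
      have := congrFun hv' u
      simp only [Pi.add_apply, dl_apply] at this
      simp at this
      omega
    have e : br k c y * (br k w u * G') =
      br k c w * (br k y u * G') - br k c u * (br k y w * G') := by
      linear_combination G' * plucker (k := k) c y w u
    rw [e]
    refine sub_mem (step w _ _ (by omega) (R_mul (br_mem _ _) hG') ?_)
      (step u _ _ hxu (R_mul (br_mem _ _) hG') ?_) <;> rw [hv'] <;> abel
  · refine step y G v ?_ hG hv2
    have := congrFun hv2 y
    simp only [Pi.add_apply, dl_apply, hyd, if_true, if_false] at this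
    omega

/-- `R (2x + δ_a + δ_b + δ_c + δ_d)` is spanned by pairs of paths. -/
lemma span_path4 (x : Fin n → ℕ) (a b c d : Fin n) (T : Submodule k (PtRing k n))
    (hb : ∀ l l', cnt l + cnt l' = x → pth k a l b * pth k c l' d ∈ T)
    (hc : ∀ l l', cnt l + cnt l' = x → pth k a l c * pth k b l' d ∈ T)
    (hd : ∀ l l', cnt l + cnt l' = x → pth k a l d * pth k b l' c ∈ T) :
    R k (x + x + dl a + dl b + dl c + dl d) ≤ T := by
  induction hm : ∑ i, x i using Nat.strong_induction_on generalizing x a T with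
  | _ m ih =>
  subst hm
  refine R_extract a (by simp [dl_apply]) _ fun y v G hv hG hy => ?_
  have hv2 : x + x + dl b + dl c + dl d = dl y + v := by
    have : dl a + (x + x + dl b + dl c + dl d) = dl a + (dl y + v) := by
      rw [← add_assoc (dl a) (dl y), ← hv]; abel
    exact add_left_cancel this
  have last : ∀ p q, dl y + (x + x + dl p + dl q) = dl y + v →
      (∀ l l', cnt l + cnt l' = x → pth k a l y * pth k p l' q ∈ T) → br k a y * G ∈ T := by
    intro p q h1 h2
    rw [← add_left_cancel h1] at hG
    have := span_path2 (k := k) x p q (T.comap (LinearMap.mulLeft k (br k a y)))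
      (fun l hl => by
        rw [Submodule.mem_comap, LinearMap.mulLeft_apply]
        exact h2 [] l (by simpa [cnt] using hl))
    exact this hG
  by_cases hyb : y = b
  · subst hyb
    exact last c d (by rw [← hv2]; abel) hb
  by_cases hyc : y = c
  · subst hyc
    exact last b d (by rw [← hv2]; abel) hc
  by_cases hyd : y = d
  · subst hyd
    exact last b c (by rw [← hv2]; abel) hd
  have hxy : 0 < x y := by
    have := congrFun hv2 y
    simp only [Pi.add_apply, dl_apply, hyd, hyb, hyc, if_true, if_false] at this
    omega
  obtain ⟨x', hx'⟩ := exists_sub_dl hxy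
  have hv' : v = x' + x' + dl y + dl b + dl c + dl d := by
    have : dl y + v = dl y + (x' + x' + dl y + dl b + dl c + dl d) := by rw [← hv2, hx']; abel
    exact add_left_cancel this
  subst hv'
  refine ih (∑ i, x' i) (by
    rw [hx']
    simp only [Pi.add_apply, Finset.sum_add_distrib, sum_dl_univ]; omega) x' y
    (T.comap (LinearMap.mulLeft k (br k a y))) ?_ ?_ ?_ rfl hG
  all_goals
    intro l l' hl
    rw [Submodule.mem_comap, LinearMap.mulLeft_apply, ← mul_assoc]
  · exact hb (y :: l) l' (by rw [hx', ← hl]; simp only [cnt]; abel)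
  · exact hc (y :: l) l' (by rw [hx', ← hl]; simp only [cnt]; abel)
  · exact hd (y :: l) l' (by rw [hx', ← hl]; simp only [cnt]; abel)

/-- Two odd paths reduce to a path of length two and an odd path. -/
lemma Ctx.odd_reduce (C : Ctx L1 L2 a b c d x) {Z : PtRing k n} (hZ : Z ∈ R k x)
    (H : ∀ i l, Odd l.length → dl i + cnt l = x →
      Ph L1 L2 a b c d Z (br k a i * br k i d * pth k b l c) = 0)
    (H' : ∀ i l, Odd l.length → dl i + cnt l = x →
      Ph L1 L2 a b c d Z (br k a i * br k i b * pth k d l c) = 0)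
    (l1 l2 : List (Fin n)) (h1 : Odd l1.length) (h2 : Odd l2.length) (hl : cnt l1 + cnt l2 = x) :
    Ph L1 L2 a b c d Z (pth k a l1 d * pth k b l2 c) = 0 := by
  match l1, h1 with
  | [i], _ => exact H i l2 h2 (by simpa [cnt] using hl)
  | [], h => simp at h
  | i :: u :: l1, h1 =>
  match l2, h2 with
  | [], h => simp at h
  | m :: l2, h2 =>
  have e : pth k a (i :: u :: l1) d * pth k b (m :: l2) c =
    (-1) ^ (l1.length + 1) * (br k a i * br k i b * pth k d (l1.reverse ++ u :: m :: l2) c)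
    + pth k a (i :: m :: l2) c * pth k b (u :: l1) d := by
    rw [pth_append, pth_reverse u d]
    simp only [pth]
    have hs : ((-1 : PtRing k n) ^ (l1.length + 1)) ^ 2 = 1 := by
      rw [← pow_mul, mul_comm, pow_mul]; simp
    have hub : br k u b = - br k b u := br_swap _ _
    linear_combination br k a i * pth k u l1 d * pth k m l2 c * plucker (k := k) i u b m
      - br k a i * br k i b * br k u m * pth k u l1 d * pth k m l2 c * hs
      - br k a i * br k i m * pth k u l1 d * pth k m l2 c * hub
  simp only [List.length_cons] at h1 h2
  rw [Nat.odd_iff] at h1 h2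
  rw [e, map_add, C.kill_pth hZ a c b d (i :: m :: l2) (u :: l1) (by
    rw [Nat.even_iff]; simp only [List.length_cons]; omega) (by
    rw [Nat.even_iff]; simp only [List.length_cons]; omega) (by
    rw [← hl]; simp only [cnt]; abel) (by abel), add_zero]
  have h3 := H' i (l1.reverse ++ u :: m :: l2) (by
    rw [Nat.odd_iff]; simp only [List.length_cons, List.length_append, List.length_reverse]
    omega) (by
    rw [← hl, cnt_append, cnt_perm (List.reverse_perm l1)]; simp only [cnt]; abel)
  rcases neg_one_pow_eq_or (PtRing k n) (l1.length + 1) with h4 | h4 <;> rw [h4]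
  · rw [one_mul, h3]
  · rw [neg_one_mul, map_neg, h3, neg_zero]

end PtRel

/-! ### Permuting the vertices of the paths -/

namespace PtRel

variable {k : Type} [Field k] {n : ℕ} {Q : Type} [CommRing Q] [Algebra k Q]
variable {L1 L2 : PtRing k n →ₗ[k] Q} {a b c d : Fin n} {x : Fin n → ℕ}

variable (k) in
/-- The pair consisting of the path `a, i, d` and the path from `b` to `c` along `l`. -/
noncomputable def Wt (a b c d i : Fin n) (l : List (Fin n)) : PtRing k n :=
  br k a i * br k i d * pth k b l c

/-- The short path may end at `b` instead of `d`. -/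
lemma Ctx.short_swap (C : Ctx L1 L2 a b c d x) {Z : PtRing k n} (hZ : Z ∈ R k x) (i : Fin n)
    (l : List (Fin n)) (hl : Odd l.length) (hx : dl i + cnt l = x) :
    Ph L1 L2 a b c d Z (br k a i * br k i b * pth k d l c) =
      Ph L1 L2 a b c d Z (Wt k a b c d i l) := by
  match l, hl with
  | [], h => simp at h
  | m :: l, hl =>
  have e : br k a i * br k i b * pth k d (m :: l) c =
      Wt k a b c d i (m :: l) - pth k a (i :: m :: l) c * pth k b [] d := by
    simp only [Wt, pth]
    linear_combination br k a i * pth k m l c * plucker (k := k) i b d m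
  rw [e, map_sub, C.kill_pth hZ a c b d (i :: m :: l) [] (by
    rw [Nat.odd_iff, List.length_cons] at hl
    rw [Nat.even_iff]; simp only [List.length_cons]; omega) (by simp)
    (by rw [← hx]; simp [cnt]) (by abel), sub_zero]

/-- Exchange of `i` with the first vertex of the long path. -/
lemma Ctx.wt_head (C : Ctx L1 L2 a b c d x) {Z : PtRing k n} (hZ : Z ∈ R k x) (i o : Fin n)
    (l : List (Fin n)) (hl : Even l.length) (hx : dl i + (dl o + cnt l) = x) :
    Ph L1 L2 a b c d Z (Wt k a b c d i (o :: l)) =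
      Ph L1 L2 a b c d Z (Wt k a b c d o (i :: l)) := by
  obtain ⟨q, P, hq⟩ := pth_fst (k := k) l c
  have e : Wt k a b c d i (o :: l) = Wt k a b c d o (i :: l) -
      pth k a [] b * pth k d (i :: o :: l) c + pth k a [o, i] b * pth k d l c := by
    simp only [Wt, pth, hq]
    rw [br_swap i b, br_swap i o, br_swap i d]
    have e1 := plucker (k := k) a i b o
    have e2 := plucker (k := k) i d o q
    rw [br_swap o d] at e2
    linear_combination br k i d * br k o q * P * e1 - br k a o * br k i b * P * e2
  rw [e, map_add, map_sub, C.kill_pth hZ a b d c [] (i :: o :: l) (by simp) (by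
    rw [Nat.even_iff] at *; simp only [List.length_cons]; omega)
    (by rw [← hx]; simp [cnt]) (by abel), C.kill_pth hZ a b d c [o, i] l (by simp) hl
    (by rw [← hx]; simp only [cnt]; abel) (by abel)]
  simp

lemma pth_prefix (l : List (Fin n)) (q : Fin n) :
    ∃ p P, ∀ l' t, pth k q (l ++ l') t = P * pth k p l' t := by
  induction l generalizing q with
  | nil => exact ⟨q, 1, fun l' t => by simp⟩
  | cons y l ih =>
    obtain ⟨p, P, h⟩ := ih y
    exact ⟨p, br k q y * P, fun l' t => by simp only [List.cons_append, pth, h]; ring⟩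

/-- Exchange of two vertices at distance two on the long path. -/
lemma Ctx.wt_swap (C : Ctx L1 L2 a b c d x) {Z : PtRing k n} (hZ : Z ∈ R k x) (i r s t : Fin n)
    (l1 l2 : List (Fin n)) (hl : Even (l1 ++ l2).length)
    (hx : dl i + cnt (l1 ++ r :: s :: t :: l2) = x) :
    Ph L1 L2 a b c d Z (Wt k a b c d i (l1 ++ r :: s :: t :: l2)) =
      Ph L1 L2 a b c d Z (Wt k a b c d i (l1 ++ t :: s :: r :: l2)) := by
  obtain ⟨q, P, hq⟩ := pth_fst (k := k) l2 c
  obtain ⟨p, P', hp⟩ := pth_prefix (k := k) l1 b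
  have e : Wt k a b c d i (l1 ++ r :: s :: t :: l2) = Wt k a b c d i (l1 ++ t :: s :: r :: l2) +
      pth k a [i, r, s, t] d * pth k b (l1 ++ l2) c -
      pth k a [i, t, s, r] d * pth k b (l1 ++ l2) c := by
    simp only [Wt, hp, pth, hq]
    rw [br_swap s t, br_swap r s, br_swap d t, br_swap d r]
    have e1 := plucker (k := k) p r t q
    have e2 := plucker (k := k) i d r t
    linear_combination br k a i * br k i d * br k r s * br k s t * P' * P * e1 -
      br k a i * br k r s * br k s t * P' * P * br k p q * e2
  rw [cnt_append] at hx
  rw [e, map_sub, map_add, C.kill_pth hZ a d b c [i, r, s, t] (l1 ++ l2) (by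
    simp only [List.length_cons, List.length_nil]; decide) hl
    (by rw [← hx, cnt_append]; simp only [cnt]; abel) (by abel),
    C.kill_pth hZ a d b c [i, t, s, r] (l1 ++ l2) (by
    simp only [List.length_cons, List.length_nil]; decide) hl
    (by rw [← hx, cnt_append]; simp only [cnt]; abel) (by abel)]
  simp

/-- Interleaving of two lists, starting with the first. -/
def il : List (Fin n) → List (Fin n) → List (Fin n)
  | [], _ => []
  | o :: _, [] => [o]
  | o :: O, e :: E => o :: e :: il O E

lemma il_length (O E : List (Fin n)) (h : O.length = E.length + 1) :
    (il O E).length = 2 * E.length + 1 := by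
  induction E generalizing O with
  | nil => match O, h with
    | [o], _ => simp [il]
  | cons e E ih => match O, h with
    | o :: O, h =>
      simp only [il, List.length_cons] at *
      rw [ih O (by omega)]; omega

lemma cnt_il (O E : List (Fin n)) (h : O.length = E.length + 1) :
    cnt (il O E) = cnt O + cnt E := by
  induction E generalizing O with
  | nil => match O, h with
    | [o], _ => simp [il, cnt]
  | cons e E ih => match O, h with
    | o :: O, h =>
      simp only [il, cnt, List.length_cons] at *
      rw [ih O (by omega)]; abel

lemma exists_il (l : List (Fin n)) (h : Odd l.length) :
    ∃ O E, O.length = E.length + 1 ∧ l = il O E := by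
  induction hm : l.length using Nat.strong_induction_on generalizing l with
  | _ m ih =>
  subst hm
  match l, h with
  | [], h => simp at h
  | [y], _ => exact ⟨[y], [], rfl, rfl⟩
  | y :: z :: l, h =>
    obtain ⟨O, E, h1, h2⟩ := ih l.length (by simp) l (by
      simp only [List.length_cons] at h
      rw [Nat.odd_iff] at *; omega) rfl
    exact ⟨y :: O, z :: E, by simp [h1], by simp [il, h2]⟩

/-- The vertices in odd position of the long path may be permuted. -/
lemma Ctx.wt_permO (C : Ctx L1 L2 a b c d x) {Z : PtRing k n} (hZ : Z ∈ R k x) (i : Fin n)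
    {O O' : List (Fin n)} (hO : O.Perm O') (E pre : List (Fin n)) (h : O.length = E.length + 1)
    (hpre : Even pre.length) (hx : dl i + cnt (pre ++ il O E) = x) :
    Ph L1 L2 a b c d Z (Wt k a b c d i (pre ++ il O E)) =
      Ph L1 L2 a b c d Z (Wt k a b c d i (pre ++ il O' E)) := by
  induction hO generalizing E pre with
  | nil => rfl
  | @cons o O O' hO ih =>
    cases E with
    | nil => simp [il]
    | cons e E =>
      have := ih E (pre ++ [o, e]) (by simpa using h) (by
        simp only [List.length_append, List.length_cons, List.length_nil]
        exact hpre.add (by decide)) (by simpa [il] using hx)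
      simpa [il] using this
  | swap o o' O =>
    cases E with
    | nil => simp at h
    | cons e E =>
      cases E with
      | nil =>
        have : O = [] := by simpa using h
        subst this
        simp only [il] at hx ⊢
        exact C.wt_swap hZ i o' e o pre [] (by simpa using hpre) hx
      | cons e' E =>
        simp only [il] at hx ⊢
        refine C.wt_swap hZ i o' e o pre _ ?_ hx
        simp only [List.length_cons] at h
        rw [List.length_append, List.length_cons, il_length O E (by omega)]
        rw [Nat.even_iff] at *; omega
  | @trans O O' O'' h1 h2 ih1 ih2 =>
    have hO' : O'.length = E.length + 1 := by rw [← h1.length_eq, h]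
    rw [ih1 E pre h hpre hx, ih2 E pre hO' hpre]
    rw [← hx, cnt_append, cnt_append, cnt_il _ _ h, cnt_il _ _ hO', cnt_perm h1]

/-- The vertices in even position of the long path may be permuted. -/
lemma Ctx.wt_permE (C : Ctx L1 L2 a b c d x) {Z : PtRing k n} (hZ : Z ∈ R k x) (i : Fin n)
    {E E' : List (Fin n)} (hE : E.Perm E') (O pre : List (Fin n)) (h : O.length = E.length + 1)
    (hpre : Even pre.length) (hx : dl i + cnt (pre ++ il O E) = x) :
    Ph L1 L2 a b c d Z (Wt k a b c d i (pre ++ il O E)) =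
      Ph L1 L2 a b c d Z (Wt k a b c d i (pre ++ il O E')) := by
  induction hE generalizing O pre with
  | nil => rfl
  | @cons e E E' hE ih =>
    match O, h with
    | o :: O, h =>
      have := ih O (pre ++ [o, e]) (by simpa using h) (by
        simp only [List.length_append, List.length_cons, List.length_nil]
        exact hpre.add (by decide)) (by simpa [il] using hx)
      simpa [il] using this
  | swap e e' E =>
    match O, h with
    | o :: o' :: O, h =>
      simp only [il] at hx ⊢
      have := C.wt_swap hZ i e' o' e (pre ++ [o]) (il O E) (by
        simp only [List.length_cons] at h
        rw [List.length_append, List.length_append, il_length O E (by omega)]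
        simp only [List.length_cons, List.length_nil]
        rw [Nat.even_iff] at *; omega) (by simpa using hx)
      simpa using this
  | @trans E E' E'' h1 h2 ih1 ih2 =>
    have hO' : O.length = E'.length + 1 := by rw [← h1.length_eq, h]
    rw [ih1 O pre h hpre hx, ih2 O pre hO' hpre]
    rw [← hx, cnt_append, cnt_append, cnt_il _ _ h, cnt_il _ _ hO', cnt_perm h1]

/-- The obstruction depends only on the two multisets of alternating vertices. -/
lemma Ctx.wt_perm (C : Ctx L1 L2 a b c d x) {Z : PtRing k n} (hZ : Z ∈ R k x) {i i' : Fin n}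
    {O O' E E' : List (Fin n)} (hO : (i :: O).Perm (i' :: O')) (hE : E.Perm E')
    (h : O.length = E.length + 1) (hx : dl i + (cnt O + cnt E) = x) :
    Ph L1 L2 a b c d Z (Wt k a b c d i (il O E)) =
      Ph L1 L2 a b c d Z (Wt k a b c d i' (il O' E')) := by
  have h' : O'.length = E'.length + 1 := by
    rw [← hE.length_eq, ← h]; simpa using hO.length_eq.symm
  have hx' : dl i' + (cnt O' + cnt E') = x := by
    have := cnt_perm hO
    simp only [cnt] at this
    rw [← hx, ← add_assoc, ← this, cnt_perm hE, add_assoc]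
  by_cases hi : i = i'
  · subst hi
    have hO1 := (List.perm_cons i).1 hO
    have e1 := C.wt_permO hZ i hO1 E [] h (by simp) (by simpa [cnt_il _ _ h] using hx)
    have h2 : O'.length = E.length + 1 := by rw [h', hE.length_eq]
    have e2 := C.wt_permE hZ i hE O' [] h2 (by simp)
      (by simpa [cnt_il _ _ h2, cnt_perm hE] using hx')
    simp only [List.nil_append] at e1 e2
    rw [e1, e2]
  · have hmem : i' ∈ O := by
      have : i' ∈ i :: O := hO.mem_iff.2 (by simp)
      simpa [Ne.symm hi] using this
    have hp := List.perm_cons_erase hmem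
    set O1 := O.erase i' with hO1
    have hl1 : (i' :: O1).length = E.length + 1 := by rw [← hp.length_eq, h]
    have hp2 : (i :: O1).Perm O' := by
      have h3 : (i :: O).Perm (i' :: i :: O1) := (hp.cons i).trans (List.Perm.swap i' i O1)
      exact (List.perm_cons i').1 (h3.symm.trans hO)
    have e1 := C.wt_permO hZ i hp E [] h (by simp) (by simpa [cnt_il _ _ h] using hx)
    have hl2 : (i :: O1).length = E'.length + 1 := by rw [hp2.length_eq, h']
    have hl3 : (i' :: O1).length = E'.length + 1 := by simpa using hl2
    have e2 := C.wt_permE hZ i hE (i' :: O1) [] hl1 (by simp) (by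
      simp only [List.nil_append]
      rw [cnt_il _ _ hl1, ← cnt_perm hp, hx])
    have e3 := C.wt_permO hZ i' hp2 E' [] hl2 (by simp) (by
      simp only [List.nil_append]
      rw [cnt_il _ _ hl2, cnt_perm hp2, hx'])
    simp only [List.nil_append] at e1 e2 e3
    rw [e1, e2, ← e3]
    have hx3 : dl i + (dl i' + (cnt O1 + cnt E')) = x := by
      rw [← hx', ← cnt_perm hp2]; simp only [cnt]; abel
    cases E' with
    | nil =>
      have : O1 = [] := by simpa using hl2
      rw [this] at hx3 ⊢
      exact C.wt_head hZ i i' [] (by simp) (by simpa [cnt] using hx3)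
    | cons e E' =>
      simp only [il]
      have hl4 : O1.length = E'.length + 1 := by simpa using hl2
      refine C.wt_head hZ i i' _ ?_ ?_
      · rw [List.length_cons, il_length _ _ hl4, Nat.even_iff]; omega
      · rw [← hx3]; simp only [cnt, cnt_il _ _ hl4]; abel

end PtRel

/-! ### The five-point form of the obstruction -/

namespace PtRel

variable {k : Type} [Field k] {n : ℕ} {Q : Type} [CommRing Q] [Algebra k Q]
variable {L1 L2 : PtRing k n →ₗ[k] Q} {a b c d : Fin n} {x : Fin n → ℕ}

variable (k) in
lemma nat_cancel [CharZero k] (m : ℕ) (hm : m ≠ 0) {q : Q} (h : (m : Q) * q = 0) : q = 0 := by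
  have h2 : (m : k) • q = 0 := by
    rw [Algebra.smul_def, map_natCast, h]
  exact (smul_eq_zero_iff_right (Nat.cast_ne_zero.2 hm)).1 h2

/-- The obstruction on the five points `a, d; i, b, c`; it is invariant under cyclic shifts. -/
noncomputable def Dl (L1 : PtRing k n →ₗ[k] Q) (a d i b c : Fin n) (p1 p2 p3 : PtRing k n) : Q :=
  L1 (p1 * (br k a b * br k c d)) * L1 (p2 * (br k a c * br k i d)) *
      L1 (p3 * (br k a i * br k b d)) -
    L1 (p1 * (br k a c * br k b d)) * L1 (p2 * (br k a i * br k c d)) *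
      L1 (p3 * (br k a b * br k i d))

lemma Dl_cyc (L1 : PtRing k n →ₗ[k] Q) (a d i b c : Fin n) (p1 p2 p3 : PtRing k n) :
    Dl L1 a d i b c p1 p2 p3 = Dl L1 a d b c i p2 p3 p1 := by
  simp only [Dl]; ring

/-- When the second argument contains the path `a, i, d`, the obstruction is the cyclically
symmetric expression `Dl`. -/
lemma Ph_eq_Dl {y : Fin n → ℕ} {i : Fin n} (C : Ctx L1 L2 a b c d (dl i + y))
    {p1 p2 p3 : PtRing k n} (h2 : p2 ∈ R k (dl b + y)) (h3 : p3 ∈ R k (dl c + y)) :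
    Ph L1 L2 a b c d p1 (br k a i * br k i d * (p2 * p3)) = Dl L1 a d i b c p1 p2 p3 := by
  have hx := C.hx
  have e1 := C.hm (p2 * (br k a c * br k i d))
    (R_mul' h2 (R_mul (br_mem _ _) (br_mem _ _)) (by rw [← hx]; abel))
    (p3 * (br k a i * br k b d))
    (R_mul' h3 (R_mul (br_mem _ _) (br_mem _ _)) (by rw [one_smul, ← hx]; abel))
  have e2 := C.hm (p2 * (br k a i * br k c d))
    (R_mul' h2 (R_mul (br_mem _ _) (br_mem _ _)) (by rw [← hx]; abel))
    (p3 * (br k a b * br k i d))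
    (R_mul' h3 (R_mul (br_mem _ _) (br_mem _ _)) (by rw [one_smul, ← hx]; abel))
  rw [Ph_apply, Dl, show br k a c * br k b d * (br k a i * br k i d * (p2 * p3)) =
    p2 * (br k a c * br k i d) * (p3 * (br k a i * br k b d)) by ring, e1,
    show br k a b * br k c d * (br k a i * br k i d * (p2 * p3)) =
    p2 * (br k a i * br k c d) * (p3 * (br k a b * br k i d)) by ring, e2]
  ring

/-- The endpoints `i` and `b` may be exchanged in `Dl`. -/
lemma Dl_swap {y v1 v2 : Fin n → ℕ} {i m1 m2 : Fin n} (C : Ctx L1 L2 a b c d (dl i + y))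
    {N1 N2 p3 : PtRing k n} (h1 : N1 ∈ R k v1) (h2 : N2 ∈ R k v2) (h3 : p3 ∈ R k (dl c + y))
    (hy1 : dl m1 + v1 = y) (hy2 : dl m2 + v2 = y) :
    Dl L1 a d i b c (br k i m1 * N1) (br k b m2 * N2) p3 =
      Dl L1 a d i b c (br k i m2 * N2) (br k b m1 * N1) p3 := by
  have C' : Ctx L1 L2 a i b d (dl c + y) := ⟨C.hb, C.hm, by rw [← C.hx]; abel⟩
  rw [← Dl_cyc, ← Dl_cyc L1 a d c i b,
    ← Ph_eq_Dl C' (R_mul' (br_mem _ _) h1 (by rw [← hy1]; abel))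
      (R_mul' (br_mem _ _) h2 (by rw [← hy2]; abel)),
    ← Ph_eq_Dl C' (R_mul' (br_mem _ _) h2 (by rw [← hy2]; abel))
      (R_mul' (br_mem _ _) h1 (by rw [← hy1]; abel))]
  have e : br k a c * br k c d * (br k i m1 * N1 * (br k b m2 * N2)) =
      br k a c * br k c d * (br k i m2 * N2 * (br k b m1 * N1)) +
      (br k c m1 * N1) * (br k a c * br k d m2 * N2 * br k i b) -
      (br k c m2 * N2) * (br k a c * br k d m1 * N1 * br k i b) := by
    have e1 := plucker (k := k) i m1 b m2
    have e2 := plucker (k := k) c d m1 m2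
    rw [br_swap b m1] at e1
    linear_combination br k a c * br k c d * N1 * N2 * e1 + br k a c * br k i b * N1 * N2 * e2
  have m : ∀ {N : PtRing k n} {v m}, N ∈ R k v → dl m + v = y →
      br k a c * br k d m * N * br k i b ∈ R k (dl c + y + dl a + dl i + dl b + dl d) := by
    intro N v m hN hv
    exact R_mul' (R_mul (R_mul (br_mem _ _) (br_mem _ _)) hN) (br_mem _ _) (by rw [← hv]; abel)
  rw [e, map_sub, map_add,
    C'.kill h3 (R_mul (br_mem _ _) h1) (m h2 hy2) (by rw [← hy1]; abel) rfl,
    C'.kill h3 (R_mul (br_mem _ _) h2) (m h1 hy1) (by rw [← hy2]; abel) rfl]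
  simp

/-! ### The four-point exchange in degree three: eight points -/

lemma Dl_add1 (L1 : PtRing k n →ₗ[k] Q) (a d i b c : Fin n) (p p' p2 p3 : PtRing k n) :
    Dl L1 a d i b c (p + p') p2 p3 = Dl L1 a d i b c p p2 p3 + Dl L1 a d i b c p' p2 p3 := by
  simp only [Dl, add_mul, map_add]; ring

variable (k) in
/-- The obstruction at the matching `[pq][rs]` and the paths `a, p, d` and `b, r, q, s, c`. -/
noncomputable def eN (L1 L2 : PtRing k n →ₗ[k] Q) (a b c d p q r s : Fin n) : Q :=
  Ph L1 L2 a b c d (br k p q * br k r s) (Wt k a b c d p [r, q, s])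

variable (k) in
/-- The obstruction at the matching `[pq][rs]` and the paths `a, p, d` and `b, q, c` together with
the double edge `rs`. -/
noncomputable def eE (L1 L2 : PtRing k n →ₗ[k] Q) (a b c d p q r s : Fin n) : Q :=
  Ph L1 L2 a b c d (br k p q * br k r s)
    (br k a p * br k p d * (br k b q * br k q c) * (br k r s * br k r s))

lemma eE_swap34 (p q r s : Fin n) :
    eE k L1 L2 a b c d p q s r = - eE k L1 L2 a b c d p q r s := by
  simp only [eE]
  rw [br_swap r s, mul_neg, map_neg, LinearMap.neg_apply, neg_mul_neg]

lemma Ctx.eE_swap12 (C : Ctx L1 L2 a b c d x) (p q r s : Fin n)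
    (hx : dl p + dl q + dl r + dl s = x) :
    eE k L1 L2 a b c d q p r s = - eE k L1 L2 a b c d p q r s := by
  have hZ : br k p q * br k r s ∈ R k x := R_mul' (br_mem _ _) (br_mem _ _) (by rw [← hx]; abel)
  have e : br k a q * br k q d * (br k b p * br k p c) * (br k r s * br k r s) =
     br k a p * br k p d * (br k b q * br k q c) * (br k r s * br k r s)
     - (br k p q * br k r s) * (br k a b * br k q d * br k p c * br k r s)
     - (br k p q * br k r s) * (br k a p * br k b q * br k d c * br k r s) := by
    have e1 := plucker (k := k) a q b p
    have e2 := plucker (k := k) q d p c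
    rw [br_swap p q, br_swap b q] at e1
    rw [br_swap p q, br_swap p d] at e2
    linear_combination br k q d * br k p c * br k r s * br k r s * e1 +
      br k a p * br k b q * br k r s * br k r s * e2
  simp only [eE]
  rw [e, map_sub, map_sub, br_swap p q, neg_mul, map_neg, LinearMap.neg_apply,
    LinearMap.neg_apply, LinearMap.neg_apply,
    C.kill hZ hZ (R_mul (R_mul (R_mul (br_mem _ _) (br_mem _ _)) (br_mem _ _)) (br_mem _ _)) rfl
      (by rw [← hx]; abel),
    C.kill hZ hZ (R_mul (R_mul (R_mul (br_mem _ _) (br_mem _ _)) (br_mem _ _)) (br_mem _ _)) rfl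
      (by rw [← hx]; abel)]
  simp

lemma Ctx.eE_eq (C : Ctx L1 L2 a b c d x) (p q r s : Fin n)
    (hx : dl p + dl q + dl r + dl s = x) :
    eE k L1 L2 a b c d r s q p = eN k L1 L2 a b c d p q r s - eN k L1 L2 a b c d q p r s := by
  have hZ : br k r s * br k q p ∈ R k x := R_mul' (br_mem _ _) (br_mem _ _) (by rw [← hx]; abel)
  have e : br k a r * br k r d * (br k b s * br k s c) * (br k q p * br k q p) =
      - (br k a p * br k p b * pth k d [r, q, s] c) - (br k a q * br k q b * pth k d [r, p, s] c)
      - pth k a [q, s] c * pth k b [p, r] d - pth k a [p, s] c * pth k b [q, r] d := by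
    have e1 := plucker (k := k) a r q p
    have e2 := plucker (k := k) b s q p
    simp only [pth]
    rw [br_swap r d, br_swap r p, br_swap r q, br_swap b p, br_swap b q, br_swap s p, br_swap s q]
    linear_combination br k r d * br k s c * br k b s * br k q p * e1 +
      br k r d * br k s c * (br k a q * br k r p - br k a p * br k r q) * e2
  have e1 := C.short_swap hZ p [r, q, s] (by simp only [List.length_cons, List.length_nil]; decide)
    (by rw [← hx]; simp only [cnt]; abel)
  have e2 := C.short_swap hZ q [r, p, s] (by simp only [List.length_cons, List.length_nil]; decide)
    (by rw [← hx]; simp only [cnt]; abel)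
  simp only [eE, eN]
  rw [e, map_sub, map_sub, map_sub, map_neg, e1, e2,
    C.kill_pth hZ a c b d [q, s] [p, r] (by simp) (by simp)
    (by rw [← hx]; simp only [cnt]; abel) (by abel),
    C.kill_pth hZ a c b d [p, s] [q, r] (by simp) (by simp)
    (by rw [← hx]; simp only [cnt]; abel) (by abel),
    show br k p q * br k r s = -(br k r s * br k q p) by rw [br_swap q p]; ring,
    show br k q p * br k r s = br k r s * br k q p by ring, map_neg, LinearMap.neg_apply]
  ring

/-- The trilinear form `Dl` on the three matchings of `{t, q, r, s}` is symmetric by `Dl_swap` and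
`Dl_cyc`; expanding by the Plücker relation gives three times `eN` in terms of `eE`. -/
lemma Ctx.eN_three (C : Ctx L1 L2 a b c d x) (p q r s : Fin n)
    (hx : dl p + dl q + dl r + dl s = x) :
    3 * eN k L1 L2 a b c d p q r s = eE k L1 L2 a b c d p q r s + eE k L1 L2 a b c d p r s q
      + eE k L1 L2 a b c d p s q r := by
  obtain ⟨y, hy⟩ : ∃ y, y = dl q + dl r + dl s := ⟨_, rfl⟩
  have hxy : x = dl p + y := by rw [← hx, hy]; abel
  subst hxy
  -- the three matchings with one free end `t`, and the trilinear form on them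
  let z : Fin 3 → Fin n → PtRing k n := fun j t =>
    ![br k t q * br k r s, br k t r * br k s q, br k t s * br k q r] j
  let D : Fin 3 → Fin 3 → Fin 3 → Q := fun j l m => Dl L1 a d p b c (z j p) (z l b) (z m c)
  have hz : ∀ j, ∃ m N v, N ∈ R k v ∧ dl m + v = y ∧ ∀ t, z j t = br k t m * N := by
    intro j
    fin_cases j
    · exact ⟨q, _, _, br_mem r s, by rw [hy]; abel, fun t => rfl⟩
    · exact ⟨r, _, _, br_mem s q, by rw [hy]; abel, fun t => rfl⟩
    · exact ⟨s, _, _, br_mem q r, by rw [hy]; abel, fun t => rfl⟩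
  have hzm : ∀ j t, z j t ∈ R k (dl t + y) := by
    intro j t
    obtain ⟨m, N, v, h1, h2, h3⟩ := hz j
    rw [h3]
    exact R_mul' (br_mem _ _) h1 (by rw [← h2]; abel)
  have s12 : ∀ j l m, D j l m = D l j m := by
    intro j l m
    obtain ⟨m1, N1, v1, h1, h2, h3⟩ := hz j
    obtain ⟨m1', N1', v1', h1', h2', h3'⟩ := hz l
    simp only [D, h3, h3']
    exact Dl_swap C h1 h1' (hzm m c) h2 h2'
  have s23 : ∀ j l m, D j l m = D j m l := by
    intro j l m
    obtain ⟨m1, N1, v1, h1, h2, h3⟩ := hz l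
    obtain ⟨m1', N1', v1', h1', h2', h3'⟩ := hz m
    have C' : Ctx L1 L2 a c p d (dl b + y) := ⟨C.hb, C.hm, by rw [← C.hx]; abel⟩
    simp only [D]
    rw [Dl_cyc, Dl_cyc L1 a d p]
    simp only [h3, h3']
    exact Dl_swap C' h1 h1' (hzm j p) h2 h2'
  have hsum : ∀ l m, D 0 l m + D 1 l m + D 2 l m = 0 := by
    intro l m
    simp only [D]
    rw [← Dl_add1, ← Dl_add1]
    have : z 0 p + z 1 p + z 2 p = 0 := by
      simp only [z, Matrix.cons_val_zero, Matrix.cons_val_one, Matrix.cons_val]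
      rw [br_swap q s]
      linear_combination plucker (k := k) p q r s
    rw [this]
    simp [Dl]
  have hN : eN k L1 L2 a b c d p q r s = - D 0 1 2 := by
    simp only [D]
    rw [← Ph_eq_Dl C (hzm _ _) (hzm _ _), ← map_neg, eN, Wt]
    congr 1
    simp only [z, Matrix.cons_val_zero, Matrix.cons_val_one, Matrix.cons_val, pth]
    rw [br_swap q s, br_swap s c, br_swap r q]
    ring
  have hE : ∀ j q' r' s', (∀ t, z j t = br k t q' * br k r' s') →
      eE k L1 L2 a b c d p q' r' s' = - D j j j := by
    intro j q' r' s' h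
    simp only [D]
    rw [← Ph_eq_Dl C (hzm _ _) (hzm _ _), ← map_neg, eE, h]
    congr 1
    rw [h, h, br_swap q' c]
    ring
  rw [hN, hE 0 q r s (fun t => rfl), hE 1 r s q (fun t => rfl), hE 2 s q r (fun t => rfl)]
  have h1 := hsum 0 0
  have h2 := hsum 1 1
  have h3 := hsum 2 2
  have h4 := hsum 0 1
  have h5 := hsum 0 2
  have h6 := hsum 1 2
  rw [s12 1 0 0, s23 0 1 0] at h1
  rw [s12 2 0 0, s23 0 2 0] at h1
  rw [s12 2 1 1, s23 1 2 1] at h2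
  rw [s12 1 0 1, s12 2 0 1, s23 0 2 1] at h4
  rw [s12 1 0 2, s12 2 0 2] at h5
  rw [s12 2 1 2] at h6
  linear_combination h1 + h2 + h3 - h4 - h5 - h6

/-- The odd obstruction vanishes for eight points. -/
lemma Ctx.eN_zero [CharZero k] (C : Ctx L1 L2 a b c d x) (p q r s : Fin n)
    (hx : dl p + dl q + dl r + dl s = x) : eN k L1 L2 a b c d p q r s = 0 := by
  -- each of the six values `eE` equals minus a combination of all of them
  have key : ∀ p q r s : Fin n, dl p + dl q + dl r + dl s = x →
      3 * eE k L1 L2 a b c d r s p q + 2 * eE k L1 L2 a b c d p q r s +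
      eE k L1 L2 a b c d p r s q + eE k L1 L2 a b c d s q p r +
      eE k L1 L2 a b c d p s q r + eE k L1 L2 a b c d q r p s = 0 := by
    intro p q r s hx
    have t1 := C.eN_three (k := k) p q r s hx
    have t2 := C.eN_three (k := k) q p r s (by rw [← hx]; abel)
    have t3 := C.eE_eq (k := k) p q r s hx
    rw [eE_swap34] at t3
    rw [C.eE_swap12 p q r s hx, eE_swap34 q r p s, C.eE_swap12 s q p r (by rw [← hx]; abel)] at t2
    linear_combination t2 - t1 - 3 * t3
  have g1 := key p q r s hx
  have g2 := key r s p q (by rw [← hx]; abel)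
  have g3 := key p r s q (by rw [← hx]; abel)
  have g4 := key s q p r (by rw [← hx]; abel)
  have g5 := key p s q r (by rw [← hx]; abel)
  have g6 := key q r p s (by rw [← hx]; abel)
  have n2 : ∀ p q r s : Fin n, dl p + dl q + dl r + dl s = x →
      eE k L1 L2 a b c d q p s r = eE k L1 L2 a b c d p q r s := by
    intro p q r s hx
    rw [eE_swap34, C.eE_swap12 p q r s hx, neg_neg]
  have t := C.eN_three (k := k) p q r s hx
  refine nat_cancel k 27 (by norm_num) ?_
  push_cast
  rw [n2 p r s q (by rw [← hx]; abel), n2 s q p r (by rw [← hx]; abel),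
    n2 q r p s (by rw [← hx]; abel), n2 p s q r (by rw [← hx]; abel)] at g2
  rw [n2 p s q r (by rw [← hx]; abel), n2 q r p s (by rw [← hx]; abel),
    n2 r s p q (by rw [← hx]; abel), n2 p q r s hx] at g4
  rw [n2 p q r s hx, n2 r s p q (by rw [← hx]; abel), n2 s q p r (by rw [← hx]; abel),
    n2 p r s q (by rw [← hx]; abel)] at g6
  linear_combination 9 * t - 4 * (g1 + g3 + g5) + 5 * (g2 + g4 + g6)

/-! ### The four-point exchange in degree three: ten or more points -/

variable (k) in
/-- The product of the brackets of a list of pairs. -/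
noncomputable def pp : List (Fin n × Fin n) → PtRing k n
  | [] => 1
  | e :: ps => br k e.1 e.2 * pp ps

lemma pp_mem (ps : List (Fin n × Fin n)) :
    pp k ps ∈ R k (cnt (ps.map Prod.fst) + cnt (ps.map Prod.snd)) := by
  induction ps with
  | nil => exact R_cast one_mem (by simp [cnt])
  | cons e ps ih => exact R_mul' (br_mem _ _) ih (by simp only [List.map_cons, cnt]; abel)

/-- A path alternating between the two ends of the edges `ps` contains the graph of `ps`. -/
lemma pth_il_pp (ps : List (Fin n × Fin n)) (r c : Fin n) :
    ∃ G ∈ R k (dl r + (cnt (ps.map Prod.fst) + cnt (ps.map Prod.snd)) + dl c), ∀ s,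
      pth k s (il (r :: ps.map Prod.snd) (ps.map Prod.fst)) c = br k s r * pp k ps * G := by
  induction ps generalizing r with
  | nil => exact ⟨br k r c, R_cast (br_mem r c) (by simp [cnt]), fun s => by simp [il, pth, pp]⟩
  | cons e ps ih =>
    obtain ⟨G, hG, h⟩ := ih e.2
    refine ⟨br k r e.1 * G, R_mul' (br_mem _ _) hG (by simp only [List.map_cons, cnt]; abel),
      fun s => ?_⟩
    simp only [List.map_cons, il, pth, pp, h]; ring

/-- The odd obstruction vanishes for at least ten points. -/
lemma Ctx.odd_many [CharZero k] (C : Ctx L1 L2 a b c d x) (i w v r e s : Fin n)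
    (ps : List (Fin n × Fin n))
    (hx : dl i + (dl w + dl v + dl r + dl e + dl s +
      (cnt (ps.map Prod.fst) + cnt (ps.map Prod.snd))) = x) :
    Ph L1 L2 a b c d (br k e i * br k w v * (br k s r * pp k ps)) (Wt k a b c d i
      (il (w :: v :: r :: ps.map Prod.snd) (e :: s :: ps.map Prod.fst))) = 0 := by
  obtain ⟨t, ht⟩ : ∃ t, t = cnt (ps.map Prod.fst) + cnt (ps.map Prod.snd) := ⟨_, rfl⟩
  obtain ⟨y, hy⟩ : ∃ y, y = dl w + dl v + dl r + dl e + dl s + t := ⟨_, rfl⟩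
  rw [← ht, ← hy] at hx
  subst hx
  set W0 := Wt k a b c d i
      (il (w :: v :: r :: ps.map Prod.snd) (e :: s :: ps.map Prod.fst)) with hW0
  let N : Fin n → Fin n → PtRing k n := fun u2 u3 => br k e u2 * br k s u3 * pp k ps
  have hpp : pp k ps ∈ R k t := ht ▸ pp_mem ps
  have hNm : ∀ u2 u3, N u2 u3 ∈ R k (dl e + dl u2 + dl s + dl u3 + t) := fun u2 u3 =>
    R_mul' (R_mul (br_mem _ _) (br_mem _ _)) hpp (by abel)
  have cyc : ∀ u1 u2 u3, [u1, u2, u3].Perm [w, v, r] →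
      Ph L1 L2 a b c d (br k i u1 * N u2 u3) W0 = Ph L1 L2 a b c d (br k i u2 * N u3 u1) W0 := by
    intro u1 u2 u3 hu
    have hcu := cnt_perm hu
    simp only [cnt] at hcu
    have hyu : y = dl u1 + (dl e + dl u2 + dl s + dl u3 + t) := by
      rw [hy]
      calc _ = (dl w + (dl v + (dl r + 0))) + (dl e + dl s + t) := by abel
        _ = _ := by rw [← hcu]; abel
    have hyu' : y = dl u2 + (dl e + dl u3 + dl s + dl u1 + t) := by rw [hyu]; abel
    have hSm : br k i u1 * N u2 u3 ∈ R k (dl i + y) :=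
      R_mul' (br_mem _ _) (hNm _ _) (by rw [hyu]; abel)
    have hSm' : br k i u2 * N u3 u1 ∈ R k (dl i + y) :=
      R_mul' (br_mem _ _) (hNm _ _) (by rw [hyu]; abel)
    obtain ⟨G, hG, hGe⟩ := pth_il_pp (k := k) ps u3 c
    rw [← ht] at hG
    have hp3 : br k u1 e * br k u2 s * G ∈ R k (dl c + y) :=
      R_mul' (R_mul (br_mem _ _) (br_mem _ _)) hG (by rw [hyu]; abel)
    have hlen : (w :: v :: r :: ps.map Prod.snd).length =
        (e :: s :: ps.map Prod.fst).length + 1 := by simp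
    have hcnt : dl i + (cnt (w :: v :: r :: ps.map Prod.snd) +
        cnt (e :: s :: ps.map Prod.fst)) = dl i + y := by
      rw [hy, ht]; simp only [cnt]; abel
    have hA : Wt k a b c d i (il (u1 :: u2 :: u3 :: ps.map Prod.snd) (e :: s :: ps.map Prod.fst)) =
        br k a i * br k i d * ((br k b u1 * N u2 u3) * (br k u1 e * br k u2 s * G)) := by
      simp only [Wt, il, pth] at hGe ⊢
      rw [hGe]; simp only [N]; ring
    have hB : Wt k a b c d i (il (u2 :: u1 :: u3 :: ps.map Prod.snd) (s :: e :: ps.map Prod.fst)) =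
        br k a i * br k i d * ((br k b u2 * N u3 u1) * (br k u1 e * br k u2 s * G)) := by
      simp only [Wt, il, pth] at hGe ⊢
      rw [hGe]; simp only [N]; ring
    have pA : (i :: w :: v :: r :: ps.map Prod.snd).Perm
        (i :: u1 :: u2 :: u3 :: ps.map Prod.snd) :=
      List.Perm.cons i (hu.symm.append_right (ps.map Prod.snd))
    have pB : (i :: w :: v :: r :: ps.map Prod.snd).Perm
        (i :: u2 :: u1 :: u3 :: ps.map Prod.snd) :=
      pA.trans ((List.Perm.swap _ _ _).cons i)
    have pE : (e :: s :: ps.map Prod.fst).Perm (s :: e :: ps.map Prod.fst) := List.Perm.swap _ _ _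
    rw [hW0, C.wt_perm hSm pB pE hlen hcnt, C.wt_perm hSm' pA (List.Perm.refl _) hlen hcnt, hA, hB,
      Ph_eq_Dl C (R_mul' (br_mem _ _) (hNm _ _) (by rw [hyu]; abel)) hp3,
      Ph_eq_Dl C (R_mul' (br_mem _ _) (hNm _ _) (by rw [hyu]; abel)) hp3]
    exact Dl_swap C (hNm _ _) (hNm _ _) hp3 hyu.symm hyu'.symm
  have p1 := cyc w v r (List.Perm.refl _)
  have hperm : ∀ u1 u2 u3 : Fin n, [u2, u3, u1].Perm [u1, u2, u3] := fun u1 u2 u3 => by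
    rw [List.perm_iff_count]; intro z; simp only [List.count_cons, List.count_nil]; omega
  have p2 := cyc v r w (hperm w v r)
  have p3 := cyc v w r (List.Perm.swap _ _ _)
  have p4 := cyc w r v ((hperm v w r).trans (List.Perm.swap _ _ _))
  -- the brackets of `i, e, s` with `w, v, r` form a `3 × 3` matrix of rank two
  have det : br k i w * N v r - br k i w * N r v - br k i v * N w r + br k i v * N r w +
      br k i r * N w v - br k i r * N v w = 0 := by
    simp only [N, br, bracket]; ring
  have hd := congrArg (fun f => Ph L1 L2 a b c d f W0) det
  simp only [map_sub, map_add, LinearMap.sub_apply, LinearMap.add_apply, map_zero,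
    LinearMap.zero_apply] at hd
  have hZ : br k e i * br k w v * (br k s r * pp k ps) =
      br k i v * N w r - br k i w * N v r := by
    have e1 := plucker (k := k) i e w v
    rw [br_swap i e]
    simp only [N]
    linear_combination - br k s r * pp k ps * e1
  rw [hZ, map_sub, LinearMap.sub_apply]
  refine nat_cancel k 3 (by norm_num) ?_
  push_cast
  linear_combination - hd - 2 * p1 - p2 + 2 * p3 + p4

lemma cnt_apply (l : List (Fin n)) (t : Fin n) : cnt l t = l.count t := by
  induction l with
  | nil => simp [cnt]
  | cons y l ih =>
    simp only [cnt, Pi.add_apply, dl_apply, ih, List.count_cons, beq_iff_eq]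
    by_cases h : t = y
    · subst h; simp [add_comm]
    · simp [h, Ne.symm h]

/-- A graph without edges inside `S` matches the vertices of `S` with vertices outside. -/
lemma graph_pairs (S : Finset (Fin n)) (E I : List (Fin n)) (hE : ∀ e ∈ E, e ∈ S)
    (Γ : Multiset (Fin n × Fin n)) (hΓ : valence n Γ = cnt E + cnt I)
    (hS : ∀ e ∈ Γ, ¬ (e.1 ∈ S ∧ e.2 ∈ S)) :
    ∃ ps rest, ps.map Prod.fst = E ∧ (ps.map Prod.snd ++ rest).Perm I ∧
      ∃ g ∈ R k (cnt rest), gm k Γ = pp k ps * g := by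
  induction E generalizing I Γ with
  | nil => exact ⟨[], I, rfl, List.Perm.refl _, gm k Γ, gm_mem' Γ (by rw [hΓ]; simp [cnt]), by
      simp [pp]⟩
  | cons e E ih =>
    have hpos : 0 < valence n Γ e := by
      rw [hΓ, Pi.add_apply, cnt_apply]; simp
    obtain ⟨⟨u, v⟩, Γ', rfl, huv⟩ := exists_edge hpos
    have heS := hE e (by simp)
    -- the edge at `e`, with its other endpoint `t`
    obtain ⟨t, g0, ht, hb, hval⟩ : ∃ t, ∃ g0 : k, t ∉ S ∧ br k u v = g0 • br k e t ∧
        dl u + dl v = dl e + dl t := by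
      have h1 := hS (u, v) (by simp)
      dsimp only at *
      rcases huv with rfl | rfl
      · exact ⟨v, 1, fun h => h1 ⟨heS, h⟩, by simp, rfl⟩
      · exact ⟨u, -1, fun h => h1 ⟨h, heS⟩, by rw [br_swap]; simp, by abel⟩
    rw [val_cons] at hΓ
    dsimp only at hΓ
    rw [hval] at hΓ
    have hΓ2 : dl t + valence n Γ' = cnt E + cnt I := by
      simp only [cnt] at hΓ
      rw [add_assoc, add_assoc] at hΓ
      exact add_left_cancel hΓ
    have htI : t ∈ I := by
      have h2 := congrFun hΓ2 t
      simp only [Pi.add_apply, cnt_apply, dl_apply, if_true] at h2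
      have h3 : E.count t = 0 := List.count_eq_zero.2 fun h => ht (hE t (by simp [h]))
      exact List.count_pos_iff.1 (by omega)
    have hI := List.perm_cons_erase htI
    have hΓ3 : valence n Γ' = cnt E + cnt (I.erase t) := by
      rw [cnt_perm hI, cnt] at hΓ2
      refine add_left_cancel (a := dl t) ?_
      rw [hΓ2]; abel
    obtain ⟨ps, rest, h1, h2, g, hg, h3⟩ := ih (I.erase t) (fun e he => hE e (by simp [he])) Γ' hΓ3
      (fun e he => hS e (by simp [he]))
    refine ⟨(e, t) :: ps, rest, by simp [h1], ?_, g0 • g, Submodule.smul_mem _ _ hg, ?_⟩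
    · exact (h2.cons t).trans hI.symm
    · rw [gm_cons, h3]
      dsimp only
      rw [hb]
      simp only [pp, smul_mul_assoc, mul_smul_comm]
      rw [mul_assoc]

lemma R_pair {p q : Fin n} {g : PtRing k n} (hg : g ∈ R k (dl p + dl q)) :
    ∃ r : k, g = r • br k p q := by
  have : R k (dl p + dl q) ≤ Submodule.span k {br k p q} := by
    refine R_extract p (by simp [dl_apply]) _ fun t v' G hv hG ht => ?_
    rw [add_assoc] at hv
    have hv2 := add_left_cancel hv
    have htq : t = q := by
      have := congrFun hv2 t
      simp only [Pi.add_apply, dl_apply, if_true] at this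
      by_contra hne
      rw [if_neg hne] at this
      omega
    subst htq
    have hv0 : v' = 0 := add_left_cancel (a := dl t) (by rw [← hv2, add_zero])
    subst hv0
    obtain ⟨r, rfl⟩ := R_zero hG
    rw [mul_smul_comm, mul_one]
    exact Submodule.smul_mem _ _ (Submodule.mem_span_singleton_self _)
  obtain ⟨r, hr⟩ := Submodule.mem_span_singleton.1 (this hg)
  exact ⟨r, hr.symm⟩

/-- The odd obstruction vanishes at the matchings joining every vertex in even position to one in
odd position, with one further edge. -/
lemma Ctx.odd_pairs [CharZero k] (C : Ctx L1 L2 a b c d x) {ps : List (Fin n × Fin n)}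
    {p q : Fin n} (hm : pp k ps * br k p q ∈ R k x) (hne : ps.map Prod.fst ≠ []) {i : Fin n}
    {O E : List (Fin n)} (hE : E = ps.map Prod.fst)
    (h2 : (i :: O).Perm (ps.map Prod.snd ++ [p, q])) (hOE : O.length = E.length + 1)
    (hx : dl i + (cnt O + cnt E) = x) :
    Ph L1 L2 a b c d (pp k ps * br k p q) (Wt k a b c d i (il O E)) = 0 := by
  cases ps with
  | nil => simp at hne
  | cons f ps =>
  obtain ⟨e1, i1⟩ := f
  have hO : (i :: O).Perm (i1 :: p :: q :: ps.map Prod.snd) := by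
    refine h2.trans ?_
    simp only [List.map_cons, List.cons_append]
    exact (List.perm_append_comm (l₁ := ps.map Prod.snd) (l₂ := [p, q])).cons i1
  simp only [List.map_cons] at hE
  have hxI : x = cnt E + cnt (i1 :: p :: q :: ps.map Prod.snd) := by
    rw [← cnt_perm hO, ← hx]; simp only [cnt]; abel
  rw [C.wt_perm hm hO (List.Perm.refl E) hOE hx]
  subst hE
  cases ps with
  | nil =>
    have h0 := C.eN_zero i1 e1 p q (by rw [hxI]; simp only [List.map_nil, cnt]; abel)
    rw [eN] at h0
    simp only [pp, List.map_nil, il]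
    rw [show br k e1 i1 * 1 * br k p q = -(br k i1 e1 * br k p q) by
      rw [br_swap i1 e1]; ring, map_neg, LinearMap.neg_apply, h0, neg_zero]
  | cons f ps =>
    obtain ⟨s, r⟩ := f
    have h0 := C.odd_many i1 p q r e1 s ps (by rw [hxI]; simp only [List.map_cons, cnt]; abel)
    simp only [pp, List.map_cons] at h0 ⊢
    rw [show br k e1 i1 * (br k s r * pp k ps) * br k p q =
      br k e1 i1 * br k p q * (br k s r * pp k ps) by ring, h0]

/-- The odd obstruction vanishes unless there are exactly six points. -/
lemma Ctx.odd_zero [CharZero k] (C : Ctx L1 L2 a b c d x) {Z : PtRing k n} (hZ : Z ∈ R k x)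
    (h6 : n ≠ 6) (i : Fin n) (l : List (Fin n)) (hl : Odd l.length) (hx : dl i + cnt l = x) :
    Ph L1 L2 a b c d Z (Wt k a b c d i l) = 0 := by
  obtain ⟨O, E, hOE, rfl⟩ := exists_il l hl
  rw [cnt_il _ _ hOE] at hx
  have hsum : ∑ t, x t = 2 * E.length + 2 := by
    rw [← hx]
    simp only [Pi.add_apply, Finset.sum_add_distrib, sum_dl_univ, sum_cnt]; omega
  have hEne : E ≠ [] := by
    rintro rfl
    have h1 : ∑ t, (x + dl a + dl b + dl c + dl d) t = n := by rw [C.hx]; simp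
    simp only [Pi.add_apply, Finset.sum_add_distrib, sum_dl_univ, hsum, List.length_nil] at h1
    omega
  have hx1 : ∀ t, x t ≤ 1 := fun t => by
    have := congrFun C.hx t
    simp only [Pi.add_apply, Pi.one_apply] at this
    omega
  have hxI : x = cnt E + cnt (i :: O) := by rw [← hx]; simp only [cnt]; abel
  have hI0 : ∀ t ∈ E.toFinset, cnt (i :: O) t = 0 := fun t ht => by
    have h1 := hx1 t
    have h2 : 0 < E.count t := List.count_pos_iff.2 (List.mem_toFinset.1 ht)
    rw [hxI, Pi.add_apply, cnt_apply E] at h1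
    omega
  have hle : ∑ t ∈ E.toFinset, x t ≤ ∑ t ∈ (E.toFinset)ᶜ, x t := by
    have h1 := Finset.sum_add_sum_compl E.toFinset x
    have h2 : ∑ t ∈ E.toFinset, x t ≤ E.length := by
      rw [← sum_cnt E]
      calc _ = ∑ t ∈ E.toFinset, cnt E t := Finset.sum_congr rfl fun t ht => by
            rw [hxI, Pi.add_apply, hI0 t ht, add_zero]
        _ ≤ _ := Finset.sum_le_univ_sum_of_nonneg fun _ => Nat.zero_le _
    omega
  have key : R k x ≤ LinearMap.ker ((Ph L1 L2 a b c d).flip (Wt k a b c d i (il O E))) := by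
    refine kempe E.toFinset hle _ fun Γ hΓ hS => ?_
    rw [LinearMap.mem_ker, LinearMap.flip_apply]
    rw [hxI] at hΓ
    obtain ⟨ps, rest, h1, h2, g, hg, h3⟩ := graph_pairs (k := k) E.toFinset E (i :: O)
      (fun e he => List.mem_toFinset.2 he) Γ hΓ hS
    have hlen : rest.length = 2 := by
      have := h2.length_eq
      have h1' := congrArg List.length h1
      simp only [List.length_append, List.length_map, List.length_cons] at this h1'
      omega
    obtain ⟨p, q, rfl⟩ := List.length_eq_two.1 hlen
    obtain ⟨g0, rfl⟩ := R_pair (p := p) (q := q) (R_cast hg (by simp [cnt]))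
    rw [h3, mul_smul_comm, map_smul, LinearMap.smul_apply]
    have hm : pp k ps * br k p q ∈ R k x := R_mul' (pp_mem ps) (br_mem p q) (by
      rw [h1, hxI, ← cnt_perm h2, cnt_append]; simp only [cnt]; abel)
    rw [C.odd_pairs hm (h1 ▸ hEne) h1.symm h2.symm hOE hx, smul_zero]
  have := key hZ
  rwa [LinearMap.mem_ker, LinearMap.flip_apply] at this

/-- The obstruction vanishes on pairs of paths with oddly many interior vertices. -/
lemma Ctx.odd_odd [CharZero k] (C : Ctx L1 L2 a b c d x) {Z : PtRing k n} (hZ : Z ∈ R k x)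
    (h6 : n ≠ 6) (l1 l2 : List (Fin n)) (h1 : Odd l1.length) (h2 : Odd l2.length)
    (hl : cnt l1 + cnt l2 = x) :
    Ph L1 L2 a b c d Z (pth k a l1 d * pth k b l2 c) = 0 := by
  refine C.odd_reduce hZ (fun i l h hx => C.odd_zero hZ h6 i l h hx) (fun i l h hx => ?_)
    l1 l2 h1 h2 hl
  rw [C.short_swap hZ i l h hx, C.odd_zero hZ h6 i l h hx]

/-- The exchange identity on four points in degree three. -/
lemma B4_one [CharZero k] (hn : Even n) (h6 : n ≠ 6) (hb : HBin L1) (hm : HMul 1 L1 L1 L2) :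
    B4 1 L1 L2 := by
  intro a b c d x hx Z hZ W hW
  have C : Ctx L1 L2 a b c d x := ⟨hb, hm, hx⟩
  have hsum : (∑ t, x t) + 4 = n := by
    have h1 : ∑ t, (x + dl a + dl b + dl c + dl d) t = n := by rw [C.hx]; simp
    simp only [Pi.add_apply, Finset.sum_add_distrib, sum_dl_univ] at h1
    omega
  have par : ∀ l l' : List (Fin n), cnt l + cnt l' = x →
      (Even l.length ∧ Even l'.length) ∨ (Odd l.length ∧ Odd l'.length) := by
    intro l l' h
    rw [← h] at hsum
    simp only [Pi.add_apply, Finset.sum_add_distrib, sum_cnt] at hsum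
    simp only [Nat.even_iff, Nat.odd_iff] at *
    omega
  have key : R k (x + x + dl a + dl b + dl c + dl d) ≤
      LinearMap.ker (Ph L1 L2 a b c d Z) := by
    refine span_path4 x a b c d _ ?_ ?_ ?_ <;> intro l l' h <;> rw [LinearMap.mem_ker] <;>
      rcases par l l' h with ⟨h1, h2⟩ | ⟨h1, h2⟩
    · exact C.kill_pth hZ _ _ _ _ l l' h1 h2 h (by abel)
    · have := C.swap23.swap34.odd_odd hZ h6 l l' h1 h2 h
      simpa only [Ph_swap34 L1 L2 a c b d, Ph_swap23 L1 L2 a b c d, LinearMap.neg_apply,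
        neg_neg] using this
    · exact C.kill_pth hZ _ _ _ _ l l' h1 h2 h (by abel)
    · have := C.swap34.odd_odd hZ h6 l l' h1 h2 h
      rw [Ph_swap34, LinearMap.neg_apply, LinearMap.neg_apply, neg_eq_zero] at this
      exact this
    · exact C.kill_pth hZ _ _ _ _ l l' h1 h2 h (by abel)
    · exact C.odd_odd hZ h6 l l' h1 h2 h
  exact key (R_cast hW (by rw [one_smul, ← hx]; abel))

end PtRel

/-! ### Minor relations -/

namespace PtRel

variable {k : Type} [Field k] {n : ℕ} {Q : Type} [CommRing Q] [Algebra k Q]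

/-- The `3 × 3` minor: the alternating sum of `f` over the six matchings between
`a₁, a₂, a₃` and `b₁, b₂, b₃`, each added to `N`. -/
def mnr (f : Multiset (Fin n × Fin n) → Q) (N : Multiset (Fin n × Fin n))
    (a1 a2 a3 b1 b2 b3 : Fin n) : Q :=
  f ((a1, b1) ::ₘ (a2, b2) ::ₘ (a3, b3) ::ₘ N) - f ((a1, b1) ::ₘ (a2, b3) ::ₘ (a3, b2) ::ₘ N)
  - f ((a1, b2) ::ₘ (a2, b1) ::ₘ (a3, b3) ::ₘ N) + f ((a1, b2) ::ₘ (a2, b3) ::ₘ (a3, b1) ::ₘ N)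
  + f ((a1, b3) ::ₘ (a2, b1) ::ₘ (a3, b2) ::ₘ N) - f ((a1, b3) ::ₘ (a2, b2) ::ₘ (a3, b1) ::ₘ N)

lemma mnr_a12 (f : Multiset (Fin n × Fin n) → Q) (N : Multiset (Fin n × Fin n))
    (a1 a2 a3 b1 b2 b3 : Fin n) : mnr f N a2 a1 a3 b1 b2 b3 = - mnr f N a1 a2 a3 b1 b2 b3 := by
  have h : ∀ p q r, f ((a2, p) ::ₘ (a1, q) ::ₘ (a3, r) ::ₘ N) =
      f ((a1, q) ::ₘ (a2, p) ::ₘ (a3, r) ::ₘ N) := fun p q r => by rw [Multiset.cons_swap]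
  simp only [mnr, h]; ring

lemma mnr_a23 (f : Multiset (Fin n × Fin n) → Q) (N : Multiset (Fin n × Fin n))
    (a1 a2 a3 b1 b2 b3 : Fin n) : mnr f N a1 a3 a2 b1 b2 b3 = - mnr f N a1 a2 a3 b1 b2 b3 := by
  have h : ∀ p q r, f ((a1, p) ::ₘ (a3, q) ::ₘ (a2, r) ::ₘ N) =
      f ((a1, p) ::ₘ (a2, r) ::ₘ (a3, q) ::ₘ N) := fun p q r => by
    rw [Multiset.cons_swap (a3, q)]
  simp only [mnr, h]; ring

lemma mnr_b12 (f : Multiset (Fin n × Fin n) → Q) (N : Multiset (Fin n × Fin n))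
    (a1 a2 a3 b1 b2 b3 : Fin n) : mnr f N a1 a2 a3 b2 b1 b3 = - mnr f N a1 a2 a3 b1 b2 b3 := by
  simp only [mnr]; ring

lemma mnr_b23 (f : Multiset (Fin n × Fin n) → Q) (N : Multiset (Fin n × Fin n))
    (a1 a2 a3 b1 b2 b3 : Fin n) : mnr f N a1 a2 a3 b1 b3 b2 = - mnr f N a1 a2 a3 b1 b2 b3 := by
  simp only [mnr]; ring

/-- The `3 × 3` minors of the matrix of brackets vanish. -/
lemma mnr_gm (N : Multiset (Fin n × Fin n)) (a1 a2 a3 b1 b2 b3 : Fin n) :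
    mnr (gm k) N a1 a2 a3 b1 b2 b3 = 0 := by
  simp only [mnr, gm_cons, br, bracket]; ring

lemma val_tri (N : Multiset (Fin n × Fin n)) (a1 a2 a3 b1 b2 b3 : Fin n) :
    valence n ((a1, b1) ::ₘ (a2, b2) ::ₘ (a3, b3) ::ₘ N) =
      valence n N + (dl a1 + dl a2 + dl a3 + dl b1 + dl b2 + dl b3) := by
  simp only [val_cons]; abel

/-- A minor vanishes when the common part contains a perfect matching. -/
lemma mnr_match {e : ℕ} {L1 LE : PtRing k n →ₗ[k] Q} (hs : ∀ y, Star e L1 LE y)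
    {N M : Multiset (Fin n × Fin n)} {a1 a2 a3 b1 b2 b3 : Fin n}
    (hN : valence n N + (dl a1 + dl a2 + dl a3 + dl b1 + dl b2 + dl b3) = (e + 2) • 1)
    (hM : M ≤ N) (hMv : valence n M = 1) : mnr (psi L1 LE) N a1 a2 a3 b1 b2 b3 = 0 := by
  have h : ∀ c1 c2 c3, dl c1 + dl c2 + dl c3 = dl b1 + dl b2 + dl b3 →
      psi L1 LE ((a1, c1) ::ₘ (a2, c2) ::ₘ (a3, c3) ::ₘ N) = L1 (gm k M) *
        LE (gm k ((a1, c1) ::ₘ (a2, c2) ::ₘ (a3, c3) ::ₘ (N - M))) := by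
    intro c1 c2 c3 hc
    have e1 : (a1, c1) ::ₘ (a2, c2) ::ₘ (a3, c3) ::ₘ N - M =
        (a1, c1) ::ₘ (a2, c2) ::ₘ (a3, c3) ::ₘ (N - M) := by
      obtain ⟨N', rfl⟩ := Multiset.le_iff_exists_add.1 hM
      rw [add_tsub_cancel_left, ← Multiset.add_cons, ← Multiset.add_cons,
        ← Multiset.add_cons, add_tsub_cancel_left]
    rw [← e1]
    refine psi_eq hs ?_ ((hM.trans (Multiset.le_cons_self _ _)).trans
      ((Multiset.le_cons_self _ _).trans (Multiset.le_cons_self _ _))) hMv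
    rw [val_tri, ← hN]
    rw [show dl a1 + dl a2 + dl a3 + dl c1 + dl c2 + dl c3 =
      dl a1 + dl a2 + dl a3 + (dl c1 + dl c2 + dl c3) by abel, hc]
    abel
  have h0 := congrArg LE (mnr_gm (k := k) (N - M) a1 a2 a3 b1 b2 b3)
  simp only [mnr, map_sub, map_add, map_zero] at h0
  simp only [mnr]
  rw [h _ _ _ rfl, h b1 b3 b2 (by abel), h b2 b1 b3 (by abel), h b2 b3 b1 (by abel),
    h b3 b1 b2 (by abel), h b3 b2 b1 (by abel)]
  linear_combination L1 (gm k M) * h0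

/-- `Γ` reversed. -/
def rev (Γ : Multiset (Fin n × Fin n)) : Multiset (Fin n × Fin n) := Γ.map Prod.swap

lemma rev_rev (Γ : Multiset (Fin n × Fin n)) : rev (rev Γ) = Γ := by
  simp [rev]

lemma val_rev (Γ : Multiset (Fin n × Fin n)) : valence n (rev Γ) = valence n Γ := by
  ext i
  simp only [valence, rev, Multiset.map_map, Function.comp_def, Prod.fst_swap, Prod.snd_swap]
  exact add_comm _ _

lemma mem_rev {Γ : Multiset (Fin n × Fin n)} {e : Fin n × Fin n} :
    e ∈ rev Γ ↔ e.swap ∈ Γ := by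
  simp only [rev, Multiset.mem_map]
  constructor
  · rintro ⟨a, h, rfl⟩; simpa using h
  · intro h; exact ⟨_, h, by simp⟩

lemma rev_le {Γ Γ' : Multiset (Fin n × Fin n)} (h : Γ ≤ rev Γ') : rev Γ ≤ Γ' := by
  rw [← rev_rev Γ']; exact Multiset.map_le_map h

lemma countP_le {Γ : Multiset (Fin n × Fin n)} {p q : Fin n × Fin n → Prop} [DecidablePred p]
    [DecidablePred q] (h : ∀ e ∈ Γ, p e → q e) : Γ.countP p ≤ Γ.countP q := by
  induction Γ using Multiset.induction_on with
  | empty => simp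
  | cons e Γ ih =>
    have h1 := ih fun e' he => h e' (Multiset.mem_cons_of_mem he)
    have h2 := h e (Multiset.mem_cons_self _ _)
    simp only [Multiset.countP_cons]
    by_cases hp : p e
    · rw [if_pos hp, if_pos (h2 hp)]; omega
    · rw [if_neg hp]; omega

/-- In a bipartite graph between `P` and the one vertex larger `T`, regular of degree `d` on `P`
and of degrees at most `d` on `T`, every vertex of degree less than `d` is missed by a matching
of all other vertices. -/
lemma odd_match {Γ : Multiset (Fin n × Fin n)} {P T : Finset (Fin n)} {d : ℕ} {a : Fin n}
    (hd : Disjoint P T) (hc : T.card = P.card + 1)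
    (hΓ : (∀ e ∈ Γ, e.1 ∈ P ∧ e.2 ∈ T) ∨ (∀ e ∈ Γ, e.1 ∈ T ∧ e.2 ∈ P))
    (hP : ∀ i ∈ P, valence n Γ i = d) (hT : ∀ i ∈ T, valence n Γ i ≤ d) (ha : a ∈ T)
    (had : valence n Γ a < d) : ∃ M ≤ Γ, valence n M = ind (P ∪ T.erase a) := by
  wlog h : ∀ e ∈ Γ, e.1 ∈ P ∧ e.2 ∈ T generalizing Γ
  · obtain ⟨M, h1, h2⟩ := this (Γ := rev Γ) (Or.inl fun e he => by
      have := (hΓ.resolve_left h) _ (mem_rev.1 he)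
      exact ⟨this.2, this.1⟩) (by simpa only [val_rev] using hP) (by simpa only [val_rev] using hT)
      (by simpa only [val_rev] using had) (fun e he => by
      have := (hΓ.resolve_left h) _ (mem_rev.1 he)
      exact ⟨this.2, this.1⟩)
    exact ⟨rev M, rev_le h1, by rw [val_rev, h2]⟩
  · obtain ⟨M, h1, h2, _⟩ := hall Γ P (T.erase a)
      (Finset.disjoint_of_subset_right (Finset.erase_subset _ _) hd)
      (by rw [Finset.card_erase_of_mem ha]; omega) (by
      intro U hU
      have e1 : ∑ i ∈ U, valence n Γ i = d * U.card := by
        rw [Finset.sum_congr rfl fun i hi => hP i (hU hi)]; simp [mul_comm]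
      have e2 := sum_val U Γ
      have e3 : Γ.countP (fun e => e.2 ∈ U) = 0 := by
        rw [Multiset.countP_eq_zero]
        intro e he h'
        exact Finset.disjoint_left.1 hd (hU h') (h e he).2
      have e4 := sum_val (insert a (nb Γ (T.erase a) U)) Γ
      have e5 : Γ.countP (fun e => e.1 ∈ U) ≤
          Γ.countP (fun e => e.2 ∈ insert a (nb Γ (T.erase a) U)) := by
        refine countP_le fun e he h' => ?_
        rw [Finset.mem_insert, mem_nb, Finset.mem_erase]
        by_cases h3 : e.2 = a
        · exact Or.inl h3
        · exact Or.inr ⟨⟨h3, (h e he).2⟩, e.1, h', he⟩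
      have e6 : a ∉ nb Γ (T.erase a) U := fun h' => by
        simpa using nb_subset _ _ _ h'
      rw [Finset.sum_insert e6] at e4
      have e7 : ∑ i ∈ nb Γ (T.erase a) U, valence n Γ i ≤ (nb Γ (T.erase a) U).card * d := by
        refine Finset.sum_le_card_nsmul _ _ _ fun i hi => hT i ?_
        exact Finset.mem_of_mem_erase (nb_subset _ _ _ hi)
      have e8 : d * U.card < d * ((nb Γ (T.erase a) U).card + 1) := by
        rw [mul_add, mul_one, mul_comm d (nb Γ (T.erase a) U).card]; omega
      have := Nat.lt_of_mul_lt_mul_left e8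
      omega)
    exact ⟨M, h1, h2⟩

end PtRel

/-! ### A singular matrix in degree three -/

namespace PtRel

variable {k : Type} [Field k] {n : ℕ} {Q : Type} [CommRing Q] [Algebra k Q]

/-- For `X` odd and `a ∈ X`, the space of valence `2` on `X` is spanned by products
`N' N'' [a c]`, with `N'` of valence `1` on `X ∖ a` and `N''` of valence `1` on `X ∖ c`. -/
lemma odd_span {X : Finset (Fin n)} (hX : Odd X.card) {a : Fin n} (ha : a ∈ X)
    (S : Submodule k (PtRing k n))
    (h : ∀ (c : Fin n) (y' y'' : Fin n → ℕ) (N' N'' : PtRing k n), y' + dl a = ind X →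
      y'' + dl c = ind X → N' ∈ R k y' → N'' ∈ R k y'' → N' * N'' * br k a c ∈ S) :
    R k (2 • ind X) ≤ S := by
  refine R_extract a (by simp [ind, ha]) S fun x v' G hv hG hxa => ?_
  have hvi : ∀ i, 2 * (if i ∈ X then 1 else 0) = (if i = a then 1 else 0) +
      (if i = x then 1 else 0) + v' i := fun i => by
    have := congrFun hv i
    simpa only [Pi.smul_apply, Pi.add_apply, ind_apply, dl_apply, smul_eq_mul] using this
  have hx : x ∈ X := by
    by_contra hx
    have := hvi x
    rw [if_neg hx, if_pos rfl] at this; omega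
  obtain ⟨m, hm⟩ := hX
  have hc2 : ((X.erase a).erase x).card = 2 * m - 1 := by
    rw [Finset.card_erase_of_mem (Finset.mem_erase.2 ⟨hxa, hx⟩), Finset.card_erase_of_mem ha]
    omega
  have hm1 : 1 ≤ m := by
    have : 2 ≤ X.card := by
      rw [← Finset.card_pair hxa]
      exact Finset.card_le_card (by intro i; simp only [Finset.mem_insert, Finset.mem_singleton]; rintro (rfl | rfl) <;> assumption)
    omega
  obtain ⟨P, hP, hPc⟩ := Finset.exists_subset_card_eq (s := (X.erase a).erase x) (n := m)
    (by omega)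
  have haP : a ∉ P := fun h' => by simpa using hP h'
  have hxP : x ∉ P := fun h' => by simpa using hP h'
  have hPX : P ⊆ X := fun i hi => by
    have := hP hi
    simp only [Finset.mem_erase] at this; exact this.2.2
  have key : R k v' ≤ S.comap (LinearMap.mulLeft k (br k a x)) := by
    refine kempe_bip P ?_ _ fun Γ hΓv hΓ => ?_
    · have h1 : ∀ U : Finset (Fin n), 2 * (U ∩ X).card = (if a ∈ U then 1 else 0) +
          (if x ∈ U then 1 else 0) + ∑ i ∈ U, v' i := fun U => by
        rw [← sum_dl U a, ← sum_dl U x, ← sum_ind U X, ← Finset.sum_add_distrib,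
          ← Finset.sum_add_distrib, Finset.mul_sum]
        exact Finset.sum_congr rfl fun i _ => congrFun hv i
      have h2 := h1 P
      have h3 := h1 Pᶜ
      rw [Finset.inter_eq_left.2 hPX, if_neg haP, if_neg hxP] at h2
      rw [if_pos (by simpa using haP), if_pos (by simpa using hxP)] at h3
      have h4 : (Pᶜ ∩ X).card = m + 1 := by
        rw [show Pᶜ ∩ X = X \ P by ext; simp [and_comm], Finset.card_sdiff_of_subset hPX]; omega
      omega
    · have hvP : ∀ i ∈ P, valence n Γ i = 2 := fun i hi => by
        have := hvi i
        have h1 : i ≠ a := fun h' => haP (h' ▸ hi)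
        have h2 : i ≠ x := fun h' => hxP (h' ▸ hi)
        rw [if_pos (hPX hi), if_neg h1, if_neg h2] at this
        rw [hΓv]; omega
      obtain ⟨M, hM, hMv⟩ := odd_match (Γ := Γ) (P := P) (T := X \ P) (d := 2) (a := a)
        Finset.disjoint_sdiff (by rw [Finset.card_sdiff_of_subset hPX]; omega)
        (Or.inl fun e he => ⟨(hΓ e he).1, by
          have h0 : 0 < valence n Γ e.2 := by
            obtain ⟨Γ', rfl⟩ := Multiset.exists_cons_of_mem he
            rw [val_cons]; simp [dl_apply]
          rw [hΓv] at h0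
          have := hvi e.2
          rw [Finset.mem_sdiff]
          refine ⟨?_, (hΓ e he).2⟩
          by_contra h'
          rw [if_neg h'] at this; omega⟩) hvP (fun i _ => by
          have := hvi i
          rw [hΓv]; split_ifs at this <;> omega) (by simp [ha, haP]) (by
          have := hvi a
          rw [if_pos rfl] at this
          rw [hΓv]; split_ifs at this <;> omega)
      have hM2 := val_sub hM
      have e1 : gm k Γ = gm k M * gm k (Γ - M) := by
        rw [← gm_add, add_tsub_cancel_of_le hM]
      rw [Submodule.mem_comap, LinearMap.mulLeft_apply, e1,
        show br k a x * (gm k M * gm k (Γ - M)) = gm k M * gm k (Γ - M) * br k a x by ring]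
      have hMi : ∀ i, valence n M i + (if i = a then 1 else 0) = if i ∈ X then 1 else 0 := by
        intro i
        rw [hMv, ind_apply]
        by_cases hia : i = a
        · subst hia; simp [ha, haP]
        · by_cases hiX : i ∈ X
          · simp [hia, hiX, em]
          · have hiP : i ∉ P := fun h' => hiX (hPX h')
            simp [hia, hiX, hiP]
      refine h x _ _ _ _ ?_ ?_ (gm_mem' M rfl) (gm_mem' (Γ - M) rfl)
      · ext i
        simp only [Pi.add_apply, dl_apply, ind_apply]; exact hMi i
      · ext i
        have h1 := hMi i
        have h2 := congrFun hM2 i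
        have h3 := hvi i
        rw [hΓv] at h2
        simp only [Pi.add_apply, dl_apply, ind_apply] at h2 ⊢
        split_ifs at * <;> omega
  exact key hG

/-- The degree three case: the matrix `L₁(Nᵢ Oⱼ [aᵢ bⱼ])` is singular. -/
lemma det_three {L1 L2 : PtRing k n →ₗ[k] Q} (hb : HBin L1) (hm : HMul 1 L1 L1 L2)
    {X : Finset (Fin n)} (hX : Odd X.card) {a1 a2 a3 b1 b2 b3 : Fin n} (ha3 : a3 ∈ X)
    {x1 x2 x3 z1 z2 z3 : Fin n → ℕ} (hx1 : x1 + dl a1 = ind X) (hx2 : x2 + dl a2 = ind X)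
    (hx3 : x3 + dl a3 = ind X) (hz1 : z1 + dl b1 = ind Xᶜ) (hz2 : z2 + dl b2 = ind Xᶜ)
    (hz3 : z3 + dl b3 = ind Xᶜ) {N1 N2 N3 O1 O2 O3 : PtRing k n}
    (hN1 : N1 ∈ R k x1) (hN2 : N2 ∈ R k x2) (hN3 : N3 ∈ R k x3)
    (hO1 : O1 ∈ R k z1) (hO2 : O2 ∈ R k z2) (hO3 : O3 ∈ R k z3) :
    let y (N : PtRing k n) (a : Fin n) (O : PtRing k n) (b : Fin n) : Q := L1 (N * (O * br k a b))
    y N3 a3 O1 b1 * (y N1 a1 O2 b2 * y N2 a2 O3 b3 - y N1 a1 O3 b3 * y N2 a2 O2 b2)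
    - y N3 a3 O2 b2 * (y N1 a1 O1 b1 * y N2 a2 O3 b3 - y N1 a1 O3 b3 * y N2 a2 O1 b1)
    + y N3 a3 O3 b3 * (y N1 a1 O1 b1 * y N2 a2 O2 b2 - y N1 a1 O2 b2 * y N2 a2 O1 b1) = 0 := by
  intro y
  have hXc : ind X + ind Xᶜ = 1 := by
    ext i; simp only [Pi.add_apply, ind_apply, Finset.mem_compl, Pi.one_apply]
    by_cases h : i ∈ X <;> simp [h]
  -- membership of the factors
  have hy : ∀ {x z : Fin n → ℕ} {a b N O}, x + dl a = ind X → z + dl b = ind Xᶜ → N ∈ R k x →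
      O ∈ R k z → N * (O * br k a b) ∈ R k 1 := by
    intro x z a b N O hx hz hN hO
    refine R_mul' hN (R_mul hO (br_mem a b)) ?_
    rw [← hXc, ← hx, ← hz]; abel
  -- the `2 × 2` minors of two rows
  have h2 : ∀ {x x' zi zj : Fin n → ℕ} {a c bi bj N N' Oi Oj}, x + dl a = ind X →
      x' + dl c = ind X → zi + dl bi = ind Xᶜ → zj + dl bj = ind Xᶜ → N ∈ R k x → N' ∈ R k x' →
      Oi ∈ R k zi → Oj ∈ R k zj → L2 (N * N' * br k a c * (br k bi bj * Oi * Oj)) =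
        y N a Oi bi * y N' c Oj bj - y N a Oj bj * y N' c Oi bi := by
    intro x x' zi zj a c bi bj N N' Oi Oj hx hx' hzi hzj hN hN' hOi hOj
    have e1 := hm _ (hy hx hzi hN hOi) _ (R_cast (hy hx' hzj hN' hOj) (by simp))
    have e2 := hm _ (hy hx hzj hN hOj) _ (R_cast (hy hx' hzi hN' hOi) (by simp))
    change _ = y N a Oi bi * y N' c Oj bj at e1
    change _ = y N a Oj bj * y N' c Oi bi at e2
    rw [← e1, ← e2, ← map_sub]
    congr 1
    linear_combination (N * N' * Oi * Oj) * plucker (k := k) a c bi bj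
  -- linearity in the factor supported on `X`
  have h3 : R k (2 • ind X) ≤ LinearMap.ker (
      (y N3 a3 O1 b1) • (L2 ∘ₗ LinearMap.mulRight k (br k b2 b3 * O2 * O3))
      - (y N3 a3 O2 b2) • (L2 ∘ₗ LinearMap.mulRight k (br k b1 b3 * O1 * O3))
      + (y N3 a3 O3 b3) • (L2 ∘ₗ LinearMap.mulRight k (br k b1 b2 * O1 * O2))) := by
    refine odd_span hX ha3 _ fun c y' y'' N' N'' hy' hy'' hN' hN'' => ?_
    rw [LinearMap.mem_ker]
    simp only [LinearMap.add_apply, LinearMap.sub_apply, LinearMap.smul_apply,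
      LinearMap.comp_apply, LinearMap.mulRight_apply, smul_eq_mul]
    rw [h2 hy' hy'' hz2 hz3 hN' hN'' hO2 hO3, h2 hy' hy'' hz1 hz3 hN' hN'' hO1 hO3,
      h2 hy' hy'' hz1 hz2 hN' hN'' hO1 hO2]
    have hN'3 : N' ∈ R k x3 := R_cast hN' (add_right_cancel (hx3.trans hy'.symm))
    have h4 : ∀ {zi zj : Fin n → ℕ} {bi bj Oi Oj}, zi + dl bi = ind Xᶜ → zj + dl bj = ind Xᶜ →
        Oi ∈ R k zi → Oj ∈ R k zj → y N3 a3 Oi bi * y N' a3 Oj bj =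
          y N3 a3 Oj bj * y N' a3 Oi bi := by
      intro zi zj bi bj Oi Oj hzi hzj hOi hOj
      refine hb x3 (dl a3 + ind Xᶜ) ?_ N3 hN3 N' hN'3 _ ?_ _ ?_
      · rw [← hXc, ← hx3]; abel
      · exact R_mul' hOi (br_mem a3 bi) (by rw [← hzi]; abel)
      · exact R_mul' hOj (br_mem a3 bj) (by rw [← hzj]; abel)
    linear_combination (y N'' c O3 b3) * h4 hz1 hz2 hO1 hO2 - (y N'' c O2 b2) * h4 hz1 hz3 hO1 hO3
      + (y N'' c O1 b1) * h4 hz2 hz3 hO2 hO3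
  have h5 := h3 (R_mul' (R_mul hN1 hN2) (br_mem a1 a2) (v := x1 + x2) (by
    rw [two_smul, ← hx1]; nth_rewrite 2 [hx1]; rw [← hx2]; abel))
  rw [LinearMap.mem_ker] at h5
  simp only [LinearMap.add_apply, LinearMap.sub_apply, LinearMap.smul_apply,
      LinearMap.comp_apply, LinearMap.mulRight_apply, smul_eq_mul] at h5
  rw [h2 hx1 hx2 hz2 hz3 hN1 hN2 hO2 hO3, h2 hx1 hx2 hz1 hz3 hN1 hN2 hO1 hO3,
      h2 hx1 hx2 hz1 hz2 hN1 hN2 hO1 hO2] at h5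
  exact h5

end PtRel

/-! ### Minor relations in degree at least three -/

namespace PtRel

variable {k : Type} [Field k] {n : ℕ} {Q : Type} [CommRing Q] [Algebra k Q]

lemma val_filter {N : Multiset (Fin n × Fin n)} {X : Finset (Fin n)}
    (h : ∀ e ∈ N, e.1 ∈ X ↔ e.2 ∈ X) (i : Fin n) :
    valence n (N.filter (fun e => e.1 ∈ X)) i = if i ∈ X then valence n N i else 0 := by
  induction N using Multiset.induction_on with
  | empty => simp [val_zero]
  | cons e N ih =>
    have h1 := ih fun e' he => h e' (Multiset.mem_cons_of_mem he)
    have h2 := h e (Multiset.mem_cons_self _ _)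
    by_cases he : e.1 ∈ X
    · have he2 := h2.1 he
      rw [Multiset.filter_cons_of_pos (p := fun e : Fin n × Fin n => e.1 ∈ X) _ he, val_cons, val_cons]
      simp only [Pi.add_apply, h1, dl_apply]
      by_cases hi : i ∈ X
      · simp [hi]
      · have : i ≠ e.1 := fun h' => hi (h' ▸ he)
        have : i ≠ e.2 := fun h' => hi (h' ▸ he2)
        simp [*]
    · have he2 : e.2 ∉ X := fun h' => he (h2.2 h')
      rw [Multiset.filter_cons_of_neg (p := fun e : Fin n × Fin n => e.1 ∈ X) _ he, h1, val_cons]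
      by_cases hi : i ∈ X
      · have h3 : i ≠ e.1 := fun h' => he (h' ▸ hi)
        have h4 : i ≠ e.2 := fun h' => he2 (h' ▸ hi)
        simp [hi, h3, h4, dl_apply]
      · simp [hi]

/-- The factorisation of a graph of valence two on an odd bipartite set, with two defects. -/
lemma two_split {Γ : Multiset (Fin n × Fin n)} {P T : Finset (Fin n)} {a a' : Fin n}
    (hd : Disjoint P T) (hc : T.card = P.card + 1)
    (hΓ : (∀ e ∈ Γ, e.1 ∈ P ∧ e.2 ∈ T) ∨ (∀ e ∈ Γ, e.1 ∈ T ∧ e.2 ∈ P))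
    (hv : valence n Γ + (dl a + dl a') = 2 • ind (P ∪ T)) (ha : a ∈ T) (ha' : a' ∈ T) :
    ∃ M M', Γ = M + M' ∧ valence n M + dl a = ind (P ∪ T) ∧ valence n M' + dl a' = ind (P ∪ T) := by
  have hvi : ∀ i, valence n Γ i + ((if i = a then 1 else 0) + (if i = a' then 1 else 0)) =
      2 * (if i ∈ P ∪ T then 1 else 0) := fun i => by
    have := congrFun hv i
    simpa only [Pi.smul_apply, Pi.add_apply, ind_apply, dl_apply, smul_eq_mul] using this
  have hPa : ∀ i ∈ P, i ≠ a := fun i hi h => Finset.disjoint_left.1 hd hi (h ▸ ha)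
  have hPa' : ∀ i ∈ P, i ≠ a' := fun i hi h => Finset.disjoint_left.1 hd hi (h ▸ ha')
  obtain ⟨M, hM, hMv⟩ := odd_match (d := 2) (a := a) hd hc hΓ (fun i hi => by
      have := hvi i
      rw [if_neg (hPa i hi), if_neg (hPa' i hi), if_pos (by simp [hi])] at this; omega)
      (fun i _ => by have := hvi i; split_ifs at this <;> omega) ha (by
      have := hvi a; rw [if_pos rfl] at this; split_ifs at this <;> omega)
  have hM1 : ∀ i, valence n M i + (if i = a then 1 else 0) = if i ∈ P ∪ T then 1 else 0 := by
    intro i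
    rw [hMv, ind_apply]
    by_cases hia : i = a
    · subst hia; simp [ha, Finset.disjoint_right.1 hd ha]
    · simp [hia]
  refine ⟨M, Γ - M, (add_tsub_cancel_of_le hM).symm, ?_, ?_⟩
  · ext i; simp only [Pi.add_apply, dl_apply, ind_apply]; exact hM1 i
  · ext i
    have h1 := hM1 i
    have h2 := congrFun (val_sub hM) i
    have h3 := hvi i
    simp only [Pi.add_apply, dl_apply, ind_apply] at h2 ⊢
    split_ifs at * <;> omega

/-- The factorisation of a graph of valence three on an odd bipartite set, with three defects. -/
lemma three_split {Γ : Multiset (Fin n × Fin n)} {P T : Finset (Fin n)} {a a' a'' : Fin n}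
    (hd : Disjoint P T) (hc : T.card = P.card + 1)
    (hΓ : (∀ e ∈ Γ, e.1 ∈ P ∧ e.2 ∈ T) ∨ (∀ e ∈ Γ, e.1 ∈ T ∧ e.2 ∈ P))
    (hv : valence n Γ + (dl a + dl a' + dl a'') = 3 • ind (P ∪ T)) (ha : a ∈ T) (ha' : a' ∈ T)
    (ha'' : a'' ∈ T) :
    ∃ M M' M'', Γ = M + (M' + M'') ∧ valence n M + dl a = ind (P ∪ T) ∧
      valence n M' + dl a' = ind (P ∪ T) ∧ valence n M'' + dl a'' = ind (P ∪ T) := by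
  have hvi : ∀ i, valence n Γ i + ((if i = a then 1 else 0) + (if i = a' then 1 else 0) +
      (if i = a'' then 1 else 0)) = 3 * (if i ∈ P ∪ T then 1 else 0) := fun i => by
    have := congrFun hv i
    simpa only [Pi.smul_apply, Pi.add_apply, ind_apply, dl_apply, smul_eq_mul] using this
  have hPa : ∀ i ∈ P, i ≠ a := fun i hi h => Finset.disjoint_left.1 hd hi (h ▸ ha)
  have hPa' : ∀ i ∈ P, i ≠ a' := fun i hi h => Finset.disjoint_left.1 hd hi (h ▸ ha')
  have hPa'' : ∀ i ∈ P, i ≠ a'' := fun i hi h => Finset.disjoint_left.1 hd hi (h ▸ ha'')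
  obtain ⟨M, hM, hMv⟩ := odd_match (d := 3) (a := a) hd hc hΓ (fun i hi => by
      have := hvi i
      rw [if_neg (hPa i hi), if_neg (hPa' i hi), if_neg (hPa'' i hi), if_pos (by simp [hi])] at this
      omega)
      (fun i _ => by have := hvi i; split_ifs at this <;> omega) ha (by
      have := hvi a; rw [if_pos rfl] at this; split_ifs at this <;> omega)
  have hM1 : ∀ i, valence n M i + (if i = a then 1 else 0) = if i ∈ P ∪ T then 1 else 0 := by
    intro i
    rw [hMv, ind_apply]
    by_cases hia : i = a
    · subst hia; simp [ha, Finset.disjoint_right.1 hd ha]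
    · simp [hia]
  have hΓM : ∀ e ∈ Γ - M, e ∈ Γ := fun e he => Multiset.mem_of_le (Multiset.sub_le_self _ _) he
  obtain ⟨M', M'', h1, h2, h3⟩ := two_split (Γ := Γ - M) (a := a') (a' := a'') hd hc
    (hΓ.imp (fun h e he => h e (hΓM e he)) (fun h e he => h e (hΓM e he))) (by
      ext i
      have h1 := hM1 i
      have h2 := congrFun (val_sub hM) i
      have h3 := hvi i
      simp only [Pi.add_apply, dl_apply, ind_apply, Pi.smul_apply, smul_eq_mul] at h2 ⊢
      split_ifs at * <;> omega) ha' ha''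
  refine ⟨M, M', M'', by rw [← h1, add_tsub_cancel_of_le hM], ?_, h2, h3⟩
  ext i; simp only [Pi.add_apply, dl_apply, ind_apply]; exact hM1 i

/-- The total valence on `U`, corrected by the defects in `U`. -/
lemma sum_defect {e : ℕ} {N : Multiset (Fin n × Fin n)} {a1 a2 a3 b1 b2 b3 : Fin n}
    (hN : valence n N + (dl a1 + dl a2 + dl a3 + dl b1 + dl b2 + dl b3) = (e + 2) • 1)
    (U : Finset (Fin n)) :
    ∑ i ∈ U, valence n N i + ((if a1 ∈ U then 1 else 0) + (if a2 ∈ U then 1 else 0) +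
      (if a3 ∈ U then 1 else 0) + (if b1 ∈ U then 1 else 0) + (if b2 ∈ U then 1 else 0) +
      (if b3 ∈ U then 1 else 0)) = (e + 2) * U.card := by
  simp only [← sum_dl U, ← Finset.sum_add_distrib]
  have := Finset.sum_congr (rfl : U = U) fun i _ => congrFun hN i
  simp only [Pi.add_apply] at this
  rw [this]
  simp [mul_comm]

/-- The minor relations from degree four on: by counting edges, six defects cannot violate
Hall's condition, so the common part contains a perfect matching. -/
lemma mnr_large {e : ℕ} {L1 LE : PtRing k n →ₗ[k] Q} (hs : ∀ y, Star (e + 2) L1 LE y)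
    {S : Finset (Fin n)} (hS : S.card = Sᶜ.card) {N : Multiset (Fin n × Fin n)} (hNS : Bip S N)
    {a1 a2 a3 b1 b2 b3 : Fin n} (hb1 : b1 ∉ S) (hb2 : b2 ∉ S) (hb3 : b3 ∉ S)
    (hN : valence n N + (dl a1 + dl a2 + dl a3 + dl b1 + dl b2 + dl b3) = (e + 2 + 2) • 1) :
    mnr (psi L1 LE) N a1 a2 a3 b1 b2 b3 = 0 := by
  rcases hall_or hS (Γ := N) with ⟨M, hM, hMv⟩ | ⟨U, hU, hlt⟩
  · exact mnr_match hs hN hM hMv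
  · exfalso
    have h1 := bip_count_nb hNS hU
    have h2 := sum_defect hN U
    have h3 := sum_defect hN (nb N Sᶜ U)
    rw [if_neg (fun h => hb1 (hU h)), if_neg (fun h => hb2 (hU h)), if_neg (fun h => hb3 (hU h))]
      at h2
    have h4 : (e + 2 + 2) * ((nb N Sᶜ U).card + 1) ≤ (e + 2 + 2) * U.card :=
      Nat.mul_le_mul_left _ hlt
    rw [mul_add, mul_one] at h4
    split_ifs at h2 <;> omega

/-- The minor relations in degree three. If the common part has no perfect matching, then a set
violating Hall's condition cuts out a union of components of odd order containing `a1, a2, a3` but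
none of `b1, b2, b3`; both parts factor into matchings with one defect each, and the relation is
`det_three`. -/
lemma mnr_one {L1 L2 : PtRing k n →ₗ[k] Q} (hb : HBin L1) (hm : HMul 1 L1 L1 L2)
    (hs : ∀ y, Star 1 L1 L2 y)
    {S : Finset (Fin n)} (hS : S.card = Sᶜ.card) {N : Multiset (Fin n × Fin n)} (hNS : Bip S N)
    {a1 a2 a3 b1 b2 b3 : Fin n} (hb1 : b1 ∉ S) (hb2 : b2 ∉ S) (hb3 : b3 ∉ S)
    (hN : valence n N + (dl a1 + dl a2 + dl a3 + dl b1 + dl b2 + dl b3) = (1 + 2) • 1) :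
    mnr (psi L1 L2) N a1 a2 a3 b1 b2 b3 = 0 := by
  rcases hall_or hS (Γ := N) with ⟨M, hM, hMv⟩ | ⟨U, hU, hlt⟩
  · exact mnr_match hs hN hM hMv
  have h1 := bip_count_nb hNS hU
  have h2 := sum_defect hN U
  have h3 := sum_defect hN (nb N Sᶜ U)
  rw [if_neg (fun h => hb1 (hU h)), if_neg (fun h => hb2 (hU h)), if_neg (fun h => hb3 (hU h))]
      at h2
  have hmem : a1 ∈ U ∧ a2 ∈ U ∧ a3 ∈ U := by
    refine ⟨?_, ?_, ?_⟩ <;> by_contra h' <;> rw [if_neg h'] at h2 <;> split_ifs at h2 <;> omega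
  obtain ⟨h1U, h2U, h3U⟩ := hmem
  rw [if_pos h1U, if_pos h2U, if_pos h3U] at h2
  have hnb : b1 ∉ nb N Sᶜ U ∧ b2 ∉ nb N Sᶜ U ∧ b3 ∉ nb N Sᶜ U := by
    refine ⟨?_, ?_, ?_⟩ <;> intro h' <;> rw [if_pos h'] at h3 <;> omega
  obtain ⟨h1n, h2n, h3n⟩ := hnb
  have hcard : U.card = (nb N Sᶜ U).card + 1 := by omega
  have hext : N.countP (fun e => e.2 ∈ nb N Sᶜ U ∧ ¬ e.1 ∈ U) = 0 := by omega
  rw [Multiset.countP_eq_zero] at hext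
  set P := nb N Sᶜ U with hPdef
  have hPS : Disjoint P S := nb_disj _ _ _
  have hPU : Disjoint P U := Finset.disjoint_of_subset_right hU hPS
  have hN1 : ∀ e ∈ N, e.1 ∈ U ↔ e.2 ∈ P := by
    intro e he
    refine ⟨fun h => mem_nb.2 ⟨by simpa using (hNS e he).2, e.1, h, he⟩, fun h => ?_⟩
    by_contra h'
    exact hext e he ⟨h, h'⟩
  have hN2 : ∀ e ∈ N, e.1 ∈ P ∪ U ↔ e.2 ∈ P ∪ U := by
    intro e he
    have h4 : e.1 ∉ P := fun h => Finset.disjoint_left.1 hPS h (hNS e he).1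
    have h5 : e.2 ∉ U := fun h => (hNS e he).2 (hU h)
    simp only [Finset.mem_union, h4, h5, false_or, or_false]
    exact hN1 e he
  have hvi : ∀ i, valence n N i + ((if i = a1 then 1 else 0) + (if i = a2 then 1 else 0) +
      (if i = a3 then 1 else 0) + (if i = b1 then 1 else 0) + (if i = b2 then 1 else 0) +
      (if i = b3 then 1 else 0)) = 3 := fun i => by
    have := congrFun hN i
    simpa only [Pi.smul_apply, Pi.add_apply, dl_apply, smul_eq_mul, Pi.one_apply, mul_one] using this
  have hb1X : b1 ∉ P ∪ U := by simp only [Finset.mem_union, h1n, false_or]; exact fun h => hb1 (hU h)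
  have hb2X : b2 ∉ P ∪ U := by simp only [Finset.mem_union, h2n, false_or]; exact fun h => hb2 (hU h)
  have hb3X : b3 ∉ P ∪ U := by simp only [Finset.mem_union, h3n, false_or]; exact fun h => hb3 (hU h)
  -- the part of `N` on `X = P ∪ U`
  obtain ⟨N1, N2, N3, hNX, hx1, hx2, hx3⟩ := three_split (Γ := N.filter (fun e => e.1 ∈ P ∪ U))
    (P := P) (T := U) (a := a1) (a' := a2) (a'' := a3) hPU hcard (Or.inr fun e he => by
      rw [Multiset.mem_filter] at he
      have h4 : e.1 ∉ P := fun h => Finset.disjoint_left.1 hPS h (hNS e he.1).1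
      have h5 : e.1 ∈ U := by simpa [h4] using he.2
      exact ⟨h5, (hN1 e he.1).1 h5⟩) (by
      ext i
      simp only [Pi.add_apply, Pi.smul_apply, smul_eq_mul, val_filter hN2, dl_apply, ind_apply]
      have := hvi i
      by_cases hi : i ∈ P ∪ U
      · have g1 : i ≠ b1 := fun h => hb1X (h ▸ hi)
        have g2 : i ≠ b2 := fun h => hb2X (h ▸ hi)
        have g3 : i ≠ b3 := fun h => hb3X (h ▸ hi)
        rw [if_pos hi, if_pos hi]
        rw [if_neg g1, if_neg g2, if_neg g3] at this
        omega
      · have g1 : i ≠ a1 := fun h => hi (h ▸ Finset.mem_union_right _ h1U)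
        have g2 : i ≠ a2 := fun h => hi (h ▸ Finset.mem_union_right _ h2U)
        have g3 : i ≠ a3 := fun h => hi (h ▸ Finset.mem_union_right _ h3U)
        rw [if_neg hi, if_neg hi, if_neg g1, if_neg g2, if_neg g3]) h1U h2U h3U
  -- the part of `N` on the complement
  have hcomp : S \ U ∪ Sᶜ \ P = (P ∪ U)ᶜ := by
    ext i
    have h7 : i ∈ P → i ∉ S := fun h => Finset.disjoint_left.1 hPS h
    have h8 : i ∈ U → i ∈ S := fun h => hU h
    simp only [Finset.mem_union, Finset.mem_sdiff, Finset.mem_compl]; tauto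
  have hPSc : P ⊆ Sᶜ := nb_subset _ _ _
  have hN3 : ∀ e ∈ N, e.1 ∈ (P ∪ U)ᶜ ↔ e.2 ∈ (P ∪ U)ᶜ := fun e he => by
    rw [Finset.mem_compl, Finset.mem_compl, hN2 e he]
  obtain ⟨O1, O2, O3, hNZ, hz1, hz2, hz3⟩ := three_split
    (Γ := N.filter (fun e => e.1 ∈ (P ∪ U)ᶜ))
    (P := S \ U) (T := Sᶜ \ P) (a := b1) (a' := b2) (a'' := b3)
    (Finset.disjoint_of_subset_left Finset.sdiff_subset
      (Finset.disjoint_of_subset_right Finset.sdiff_subset disjoint_compl_right))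
    (by
      rw [Finset.card_sdiff_of_subset hU, Finset.card_sdiff_of_subset hPSc]
      have := Finset.card_le_card hU
      omega) (Or.inl fun e he => by
      rw [Multiset.mem_filter] at he
      have g1 := he.2
      have g2 := (hN3 e he.1).1 he.2
      have g3 := hNS e he.1
      simp only [Finset.mem_compl, Finset.mem_union, not_or, Finset.mem_sdiff] at g1 g2 ⊢
      exact ⟨⟨g3.1, g1.2⟩, g3.2, g2.1⟩) (by
      rw [hcomp]
      ext i
      simp only [Pi.add_apply, Pi.smul_apply, smul_eq_mul, val_filter hN3, dl_apply, ind_apply]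
      have := hvi i
      by_cases hi : i ∈ (P ∪ U)ᶜ
      · rw [Finset.mem_compl] at hi
        have g1 : i ≠ a1 := fun h => hi (h ▸ Finset.mem_union_right _ h1U)
        have g2 : i ≠ a2 := fun h => hi (h ▸ Finset.mem_union_right _ h2U)
        have g3 : i ≠ a3 := fun h => hi (h ▸ Finset.mem_union_right _ h3U)
        rw [← Finset.mem_compl] at hi
        rw [if_pos hi, if_pos hi]
        rw [if_neg g1, if_neg g2, if_neg g3] at this
        omega
      · rw [if_neg hi, if_neg hi]
        rw [Finset.mem_compl, not_not] at hi
        have g1 : i ≠ b1 := fun h => hb1X (h ▸ hi)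
        have g2 : i ≠ b2 := fun h => hb2X (h ▸ hi)
        have g3 : i ≠ b3 := fun h => hb3X (h ▸ hi)
        rw [if_neg g1, if_neg g2, if_neg g3])
    (by simp [hb1, h1n]) (by simp [hb2, h2n]) (by simp [hb3, h3n])
  rw [hcomp] at hz1 hz2 hz3
  have hXc : ind (P ∪ U) + ind (P ∪ U)ᶜ = 1 := by
    ext i; simp only [Pi.add_apply, ind_apply, Finset.mem_compl, Pi.one_apply]
    by_cases h : i ∈ P ∪ U <;> simp [h]
  have hNdec : N = N1 + (N2 + N3) + (O1 + (O2 + O3)) := by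
    rw [← hNX, ← hNZ]
    simp only [Finset.mem_compl]
    exact (Multiset.filter_add_not _ _).symm
  have hmatch : ∀ {a b N' O'}, valence n N' + dl a = ind (P ∪ U) →
      valence n O' + dl b = ind (P ∪ U)ᶜ → valence n ((a, b) ::ₘ (N' + O')) = 1 := by
    intro a b N' O' h h'
    rw [val_cons, val_add, ← hXc, ← h, ← h']; simp only; abel
  have hgm : ∀ a b (N' O' : Multiset (Fin n × Fin n)), gm k ((a, b) ::ₘ (N' + O')) =
      gm k N' * (gm k O' * br k a b) := fun a b N' O' => by
    rw [gm_cons, gm_add]; ring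
  have hpsi : ∀ c1 c2 c3 P1 P2 P3, valence n P1 + dl c1 = ind (P ∪ U)ᶜ →
      valence n P2 + dl c2 = ind (P ∪ U)ᶜ → valence n P3 + dl c3 = ind (P ∪ U)ᶜ →
      N = N1 + (N2 + N3) + (P1 + (P2 + P3)) →
      psi L1 L2 ((a1, c1) ::ₘ (a2, c2) ::ₘ (a3, c3) ::ₘ N) =
        L1 (gm k N1 * (gm k P1 * br k a1 c1)) * (L1 (gm k N2 * (gm k P2 * br k a2 c2)) *
          L1 (gm k N3 * (gm k P3 * br k a3 c3))) := by
    intro c1 c2 c3 P1 P2 P3 k1 k2 k3 hdec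
    have e1 : (a1, c1) ::ₘ (a2, c2) ::ₘ (a3, c3) ::ₘ N = (a1, c1) ::ₘ (N1 + P1) +
        ((a2, c2) ::ₘ (N2 + P2) + (a3, c3) ::ₘ (N3 + P3)) := by
      rw [hdec]
      simp only [← Multiset.singleton_add]; abel
    have v1 := hmatch hx1 k1
    have v2 := hmatch hx2 k2
    have v3 := hmatch hx3 k3
    rw [e1, psi_eq hs (by rw [val_add, val_add, v1, v2, v3]; rfl) (Multiset.le_add_right _ _) v1,
      add_tsub_cancel_left, gm_add, hm _ (gm_mem' _ v2) _ (gm_mem' _ (by rw [v3]; simp)),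
      hgm, hgm, hgm]
  have hodd : Odd (P ∪ U).card := by
    rw [Finset.card_union_of_disjoint hPU, hcard]; exact ⟨P.card, by omega⟩
  have hdet := det_three hb hm hodd (Finset.mem_union_right _ h3U) hx1 hx2 hx3 hz1 hz2 hz3
    (gm_mem N1) (gm_mem N2) (gm_mem N3) (gm_mem O1) (gm_mem O2) (gm_mem O3)
  simp only at hdet
  simp only [mnr]
  rw [hpsi b1 b2 b3 O1 O2 O3 hz1 hz2 hz3 hNdec,
    hpsi b1 b3 b2 O1 O3 O2 hz1 hz3 hz2 (by rw [hNdec]; abel),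
    hpsi b2 b1 b3 O2 O1 O3 hz2 hz1 hz3 (by rw [hNdec]; abel),
    hpsi b2 b3 b1 O2 O3 O1 hz2 hz3 hz1 (by rw [hNdec]; abel),
    hpsi b3 b1 b2 O3 O1 O2 hz3 hz1 hz2 (by rw [hNdec]; abel),
    hpsi b3 b2 b1 O3 O2 O1 hz3 hz2 hz1 (by rw [hNdec]; abel)]
  linear_combination hdet

end PtRel

/-! ### An alternating form in degree two -/

namespace PtRel

variable {k : Type} [Field k] {n : ℕ} {Q : Type} [CommRing Q] [Algebra k Q]

/-- The alternating form `λ'(f) λ''(g) - λ'(g) λ''(f)`, where `f = O [* b]`, `g = O' [* b']`,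
`λ'(f) = L₁(N' f(a))` and `λ''(f) = L₁(N'' f(a'))`. -/
noncomputable def xi (L1 : PtRing k n →ₗ[k] Q) (N' N'' : PtRing k n) (a a' b : Fin n)
    (O : PtRing k n) (b' : Fin n) (O' : PtRing k n) : Q :=
  L1 (N' * (O * br k a b)) * L1 (N'' * (O' * br k a' b'))
    - L1 (N' * (O' * br k a b')) * L1 (N'' * (O * br k a' b))

section
variable {L1 : PtRing k n →ₗ[k] Q} {N' N'' : PtRing k n} {a a' : Fin n}

lemma xi_anti (b : Fin n) (O : PtRing k n) (b' : Fin n) (O' : PtRing k n) :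
    xi L1 N' N'' a a' b O b' O' = - xi L1 N' N'' a a' b' O' b O := by
  simp only [xi]; ring

lemma xi_add (b : Fin n) (O O2 : PtRing k n) (b' : Fin n) (O' : PtRing k n) :
    xi L1 N' N'' a a' b (O + O2) b' O' =
      xi L1 N' N'' a a' b O b' O' + xi L1 N' N'' a a' b O2 b' O' := by
  simp only [xi, mul_add, add_mul, map_add]; ring

lemma xi_smul (c : k) (b : Fin n) (O : PtRing k n) (b' : Fin n) (O' : PtRing k n) :
    xi L1 N' N'' a a' b (c • O) b' O' = c • xi L1 N' N'' a a' b O b' O' := by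
  simp only [xi, mul_smul_comm, smul_mul_assoc, map_smul, smul_sub]

lemma xi_neg (b : Fin n) (O : PtRing k n) (b' : Fin n) (O' : PtRing k n) :
    xi L1 N' N'' a a' b (-O) b' O' = - xi L1 N' N'' a a' b O b' O' := by
  simp only [xi, mul_neg, neg_mul, map_neg]; ring

/-- The form inherits the Plücker relation, applied to the edge at its free end. -/
lemma xi_plucker (b c d : Fin n) (O : PtRing k n) (b' : Fin n) (O' : PtRing k n) :
    xi L1 N' N'' a a' b (O * br k c d) b' O' - xi L1 N' N'' a a' c (O * br k b d) b' O'
      + xi L1 N' N'' a a' d (O * br k b c) b' O' = 0 := by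
  have h1 : L1 (N' * (O * br k c d * br k a b)) - L1 (N' * (O * br k b d * br k a c))
      + L1 (N' * (O * br k b c * br k a d)) = 0 := by
    rw [← map_sub, ← map_add, ← map_zero L1]
    congr 1
    linear_combination (N' * O) * plucker (k := k) a b c d
  have h2 : L1 (N'' * (O * br k c d * br k a' b)) - L1 (N'' * (O * br k b d * br k a' c))
      + L1 (N'' * (O * br k b c * br k a' d)) = 0 := by
    rw [← map_sub, ← map_add, ← map_zero L1]
    congr 1
    linear_combination (N'' * O) * plucker (k := k) a' b c d
  simp only [xi]
  linear_combination L1 (N'' * (O' * br k a' b')) * h1 - L1 (N' * (O' * br k a b')) * h2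

/-- A common closed part `P`, `P'` of the two arguments may be exchanged. -/
lemma xi_exch
    (hb : HBin L1) {x x' X w : Fin n → ℕ} (hx : x + dl a = X) (hx' : x' + dl a' = X)
    (hw : X + w = 1) (hN' : N' ∈ R k x) (hN'' : N'' ∈ R k x')
    {b c : Fin n} {p q y : Fin n → ℕ} {C D P P' : PtRing k n}
    (hp : p + y + dl b = w) (hq : q + y + dl c = w) (hC : C ∈ R k p) (hD : D ∈ R k q)
    (hP : P ∈ R k y) (hP' : P' ∈ R k y) :
    xi L1 N' N'' a a' b (C * P) c (D * P') = xi L1 N' N'' a a' b (C * P') c (D * P) := by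
  have hpq : p + dl b = q + dl c := by
    have : y + (p + dl b) = y + (q + dl c) := by
      rw [show y + (p + dl b) = p + y + dl b by abel, hp, ← hq]; abel
    exact add_left_cancel this
  have h1 := hb (X + (p + dl b)) y (by rw [← hw, ← hp]; abel)
    (N' * C * br k a b) (R_mul' (R_mul hN' hC) (br_mem a b) (by rw [← hx]; abel))
    (N'' * D * br k a' c) (R_mul' (R_mul hN'' hD) (br_mem a' c) (by rw [hpq, ← hx']; abel))
    P hP P' hP'
  have h2 := hb (X + (p + dl b)) y (by rw [← hw, ← hp]; abel)
    (N' * D * br k a c) (R_mul' (R_mul hN' hD) (br_mem a c) (by rw [hpq, ← hx]; abel))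
    (N'' * C * br k a' b) (R_mul' (R_mul hN'' hC) (br_mem a' b) (by rw [← hx']; abel))
    P hP P' hP'
  simp only [xi]
  rw [show N' * (C * P * br k a b) = N' * C * br k a b * P by ring,
    show N'' * (D * P' * br k a' c) = N'' * D * br k a' c * P' by ring,
    show N' * (C * P' * br k a b) = N' * C * br k a b * P' by ring,
    show N'' * (D * P * br k a' c) = N'' * D * br k a' c * P by ring,
    show N' * (D * P' * br k a c) = N' * D * br k a c * P' by ring,
    show N'' * (C * P * br k a' b) = N'' * C * br k a' b * P by ring,
    show N' * (D * P * br k a c) = N' * D * br k a c * P by ring,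
    show N'' * (C * P' * br k a' b) = N'' * C * br k a' b * P' by ring]
  linear_combination h1 + h2

/-- The form vanishes when both arguments are open at the same vertex. -/
lemma xi_self
    (hb : HBin L1) {x x' X w : Fin n → ℕ} (hx : x + dl a = X) (hx' : x' + dl a' = X)
    (hw : X + w = 1) (hN' : N' ∈ R k x) (hN'' : N'' ∈ R k x')
    {b : Fin n} {y : Fin n → ℕ} {O O' : PtRing k n} (hy : y + dl b = w)
    (hO : O ∈ R k y) (hO' : O' ∈ R k y) : xi L1 N' N'' a a' b O b O' = 0 := by
  have h := hb (X + dl b) y (by rw [← hw, ← hy]; abel)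
    (N' * br k a b) (R_mul' hN' (br_mem a b) (by rw [← hx]; abel))
    (N'' * br k a' b) (R_mul' hN'' (br_mem a' b) (by rw [← hx']; abel)) O hO O' hO'
  simp only [xi]
  rw [show N' * (O * br k a b) = N' * br k a b * O by ring,
    show N'' * (O' * br k a' b) = N'' * br k a' b * O' by ring,
    show N' * (O' * br k a b) = N' * br k a b * O' by ring,
    show N'' * (O * br k a' b) = N'' * br k a' b * O by ring]
  linear_combination h

/-- The shift: an edge `[d c]` at the open end `d` of the second factor can be moved. -/
lemma xi_shift
    (hb : HBin L1) {x x' X w : Fin n → ℕ} (hx : x + dl a = X) (hx' : x' + dl a' = X)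
    (hw : X + w = 1) (hN' : N' ∈ R k x) (hN'' : N'' ∈ R k x')
    {b c d : Fin n} {y y' : Fin n → ℕ} {O O' : PtRing k n}
    (hy : y + (dl b + dl c) + dl d = w) (hy' : y' + dl d = w) (hO : O ∈ R k y) (hO' : O' ∈ R k y') :
    xi L1 N' N'' a a' b (O * br k d c) d O' = - xi L1 N' N'' a a' c (O * br k b d) d O' := by
  have h1 := xi_plucker (L1 := L1) (N' := N') (N'' := N'') (a := a) (a' := a') b d c O d O'
  have h2 := xi_self hb hx hx' hw hN' hN'' hy' (R_mul' hO (br_mem b c)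
    (by exact add_right_cancel (hy'.trans hy.symm))) hO'
  linear_combination h1 + h2

/-- The exchange of the two ends `c`, `d` of an even component. -/
lemma xi_claim
    (hb : HBin L1) {x x' X w : Fin n → ℕ} (hx : x + dl a = X) (hx' : x' + dl a' = X)
    (hw : X + w = 1) (hN' : N' ∈ R k x) (hN'' : N'' ∈ R k x')
    (m : ℕ) : ∀ {c d u v : Fin n} {y p q : Fin n → ℕ} {A B P P' : PtRing k n},
    ∑ i, y i ≤ m → p + dl u + (y + dl c + dl d) = w → q + dl v + (y + dl c + dl d) = w →
    A ∈ R k p → B ∈ R k q → P ∈ R k (y + dl c + dl d) → P' ∈ R k y →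
    xi L1 N' N'' a a' u (A * P) c (B * P' * br k d v) =
      xi L1 N' N'' a a' v (B * P) d (A * P' * br k c u) := by
  induction m using Nat.strong_induction_on with
  | _ m ih =>
  intro c d u v y p q A B P P' hm hp hq hA hB hP hP'
  have key : R k (y + dl c + dl d) ≤
      { carrier := {P | xi L1 N' N'' a a' u (A * P) c (B * P' * br k d v) =
          xi L1 N' N'' a a' v (B * P) d (A * P' * br k c u)}
        add_mem' := fun {P1 P2} h1 h2 => by
          simp only [Set.mem_ofPred_eq] at h1 h2 ⊢
          rw [mul_add, xi_add, mul_add, xi_add, h1, h2]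
        zero_mem' := by simp [xi]
        smul_mem' := fun r P h1 => by
          simp only [Set.mem_ofPred_eq] at h1 ⊢
          rw [mul_smul_comm, xi_smul, mul_smul_comm, xi_smul, h1] : Submodule k (PtRing k n)} := by
    refine R_extract c (by simp [dl_apply]) _ fun z v' G hv hG hzc => ?_
    have hv1 : y + dl d = dl z + v' := by
      have : dl c + (y + dl d) = dl c + (dl z + v') := by
        rw [show dl c + (y + dl d) = y + dl c + dl d by abel, hv]; abel
      exact add_left_cancel this
    change xi L1 N' N'' a a' u (A * (br k c z * G)) c (B * P' * br k d v) =
          xi L1 N' N'' a a' v (B * (br k c z * G)) d (A * P' * br k c u)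
    by_cases hzd : z = d
    · subst hzd
      have hv2 : v' = y := by
        have : dl z + v' = dl z + y := by rw [← hv1]; abel
        exact add_left_cancel this
      subst hv2
      have e1 := xi_shift hb hx hx' hw hN' hN'' (b := u) (c := z) (d := c) (y := p + v')
        (y' := q + v' + (dl z + dl v)) (O := A * G) (O' := B * P' * br k z v)
        (by rw [← hp]; abel) (by rw [← hq]; abel) (R_mul hA hG) (R_mul (R_mul hB hP') (br_mem z v))
      have e2 := xi_shift hb hx hx' hw hN' hN'' (b := c) (c := v) (d := z) (y := q + v')
        (y' := p + v' + (dl u + dl c)) (O := B * P') (O' := A * G * br k u c)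
        (by rw [← hq]; abel) (by rw [← hp]; abel) (R_mul hB hP') (R_mul (R_mul hA hG) (br_mem u c))
      have e3 := xi_exch hb hx hx' hw hN' hN'' (b := v) (c := z) (p := q + (dl c + dl z))
        (q := p + (dl u + dl c)) (y := v') (C := B * br k c z) (D := A * br k u c) (P := G)
        (P' := P') (by rw [← hq]; abel) (by rw [← hp]; abel) (R_mul hB (br_mem _ _))
        (R_mul hA (br_mem _ _)) hG hP'
      rw [show A * (br k c z * G) = A * G * br k c z by ring, e1, xi_anti, neg_neg, e2,
        show B * P' * br k c z = B * br k c z * P' by ring,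
        show A * G * br k u c = A * br k u c * G by ring, ← e3,
        show B * (br k c z * G) = B * br k c z * G by ring,
        xi_anti v (B * br k c z * G) z, neg_neg, br_swap u c,
        show A * P' * -br k u c = -(A * br k u c * P') by ring, xi_anti v, xi_neg, neg_neg]
    · have hyz : 0 < y z := by
        have := congrFun hv1 z
        simp only [Pi.add_apply, dl_apply, if_neg hzd, if_pos] at this
        omega
      obtain ⟨y', rfl⟩ := exists_sub_dl hyz
      have hv2 : v' = y' + dl d := by
        have : dl z + v' = dl z + (y' + dl d) := by rw [← hv1]; abel
        exact add_left_cancel this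
      subst hv2
      have key2 : R k (dl z + y') ≤
        { carrier := {P' | xi L1 N' N'' a a' u (A * (br k c z * G)) c (B * P' * br k d v) =
            xi L1 N' N'' a a' v (B * (br k c z * G)) d (A * P' * br k c u)}
          add_mem' := fun {P1 P2} h1 h2 => by
            simp only [Set.mem_ofPred_eq] at h1 h2 ⊢
            rw [mul_add, add_mul, xi_anti, xi_add, mul_add, add_mul, xi_anti v, xi_add]
            rw [xi_anti, xi_anti v] at h1 h2
            linear_combination h1 + h2
          zero_mem' := by simp [xi]
          smul_mem' := fun r P h1 => by
            simp only [Set.mem_ofPred_eq] at h1 ⊢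
            rw [mul_smul_comm, smul_mul_assoc, xi_anti, xi_smul, mul_smul_comm, smul_mul_assoc,
              xi_anti v, xi_smul]
            rw [xi_anti, xi_anti v, neg_inj] at h1
            rw [h1] : Submodule k (PtRing k n)} := by
        refine R_extract z (by simp [dl_apply]) _ fun t v2 G2 hv2 hG2 htz => ?_
        have hy' : y' = dl t + v2 := by
          have : dl z + y' = dl z + (dl t + v2) := by rw [hv2]; abel
          exact add_left_cancel this
        subst hy'
        change xi L1 N' N'' a a' u (A * (br k c z * G)) c (B * (br k z t * G2) * br k d v) =
            xi L1 N' N'' a a' v (B * (br k c z * G)) d (A * (br k z t * G2) * br k c u)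
        have e1 := xi_shift hb hx hx' hw hN' hN'' (b := u) (c := z) (d := c)
          (y := p + (dl t + v2 + dl d))
          (y' := q + (dl z + dl t + v2) + (dl d + dl v)) (O := A * G)
          (O' := B * (br k z t * G2) * br k d v)
          (by rw [← hp]; abel) (by rw [← hq]; abel) (R_mul hA hG)
          (R_mul (R_mul hB (R_mul (br_mem _ _) hG2)) (br_mem d v))
        have e2 := xi_shift hb hx hx' hw hN' hN'' (b := c) (c := t) (d := z)
          (y := q + v2 + (dl d + dl v))
          (y' := p + (dl t + v2 + dl d) + (dl u + dl c)) (O := B * G2 * br k d v)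
          (O' := A * G * br k u c)
          (by rw [← hq]; abel) (by rw [← hp]; abel) (R_mul (R_mul hB hG2) (br_mem d v))
          (R_mul (R_mul hA hG) (br_mem u c))
        have hsum : ∑ i, v2 i < m := by
          have h1 : ∑ i, (dl z + (dl t + v2)) i = 1 + (1 + ∑ i, v2 i) := by
            simp only [Pi.add_apply, Finset.sum_add_distrib, sum_dl_univ]
          omega
        have e3 := ih _ hsum (c := t) (d := d) (u := z) (v := v) (y := v2) (p := p + (dl u + dl c))
          (q := q + (dl c + dl z)) (A := A * br k u c) (B := B * br k c z) (P := G) (P' := G2)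
          le_rfl (by rw [← hp]; abel) (by rw [← hq]; abel) (R_mul hA (br_mem _ _))
          (R_mul hB (br_mem _ _)) (R_cast hG (by abel)) hG2
        rw [show A * (br k c z * G) = A * G * br k c z by ring, e1, xi_anti, neg_neg,
          show B * (br k z t * G2) * br k d v = B * G2 * br k d v * br k z t by ring, e2,
          xi_anti, neg_neg, show A * G * br k u c = A * br k u c * G by ring,
          show B * G2 * br k d v * br k c z = B * br k c z * G2 * br k d v by ring, e3,
          show B * (br k c z * G) = B * br k c z * G by ring]
        congr 1
        rw [br_swap u c, br_swap z t]; ring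
      exact key2 hP'
  exact key hP

end

end PtRel

/-! ### Minor relations in degree two: disjoint components -/

namespace PtRel

variable {k : Type} [Field k] {n : ℕ} {Q : Type} [CommRing Q] [Algebra k Q]

/-- The minor relation in degree two for a graph that splits into parts on `X`, `Y`, `Z` with
defects `{a1, a3}`, `{a2, b1}`, `{b2, b3}`: up to Plücker relations it is `xi_claim`. -/
lemma mnr_zero_core {L1 : PtRing k n →ₗ[k] Q} (hb : HBin L1) (hs : ∀ y, Star 0 L1 L1 y)
    {N N' N'' C1 C2 E1 E2 : Multiset (Fin n × Fin n)} {X Y Z : Fin n → ℕ}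
    {a1 a2 a3 b1 b2 b3 : Fin n} (hXYZ : X + Y + Z = 1)
    (hN' : valence n N' + dl a1 = X) (hN'' : valence n N'' + dl a3 = X)
    (hC1 : valence n C1 + dl b2 = Z) (hC2 : valence n C2 + dl b3 = Z)
    (hE1 : valence n E1 + dl a2 + dl b1 = Y) (hE2 : valence n E2 = Y)
    (hN : N = N' + N'' + (C1 + C2) + (E1 + E2)) :
    mnr (psi L1 L1) N a1 a2 a3 b1 b2 b3 = 0 := by
  have hpsi : ∀ Γ M1 M2, Γ = M1 + M2 → valence n M1 = 1 → valence n M2 = 1 →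
      psi L1 L1 Γ = L1 (gm k M1) * L1 (gm k M2) := by
    rintro _ M1 M2 rfl h1 h2
    rw [psi_eq hs (by rw [val_add, h1, h2]; rfl) (Multiset.le_add_right _ _) h1,
      add_tsub_cancel_left]
  have g2 : ∀ (a b : Fin n) (A B C : Multiset (Fin n × Fin n)),
      gm k ((a, b) ::ₘ (A + B + C)) = gm k A * (gm k B * gm k C * br k a b) := by
    intro a b A B C; rw [gm_cons, gm_add, gm_add]; ring
  have g3 : ∀ (a b c d : Fin n) (A B C : Multiset (Fin n × Fin n)),
      gm k ((a, b) ::ₘ (c, d) ::ₘ (A + B + C)) =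
        gm k A * (gm k B * gm k C * br k c d * br k a b) := by
    intro a b c d A B C; rw [gm_cons, gm_cons, gm_add, gm_add]; ring
  have v2 : ∀ {a b : Fin n} {A B C : Multiset (Fin n × Fin n)}, valence n A + dl a = X →
      valence n B + dl b = Z → valence n C = Y → valence n ((a, b) ::ₘ (A + B + C)) = 1 := by
    intro a b A B C h1 h2 h3
    rw [val_cons, val_add, val_add, ← hXYZ, ← h1, ← h2, ← h3]; simp only; abel
  have v3 : ∀ {a b c d : Fin n} {A B C : Multiset (Fin n × Fin n)}, valence n A + dl a = X →
      valence n B + dl d = Z → valence n C + dl c + dl b = Y →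
      valence n ((a, b) ::ₘ (c, d) ::ₘ (A + B + C)) = 1 := by
    intro a b c d A B C h1 h2 h3
    rw [val_cons, val_cons, val_add, val_add, ← hXYZ, ← h1, ← h2, ← h3]; simp only; abel
  have v4 : ∀ {a b c d : Fin n} {A B C : Multiset (Fin n × Fin n)}, valence n A + dl a = X →
      valence n B + dl b = Z → valence n C + dl c + dl d = Y →
      valence n ((a, b) ::ₘ (c, d) ::ₘ (A + B + C)) = 1 := by
    intro a b c d A B C h1 h2 h3
    rw [val_cons, val_cons, val_add, val_add, ← hXYZ, ← h1, ← h2, ← h3]; simp only; abel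
  have f1 := hpsi ((a1, b1) ::ₘ (a2, b2) ::ₘ (a3, b3) ::ₘ N)
    ((a1, b1) ::ₘ (a2, b2) ::ₘ (N' + C1 + E1)) ((a3, b3) ::ₘ (N'' + C2 + E2))
    (by rw [hN]; simp only [← Multiset.singleton_add]; abel) (v3 hN' hC1 hE1) (v2 hN'' hC2 hE2)
  have f2 := hpsi ((a1, b1) ::ₘ (a2, b3) ::ₘ (a3, b2) ::ₘ N)
    ((a1, b1) ::ₘ (a2, b3) ::ₘ (N' + C2 + E1)) ((a3, b2) ::ₘ (N'' + C1 + E2))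
    (by rw [hN]; simp only [← Multiset.singleton_add]; abel) (v3 hN' hC2 hE1) (v2 hN'' hC1 hE2)
  have f3 := hpsi ((a1, b2) ::ₘ (a2, b1) ::ₘ (a3, b3) ::ₘ N)
    ((a1, b2) ::ₘ (a2, b1) ::ₘ (N' + C1 + E1)) ((a3, b3) ::ₘ (N'' + C2 + E2))
    (by rw [hN]; simp only [← Multiset.singleton_add]; abel) (v4 hN' hC1 hE1) (v2 hN'' hC2 hE2)
  have f4 := hpsi ((a1, b2) ::ₘ (a2, b3) ::ₘ (a3, b1) ::ₘ N)
    ((a1, b2) ::ₘ (N' + C1 + E2)) ((a3, b1) ::ₘ (a2, b3) ::ₘ (N'' + C2 + E1))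
    (by rw [hN]; simp only [← Multiset.singleton_add]; abel) (v2 hN' hC1 hE2) (v3 hN'' hC2 hE1)
  have f5 := hpsi ((a1, b3) ::ₘ (a2, b1) ::ₘ (a3, b2) ::ₘ N)
    ((a1, b3) ::ₘ (N' + C2 + E2)) ((a3, b2) ::ₘ (a2, b1) ::ₘ (N'' + C1 + E1))
    (by rw [hN]; simp only [← Multiset.singleton_add]; abel) (v2 hN' hC2 hE2) (v4 hN'' hC1 hE1)
  have f6 := hpsi ((a1, b3) ::ₘ (a2, b2) ::ₘ (a3, b1) ::ₘ N)
    ((a1, b3) ::ₘ (N' + C2 + E2)) ((a3, b1) ::ₘ (a2, b2) ::ₘ (N'' + C1 + E1))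
    (by rw [hN]; simp only [← Multiset.singleton_add]; abel) (v2 hN' hC2 hE2) (v3 hN'' hC1 hE1)
  have hE2' : valence n E2 = valence n E1 + dl a2 + dl b1 := by rw [hE2, hE1]
  have h1 := xi_claim hb hN' hN'' (w := Y + Z) (by rw [← hXYZ]; abel) (gm_mem N') (gm_mem N'')
    (∑ i, valence n E1 i) (c := a2) (d := b1) (u := b3) (v := b2) (y := valence n E1)
    (p := valence n C2) (q := valence n C1) (A := gm k C2) (B := gm k C1) (P := gm k E2)
    (P' := gm k E1) le_rfl (by rw [hC2, hE1, add_comm]) (by rw [hC1, hE1, add_comm])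
    (gm_mem _) (gm_mem _) (gm_mem' _ hE2') (gm_mem _)
  have h2 := xi_plucker (L1 := L1) (N' := gm k N') (N'' := gm k N'') (a := a1) (a' := a3)
    b1 a2 b2 (gm k C1 * gm k E1) b3 (gm k C2 * gm k E2)
  have h3 : xi L1 (gm k N') (gm k N'') a1 a3 b2 (gm k C1 * gm k E1 * br k b1 a2) b3
      (gm k C2 * gm k E2) = - xi L1 (gm k N') (gm k N'') a1 a3 b2 (gm k C1 * gm k E1 * br k a2 b1) b3
      (gm k C2 * gm k E2) := by
    rw [br_swap a2 b1, mul_neg, xi_neg]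
  rw [xi_anti] at h1
  simp only [mnr, f1, f2, f3, f4, f5, f6, g2, g3]
  simp only [xi] at h1 h2 h3
  linear_combination h2 - h3 - h1

lemma closed_compl {N : Multiset (Fin n × Fin n)} {X : Finset (Fin n)}
    (h : ∀ e ∈ N, e.1 ∈ X ↔ e.2 ∈ X) : ∀ e ∈ N, e.1 ∈ Xᶜ ↔ e.2 ∈ Xᶜ := fun e he => by
  rw [Finset.mem_compl, Finset.mem_compl, h e he]

/-- The valence of the part of `N` on a union of components `C`. -/
lemma val_closed {e : ℕ} {N : Multiset (Fin n × Fin n)} {a1 a2 a3 b1 b2 b3 : Fin n}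
    (hN : valence n N + (dl a1 + dl a2 + dl a3 + dl b1 + dl b2 + dl b3) = (e + 2) • 1)
    {C : Finset (Fin n)} (hC : ∀ e ∈ N, e.1 ∈ C ↔ e.2 ∈ C) :
    valence n (N.filter (fun e => e.1 ∈ C)) + ((if a1 ∈ C then dl a1 else 0) +
      (if a2 ∈ C then dl a2 else 0) + (if a3 ∈ C then dl a3 else 0) + (if b1 ∈ C then dl b1 else 0)
      + (if b2 ∈ C then dl b2 else 0) + (if b3 ∈ C then dl b3 else 0)) = (e + 2) • ind C := by
  ext i
  have h : ∀ a : Fin n, (if a ∈ C then dl a else 0) i = if i ∈ C then dl a i else 0 := by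
    intro a
    by_cases hia : i = a
    · subst hia; by_cases hi : i ∈ C <;> simp [hi]
    · by_cases ha : a ∈ C <;> simp [ha, hia, dl_apply]
  simp only [Pi.add_apply, h, val_filter hC, Pi.smul_apply, ind_apply]
  have := congrFun hN i
  simp only [Pi.add_apply, Pi.smul_apply, Pi.one_apply] at this
  by_cases hi : i ∈ C
  · simpa only [hi, if_true] using this
  · simp [hi]

/-- On a union of components the two sides of a bipartite graph have equal total valence. -/
lemma closed_balance {S C : Finset (Fin n)} {N : Multiset (Fin n × Fin n)} (hNS : Bip S N)
    (hC : ∀ e ∈ N, e.1 ∈ C ↔ e.2 ∈ C) :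
    ∑ i ∈ C ∩ S, valence n N i = ∑ i ∈ C \ S, valence n N i := by
  rw [bip_count_left hNS Finset.inter_subset_right, bip_count_right hNS Finset.sdiff_disjoint]
  refine Multiset.countP_congr rfl fun e he => ?_
  have h1 := hNS e he
  have h2 := hC e he
  simp only [Finset.mem_inter, Finset.mem_sdiff, h1.1, h1.2, h2, and_true, not_false_eq_true]

/-- The factorisation required in `mnr_zero_core` exists when `X` and `Z` are unions of components
containing exactly the defects `a1, a3` and `b2, b3`. -/
lemma mnr_zero_struct {L1 : PtRing k n →ₗ[k] Q} (hb : HBin L1) (hs : ∀ y, Star 0 L1 L1 y)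
    {S : Finset (Fin n)} {N : Multiset (Fin n × Fin n)} (hNS : Bip S N)
    {a1 a2 a3 b1 b2 b3 : Fin n} (ha1 : a1 ∈ S) (ha2 : a2 ∈ S) (ha3 : a3 ∈ S)
    (hb1 : b1 ∉ S) (hb2 : b2 ∉ S) (hb3 : b3 ∉ S)
    (hN : valence n N + (dl a1 + dl a2 + dl a3 + dl b1 + dl b2 + dl b3) = (0 + 2) • 1)
    {X Z : Finset (Fin n)} (hX : ∀ e ∈ N, e.1 ∈ X ↔ e.2 ∈ X) (hZ : ∀ e ∈ N, e.1 ∈ Z ↔ e.2 ∈ Z)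
    (hXZ : Disjoint X Z) (hX1 : a1 ∈ X) (hX2 : a2 ∉ X) (hX3 : a3 ∈ X) (hXb1 : b1 ∉ X)
    (hXb2 : b2 ∉ X) (hXb3 : b3 ∉ X) (hZ1 : a1 ∉ Z) (hZ2 : a2 ∉ Z) (hZ3 : a3 ∉ Z)
    (hZb1 : b1 ∉ Z) (hZb2 : b2 ∈ Z) (hZb3 : b3 ∈ Z) :
    mnr (psi L1 L1) N a1 a2 a3 b1 b2 b3 = 0 := by
  set Y := (X ∪ Z)ᶜ with hY
  have hYc : ∀ e ∈ N, e.1 ∈ Y ↔ e.2 ∈ Y := fun e he => by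
    simp only [hY, Finset.mem_compl, Finset.mem_union, hX e he, hZ e he]
  have hY1 : a1 ∉ Y := by simp [hY, hX1]
  have hY2 : a2 ∈ Y := by simp [hY, hX2, hZ2]
  have hY3 : a3 ∉ Y := by simp [hY, hX3]
  have hYb1 : b1 ∈ Y := by simp [hY, hXb1, hZb1]
  have hYb2 : b2 ∉ Y := by simp [hY, hZb2]
  have hYb3 : b3 ∉ Y := by simp [hY, hZb3]
  have vX := val_closed hN hX
  have vY := val_closed hN hYc
  have vZ := val_closed hN hZ
  simp only [hX1, hX2, hX3, hXb1, hXb2, hXb3, if_true, if_false, add_zero, zero_add] at vX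
  simp only [hY1, hY2, hY3, hYb1, hYb2, hYb3, if_true, if_false, add_zero, zero_add] at vY
  simp only [hZ1, hZ2, hZ3, hZb1, hZb2, hZb3, if_true, if_false, add_zero, zero_add] at vZ
  have bX := closed_balance hNS hX
  have bY := closed_balance hNS hYc
  have bZ := closed_balance hNS hZ
  have sX1 := sum_defect hN (X ∩ S)
  have sX2 := sum_defect hN (X \ S)
  have sY1 := sum_defect hN (Y ∩ S)
  have sY2 := sum_defect hN (Y \ S)
  have sZ1 := sum_defect hN (Z ∩ S)
  have sZ2 := sum_defect hN (Z \ S)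
  simp only [Finset.mem_inter, Finset.mem_sdiff, ha1, ha2, ha3, hb1, hb2, hb3, hX1, hX2, hX3, hXb1,
    hXb2, hXb3, hY1, hY2, hY3, hYb1, hYb2, hYb3, hZ1, hZ2, hZ3, hZb1, hZb2, hZb3, and_true,
    and_false, not_true_eq_false, not_false_eq_true, if_true, if_false] at sX1 sX2 sY1 sY2 sZ1 sZ2
  have hsd : ∀ C : Finset (Fin n), Disjoint (C \ S) (C ∩ S) := fun C =>
    Finset.disjoint_of_subset_right Finset.inter_subset_right Finset.sdiff_disjoint
  have hu : ∀ C : Finset (Fin n), C \ S ∪ C ∩ S = C := fun C => Finset.sdiff_union_inter _ _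
  have hu' : ∀ C : Finset (Fin n), C ∩ S ∪ C \ S = C := fun C => by rw [Finset.union_comm, hu]
  have hmem : ∀ C : Finset (Fin n), (∀ e ∈ N, e.1 ∈ C ↔ e.2 ∈ C) →
      ∀ e ∈ N.filter (fun e => e.1 ∈ C), e.1 ∈ C ∩ S ∧ e.2 ∈ C \ S := by
    intro C hC e he
    rw [Multiset.mem_filter] at he
    have := hNS e he.1
    simp only [Finset.mem_inter, Finset.mem_sdiff]
    exact ⟨⟨he.2, this.1⟩, (hC e he.1).1 he.2, this.2⟩
  obtain ⟨N', N'', hNX, hN', hN''⟩ := two_split (Γ := N.filter (fun e => e.1 ∈ X)) (P := X \ S)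
    (T := X ∩ S) (a := a1) (a' := a3) (hsd X) (by omega) (Or.inr (hmem X hX))
    (by rw [hu, vX]) (by simp [*]) (by simp [*])
  obtain ⟨C1, C2, hNZ, hC1, hC2⟩ := two_split (Γ := N.filter (fun e => e.1 ∈ Z)) (P := Z ∩ S)
    (T := Z \ S) (a := b2) (a' := b3) (hsd Z).symm (by omega) (Or.inl (hmem Z hZ))
    (by rw [hu', vZ]) (by simp [*]) (by simp [*])
  rw [hu] at hN' hN''
  rw [hu'] at hC1 hC2
  have vYi : ∀ i, valence n (N.filter (fun e => e.1 ∈ Y)) i ≤ 2 := fun i => by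
    have := congrFun vY i
    simp only [Pi.add_apply, Pi.smul_apply, ind_apply, smul_eq_mul] at this
    split_ifs at this <;> omega
  obtain ⟨E2, hE2, hE2v, _⟩ := hall (N.filter (fun e => e.1 ∈ Y)) (Y ∩ S) (Y \ S) (hsd Y).symm
    (by omega) (by
    intro U hU
    have hb' : Bip S (N.filter (fun e => e.1 ∈ Y)) := bip_mono hNS (Multiset.filter_le _ _)
    have h1 := bip_count_left hb' (hU.trans Finset.inter_subset_right)
    have h2 := bip_count_right hb' (U := nb (N.filter (fun e => e.1 ∈ Y)) (Y \ S) U)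
      (Finset.disjoint_of_subset_left (nb_subset _ _ _) Finset.sdiff_disjoint)
    have h3 : (N.filter (fun e => e.1 ∈ Y)).countP (fun e => e.1 ∈ U) ≤
        (N.filter (fun e => e.1 ∈ Y)).countP
          (fun e => e.2 ∈ nb (N.filter (fun e => e.1 ∈ Y)) (Y \ S) U) :=
      countP_le fun e he h => mem_nb.2 ⟨(hmem Y hYc e he).2, e.1, h, he⟩
    have h4 : ∑ i ∈ nb (N.filter (fun e => e.1 ∈ Y)) (Y \ S) U,
        valence n (N.filter (fun e => e.1 ∈ Y)) i ≤
          (nb (N.filter (fun e => e.1 ∈ Y)) (Y \ S) U).card * 2 :=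
      Finset.sum_le_card_nsmul _ _ _ fun i _ => vYi i
    have h5 := Finset.sum_congr (rfl : U = U) fun i _ => congrFun vY i
    simp only [Pi.add_apply, Finset.sum_add_distrib, sum_dl, Pi.smul_apply, smul_eq_mul,
      ← Finset.mul_sum, sum_ind] at h5
    rw [Finset.inter_eq_left.2 (hU.trans Finset.inter_subset_left),
      if_neg (fun h => hb1 (Finset.mem_inter.1 (hU h)).2)] at h5
    split_ifs at h5 <;> omega)
  rw [hu'] at hE2v
  have hYsplit := val_sub hE2
  refine mnr_zero_core hb hs (X := ind X) (Y := ind Y) (Z := ind Z) (N' := N') (N'' := N'')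
    (C1 := C1) (C2 := C2) (E1 := N.filter (fun e => e.1 ∈ Y) - E2) (E2 := E2) ?_ hN' hN'' hC1 hC2
    ?_ hE2v ?_
  · ext i
    have h7 : i ∈ X → i ∉ Z := fun h => Finset.disjoint_left.1 hXZ h
    simp only [Pi.add_apply, ind_apply, hY, Finset.mem_compl, Finset.mem_union, Pi.one_apply]
    by_cases h1 : i ∈ X <;> by_cases h2 : i ∈ Z
    · exact absurd h2 (h7 h1)
    all_goals simp [h1, h2]
  · have : ind Y + (valence n (N.filter (fun e => e.1 ∈ Y) - E2) + dl a2 + dl b1) =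
        ind Y + ind Y := by
      rw [← two_smul ℕ (ind Y)]
      conv_lhs => rw [← hE2v]
      rw [← vY, hYsplit]; abel
    exact add_left_cancel this
  · rw [← hNX, ← hNZ, tsub_add_cancel_of_le hE2]
    conv_lhs => rw [← Multiset.filter_add_not (fun e : Fin n × Fin n => e.1 ∈ X) N,
      ← Multiset.filter_add_not (fun e : Fin n × Fin n => e.1 ∈ Z)
        (Multiset.filter (fun e => ¬ e.1 ∈ X) N)]
    rw [Multiset.filter_filter, Multiset.filter_filter, add_assoc]
    congr 2
    · refine Multiset.filter_congr fun e _ => ⟨fun h => h.1, fun h => ⟨h, ?_⟩⟩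
      exact fun h' => Finset.disjoint_left.1 hXZ h' h
    · refine Multiset.filter_congr fun e _ => ?_
      simp only [hY, Finset.mem_compl, Finset.mem_union]; tauto

end PtRel

/-! ### Minor relations in degree two: the general case -/

namespace PtRel
variable {k : Type} [Field k] {n : ℕ} {Q : Type} [CommRing Q] [Algebra k Q]

/-- If a bipartite graph with all degrees two except for six defects has no perfect matching, then a
minimal violator of Hall's condition, together with its neighbours, is a union of components
containing exactly two of the three defects on its side and none on the other. -/
lemma viol2 {S : Finset (Fin n)} {N : Multiset (Fin n × Fin n)} (hNS : Bip S N)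
    {a1 a2 a3 b1 b2 b3 : Fin n} (ha1 : a1 ∈ S) (ha2 : a2 ∈ S) (ha3 : a3 ∈ S)
    (hb1 : b1 ∉ S) (hb2 : b2 ∉ S) (hb3 : b3 ∉ S)
    (hN : valence n N + (dl a1 + dl a2 + dl a3 + dl b1 + dl b2 + dl b3) = (0 + 2) • 1)
    {U0 : Finset (Fin n)} (hU0 : U0 ⊆ S) (hlt0 : (nb N Sᶜ U0).card < U0.card) :
    ∃ X : Finset (Fin n), (∀ e ∈ N, e.1 ∈ X ↔ e.2 ∈ X) ∧ b1 ∉ X ∧ b2 ∉ X ∧ b3 ∉ X ∧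
      ((a1 ∉ X ∧ a2 ∈ X ∧ a3 ∈ X) ∨ (a1 ∈ X ∧ a2 ∉ X ∧ a3 ∈ X) ∨ (a1 ∈ X ∧ a2 ∈ X ∧ a3 ∉ X)) := by
  classical
  obtain ⟨U, hUm, hmin⟩ := Finset.exists_min_image
    (S.powerset.filter (fun U => (nb N Sᶜ U).card < U.card)) Finset.card
    ⟨U0, Finset.mem_filter.2 ⟨Finset.mem_powerset.2 hU0, hlt0⟩⟩
  obtain ⟨hU, hlt⟩ := Finset.mem_filter.1 hUm
  rw [Finset.mem_powerset] at hU
  have herase : ∀ s ∈ U, nb N Sᶜ (U.erase s) = nb N Sᶜ U := by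
    intro s hs
    have h1 : (U.erase s).card = U.card - 1 := Finset.card_erase_of_mem hs
    have h0 : 0 < U.card := Finset.card_pos.2 ⟨s, hs⟩
    have h2 : ¬ (nb N Sᶜ (U.erase s)).card < (U.erase s).card := fun h => by
      have := hmin (U.erase s) (Finset.mem_filter.2
        ⟨Finset.mem_powerset.2 ((Finset.erase_subset _ _).trans hU), h⟩)
      omega
    refine Finset.eq_of_subset_of_card_le (fun v hv => ?_) (by omega)
    obtain ⟨hv1, a, ha, hav⟩ := mem_nb.1 hv
    exact mem_nb.2 ⟨hv1, a, Finset.mem_of_mem_erase ha, hav⟩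
  have hcount : 2 * (nb N Sᶜ U).card ≤ ∑ i ∈ U, valence n N i := by
    set G := N.filter (fun e => e.1 ∈ U) with hG
    have hGS : Bip S G := fun e he => hNS e (Multiset.mem_of_mem_filter he)
    have h1 : ∑ i ∈ nb N Sᶜ U, valence n G i ≤ ∑ i ∈ U, valence n N i := by
      rw [bip_count_left hNS hU, bip_count_right hGS (nb_disj _ _ _), Multiset.countP_eq_card_filter
        (fun e : Fin n × Fin n => e.1 ∈ U)]
      exact Multiset.countP_le_card _ _
    refine le_trans ?_ h1
    rw [mul_comm, ← smul_eq_mul]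
    refine Finset.card_nsmul_le_sum _ _ _ fun v hv => ?_
    obtain ⟨hv1, a, ha, hav⟩ := mem_nb.1 hv
    rw [← herase a ha] at hv
    obtain ⟨-, a', ha', hav'⟩ := mem_nb.1 hv
    have m1 : (a, v) ∈ G := Multiset.mem_filter.2 ⟨hav, ha⟩
    have m2 : (a', v) ∈ G := Multiset.mem_filter.2 ⟨hav', Finset.mem_of_mem_erase ha'⟩
    obtain ⟨G1, hG1⟩ := Multiset.exists_cons_of_mem m1
    rw [hG1, Multiset.mem_cons] at m2
    have m3 : (a', v) ∈ G1 := m2.resolve_left fun h =>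
      Finset.ne_of_mem_erase ha' (Prod.ext_iff.1 h).1
    obtain ⟨G2, hG2⟩ := Multiset.exists_cons_of_mem m3
    rw [hG1, hG2, val_cons, val_cons]
    simp only [Pi.add_apply, dl_apply, if_true]
    omega
  have h1 := bip_count_nb hNS hU
  have h2 := sum_defect hN U
  have h3 := sum_defect hN (nb N Sᶜ U)
  have nb' : ∀ x ∈ S, x ∉ nb N Sᶜ U := fun x hx h => Finset.disjoint_left.1 (nb_disj N S U) h hx
  have nU : ∀ x, x ∉ S → x ∉ U := fun x hx h => hx (hU h)
  simp only [if_neg (nU _ hb1), if_neg (nU _ hb2), if_neg (nU _ hb3)] at h2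
  simp only [if_neg (nb' _ ha1), if_neg (nb' _ ha2), if_neg (nb' _ ha3)] at h3
  have hext : N.countP (fun e => e.2 ∈ nb N Sᶜ U ∧ ¬ e.1 ∈ U) = 0 := by
    split_ifs at h2 <;> omega
  have hbs : b1 ∉ nb N Sᶜ U ∧ b2 ∉ nb N Sᶜ U ∧ b3 ∉ nb N Sᶜ U := by
    refine ⟨fun h => ?_, fun h => ?_, fun h => ?_⟩ <;> rw [if_pos h] at h3 <;>
      split_ifs at h2 <;> omega
  simp only [if_neg hbs.1, if_neg hbs.2.1, if_neg hbs.2.2] at h3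
  refine ⟨nb N Sᶜ U ∪ U, fun e he => ?_, ?_, ?_, ?_, ?_⟩
  · have e1 := hNS e he
    simp only [Finset.mem_union, nb' _ e1.1, nU _ e1.2, false_or, or_false]
    refine ⟨fun h => mem_nb.2 ⟨by simpa using e1.2, e.1, h, he⟩, fun h => ?_⟩
    by_contra hc
    exact Multiset.countP_eq_zero.1 hext e he ⟨h, hc⟩
  · simp [hbs.1, nU _ hb1]
  · simp [hbs.2.1, nU _ hb2]
  · simp [hbs.2.2, nU _ hb3]
  · simp only [Finset.mem_union, nb' _ ha1, nb' _ ha2, nb' _ ha3, false_or]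
    by_cases u1 : a1 ∈ U <;> by_cases u2 : a2 ∈ U <;> by_cases u3 : a3 ∈ U <;>
      simp only [u1, u2, u3, if_true, if_false] at h2 <;>
      first | (exfalso; omega) | simp [u1, u2, u3]

/-- The minor relations in degree two. -/
lemma mnr_zero {L1 : PtRing k n →ₗ[k] Q} (hb : HBin L1) (hs : ∀ y, Star 0 L1 L1 y)
    {S : Finset (Fin n)} (hS : S.card = Sᶜ.card) {N : Multiset (Fin n × Fin n)} (hNS : Bip S N)
    {a1 a2 a3 b1 b2 b3 : Fin n} (ha1 : a1 ∈ S) (ha2 : a2 ∈ S) (ha3 : a3 ∈ S)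
    (hb1 : b1 ∉ S) (hb2 : b2 ∉ S) (hb3 : b3 ∉ S)
    (hN : valence n N + (dl a1 + dl a2 + dl a3 + dl b1 + dl b2 + dl b3) = (0 + 2) • 1) :
    mnr (psi L1 L1) N a1 a2 a3 b1 b2 b3 = 0 := by
  classical
  rcases hall_or hS (Γ := N) with ⟨M, hM, hMv⟩ | ⟨U, hU, hlt⟩
  · exact mnr_match hs hN hM hMv
  have hSc : Sᶜ.card = Sᶜᶜ.card := by rw [compl_compl, hS]
  rcases hall_or hSc (Γ := rev N) with ⟨M, hM, hMv⟩ | ⟨V, hV, hltV⟩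
  · exact mnr_match hs hN (rev_le hM) (by rw [val_rev, hMv])
  obtain ⟨X, hX, hXb1, hXb2, hXb3, hXa⟩ := viol2 hNS ha1 ha2 ha3 hb1 hb2 hb3 hN hU hlt
  obtain ⟨Z0, hZ0, hZa1, hZa2, hZa3, hZb⟩ := viol2 (S := Sᶜ) (N := rev N) (a1 := b1) (a2 := b2)
    (a3 := b3) (b1 := a1) (b2 := a2) (b3 := a3) (fun e he => by
      have := hNS _ (mem_rev.1 he)
      simpa using this.symm) (by simpa using hb1) (by simpa using hb2) (by simpa using hb3)
    (by simpa using ha1) (by simpa using ha2) (by simpa using ha3)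
    (by rw [val_rev, ← hN]; abel) hV hltV
  have hZ0' : ∀ e ∈ N, e.1 ∈ Z0 ↔ e.2 ∈ Z0 := fun e he =>
    (hZ0 e.swap (mem_rev.2 (by simpa using he))).symm
  have hZ : ∀ e ∈ N, e.1 ∈ Z0 \ X ↔ e.2 ∈ Z0 \ X := fun e he => by
    simp only [Finset.mem_sdiff, hX e he, hZ0' e he]
  have hXZ : Disjoint X (Z0 \ X) := Finset.disjoint_sdiff
  have hza : ∀ x, x ∉ Z0 → x ∉ Z0 \ X := fun x h h' => h (Finset.mem_sdiff.1 h').1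
  have hzb : ∀ x, x ∈ Z0 → x ∉ X → x ∈ Z0 \ X := fun x h hn => Finset.mem_sdiff.2 ⟨h, hn⟩
  -- the general position of the two pairs of defects is reached by permuting the `aᵢ` and `bᵢ`
  have key : ∀ c1 c2 c3, c1 ∈ S → c2 ∈ S → c3 ∈ S → c1 ∈ X → c2 ∉ X → c3 ∈ X →
      c1 ∉ Z0 → c2 ∉ Z0 → c3 ∉ Z0 →
      dl c1 + dl c2 + dl c3 = (dl a1 + dl a2 + dl a3 : Fin n → ℕ) →
      mnr (psi L1 L1) N c1 c2 c3 b1 b2 b3 = 0 := by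
    intro c1 c2 c3 s1 s2 s3 x1 x2 x3 z1 z2 z3 hc
    have key2 : ∀ d1 d2 d3, d1 ∉ S → d2 ∉ S → d3 ∉ S → d1 ∉ X → d2 ∉ X → d3 ∉ X →
        d1 ∉ Z0 → d2 ∈ Z0 → d3 ∈ Z0 →
        dl d1 + dl d2 + dl d3 = (dl b1 + dl b2 + dl b3 : Fin n → ℕ) →
        mnr (psi L1 L1) N c1 c2 c3 d1 d2 d3 = 0 := by
      intro d1 d2 d3 t1 t2 t3 y1 y2 y3 w1 w2 w3 hd
      refine mnr_zero_struct hb hs hNS s1 s2 s3 t1 t2 t3 ?_ hX hZ hXZ x1 x2 x3 y1 y2 y3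
        (hza _ z1) (hza _ z2) (hza _ z3) (hza _ w1) (hzb _ w2 y2) (hzb _ w3 y3)
      rw [← hN]
      calc valence n N + (dl c1 + dl c2 + dl c3 + dl d1 + dl d2 + dl d3)
          = valence n N + ((dl c1 + dl c2 + dl c3) + (dl d1 + dl d2 + dl d3)) := by abel
        _ = _ := by rw [hc, hd]; abel
    rcases hZb with ⟨h1, h2, h3⟩ | ⟨h1, h2, h3⟩ | ⟨h1, h2, h3⟩
    · exact key2 b1 b2 b3 hb1 hb2 hb3 hXb1 hXb2 hXb3 h1 h2 h3 rfl
    · rw [← neg_eq_zero, ← mnr_b12]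
      exact key2 b2 b1 b3 hb2 hb1 hb3 hXb2 hXb1 hXb3 h2 h1 h3 (by abel)
    · rw [← neg_eq_zero, ← mnr_b23, ← neg_eq_zero, ← mnr_b12]
      exact key2 b3 b1 b2 hb3 hb1 hb2 hXb3 hXb1 hXb2 h3 h1 h2 (by abel)
  rcases hXa with ⟨h1, h2, h3⟩ | ⟨h1, h2, h3⟩ | ⟨h1, h2, h3⟩
  · rw [← neg_eq_zero, ← mnr_a12]
    exact key a2 a1 a3 ha2 ha1 ha3 h2 h1 h3 hZa2 hZa1 hZa3 (by abel)
  · exact key a1 a2 a3 ha1 ha2 ha3 h1 h2 h3 hZa1 hZa2 hZa3 rfl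
  · rw [← neg_eq_zero, ← mnr_a23]
    exact key a1 a3 a2 ha1 ha3 ha2 h1 h3 h2 hZa1 hZa3 hZa2 (by abel)

end PtRel

/-! ### Linear relations between bipartite graph monomials -/

namespace PtRel
variable {k : Type} [Field k] {n : ℕ} {Q : Type} [CommRing Q] [Algebra k Q]

/-- The weight `∑ a·b` over the edges `(a, b)`; straightening increases it. -/
def om (Γ : Multiset (Fin n × Fin n)) : ℕ := (Γ.map fun e => (e.1 : ℕ) * (e.2 : ℕ)).sum

lemma om_cons (e : Fin n × Fin n) (Γ : Multiset (Fin n × Fin n)) :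
    om (e ::ₘ Γ) = (e.1 : ℕ) * e.2 + om Γ := by simp [om]

lemma om_add (Γ Γ' : Multiset (Fin n × Fin n)) : om (Γ + Γ') = om Γ + om Γ' := by simp [om]

/-- Weakly increasing chains: a larger tail forces a head at least as large. -/
def Chn (E : Multiset (Fin n × Fin n)) : Prop := ∀ e ∈ E, ∀ f ∈ E, e.1 < f.1 → e.2 ≤ f.2

/-- A chain is the unique multiset of pairs of maximal weight among those with its marginals. -/
lemma chain_max : ∀ (m : ℕ) (E E' : Multiset (Fin n × Fin n)), E.card = m → Chn E →
    E'.map Prod.fst = E.map Prod.fst → E'.map Prod.snd = E.map Prod.snd →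
    om E' < om E ∨ E' = E := by
  intro m
  induction m with
  | zero =>
    intro E E' hc _ h1 _
    rw [Multiset.card_eq_zero] at hc
    subst hc
    right
    simpa using h1
  | succ m ih =>
    intro E E' hc hE h1 h2
    have hne : E.toFinset.Nonempty := by
      rw [Multiset.toFinset_nonempty]; rintro rfl; simp at hc
    obtain ⟨⟨a, b⟩, he, hmax⟩ := Finset.exists_max_image E.toFinset
      (fun e => (toLex e : Fin n ×ₗ Fin n)) hne
    rw [Multiset.mem_toFinset] at he
    have hm : ∀ f ∈ E, f.1 ≤ a ∧ f.2 ≤ b := by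
      intro f hf
      have := hmax f (Multiset.mem_toFinset.2 hf)
      rw [Prod.Lex.toLex_le_toLex] at this
      rcases this with h | ⟨h, h'⟩
      · exact ⟨le_of_lt h, hE f hf _ he h⟩
      · exact ⟨le_of_eq h, h'⟩
    have hm1 : ∀ f ∈ E', f.1 ≤ a := by
      intro f hf
      have : f.1 ∈ E.map Prod.fst := h1 ▸ Multiset.mem_map_of_mem _ hf
      obtain ⟨g, hg, hgf⟩ := Multiset.mem_map.1 this
      exact hgf ▸ (hm g hg).1
    have hm2 : ∀ f ∈ E', f.2 ≤ b := by
      intro f hf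
      have : f.2 ∈ E.map Prod.snd := h2 ▸ Multiset.mem_map_of_mem _ hf
      obtain ⟨g, hg, hgf⟩ := Multiset.mem_map.1 this
      exact hgf ▸ (hm g hg).2
    obtain ⟨E1, rfl⟩ := Multiset.exists_cons_of_mem he
    have hE1 : Chn E1 := fun e he f hf =>
      hE e (Multiset.mem_cons_of_mem he) f (Multiset.mem_cons_of_mem hf)
    have hc1 : E1.card = m := by simpa using hc
    -- the case in which `E'` contains the maximal edge
    have key : ∀ F, F.map Prod.fst = E1.map Prod.fst → F.map Prod.snd = E1.map Prod.snd →
        om ((a, b) ::ₘ F) < om ((a, b) ::ₘ E1) ∨ (a, b) ::ₘ F = (a, b) ::ₘ E1 := by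
      intro F f1 f2
      rcases ih E1 F hc1 hE1 f1 f2 with h | h
      · left; rw [om_cons, om_cons]; omega
      · right; rw [h]
    by_cases hab : (a, b) ∈ E'
    · obtain ⟨F, rfl⟩ := Multiset.exists_cons_of_mem hab
      simp only [Multiset.map_cons, Multiset.cons_inj_right] at h1 h2
      exact key F h1 h2
    · left
      have ha : a ∈ E'.map Prod.fst := by rw [h1]; simp
      have hb : b ∈ E'.map Prod.snd := by rw [h2]; simp
      obtain ⟨⟨a0, b'⟩, hf, rfl⟩ := Multiset.mem_map.1 ha
      obtain ⟨⟨a', b0⟩, hg, rfl⟩ := Multiset.mem_map.1 hb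
      simp only at *
      have hlb : b' < b0 := lt_of_le_of_ne (hm2 _ hf) fun h => hab (h ▸ hf)
      have hla : a' < a0 := lt_of_le_of_ne (hm1 _ hg) fun h => hab (h ▸ hg)
      obtain ⟨F, rfl⟩ := Multiset.exists_cons_of_mem hf
      have hg' : (a', b0) ∈ F := (Multiset.mem_cons.1 hg).resolve_left fun h =>
        hla.ne (Prod.ext_iff.1 h).1
      obtain ⟨G, rfl⟩ := Multiset.exists_cons_of_mem hg'
      simp only [Multiset.map_cons, Multiset.cons_inj_right] at h1 h2
      rw [Multiset.cons_swap, Multiset.cons_inj_right] at h2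
      have := key ((a', b') ::ₘ G) (by simpa using h1) (by simpa using h2)
      have hle : om ((a0, b0) ::ₘ (a', b') ::ₘ G) ≤ om ((a0, b0) ::ₘ E1) := by
        rcases this with h | h
        · exact h.le
        · rw [h]
      refine lt_of_lt_of_le ?_ hle
      simp only [om_cons]
      have h3 : (a' : ℕ) < a0 := hla
      have h4 : (b' : ℕ) < b0 := hlb
      nlinarith

/-- The exponent vector of the term of `gm k (p.1 + p.2)` in which the edges of `p.1` contribute
`x_a y_b` and the edges of `p.2` contribute `x_b y_a`. -/
noncomputable def mon (p : Multiset (Fin n × Fin n) × Multiset (Fin n × Fin n)) :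
    Fin n × Fin 2 →₀ ℕ :=
  (p.1.map fun e => Finsupp.single (e.1, (0 : Fin 2)) 1 + Finsupp.single (e.2, (1 : Fin 2)) 1).sum +
  (p.2.map fun e => Finsupp.single (e.2, (0 : Fin 2)) 1 + Finsupp.single (e.1, (1 : Fin 2)) 1).sum

lemma prod_monom (s : Multiset (Fin n × Fin n)) (g : Fin n × Fin n → (Fin n × Fin 2 →₀ ℕ)) (c : k) :
    (s.map fun e => (monomial (g e) c : PtRing k n)).prod =
      monomial (s.map g).sum (c ^ s.card) := by
  induction s using Multiset.induction_on with
  | empty => simp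
  | cons e s ih => simp [ih, monomial_mul, pow_succ, mul_comm]

/-- Expansion of a graph monomial: each edge is oriented by choosing which of its two ends
contributes `x`. -/
lemma gm_expand (Γ : Multiset (Fin n × Fin n)) : gm k Γ =
    (Γ.antidiagonal.map fun p => (monomial (mon p) ((-1) ^ p.2.card) : PtRing k n)).sum := by
  have h : gm k Γ = (Γ.map fun e =>
      (monomial (Finsupp.single (e.1, (0 : Fin 2)) 1 + Finsupp.single (e.2, (1 : Fin 2)) 1) 1 +
       monomial (Finsupp.single (e.2, (0 : Fin 2)) 1 + Finsupp.single (e.1, (1 : Fin 2)) 1) (-1)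
        : PtRing k n)).prod := by
    unfold gm graphMonomial
    congr 1
    refine Multiset.map_congr rfl fun e _ => ?_
    unfold bracket
    rw [sub_eq_add_neg]
    simp only [X, monomial_mul, mul_one, map_neg]
  rw [h, Multiset.prod_map_add]
  congr 1
  refine Multiset.map_congr rfl fun p _ => ?_
  rw [prod_monom, prod_monom, monomial_mul, mon, one_pow, one_mul]

lemma coeff_gm (Γ : Multiset (Fin n × Fin n)) (m : Fin n × Fin 2 →₀ ℕ) : coeff m (gm k Γ) =
    (Γ.antidiagonal.map fun p => if mon p = m then ((-1) ^ p.2.card : k) else 0).sum := by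
  rw [gm_expand]
  generalize Γ.antidiagonal = A
  induction A using Multiset.induction_on with
  | empty => simp
  | cons p A ih => simp [ih, coeff_monomial]

lemma sum_single (s : Multiset (Fin n × Fin n)) (g : Fin n × Fin n → Fin n × Fin 2)
    (h : Fin n × Fin n → Fin n × Fin 2) (q : Fin n × Fin 2) :
    (s.map fun e => (Finsupp.single (g e) 1 + Finsupp.single (h e) 1 : Fin n × Fin 2 →₀ ℕ)).sum q =
      (s.map g).count q + (s.map h).count q := by
  induction s using Multiset.induction_on with
  | empty => simp
  | cons e s ih =>
    simp only [Multiset.map_cons, Multiset.sum_cons, Finsupp.add_apply, ih, Multiset.count_cons,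
      Finsupp.single_apply, eq_comm (a := q)]
    omega

lemma mon_apply_zero (p : Multiset (Fin n × Fin n) × Multiset (Fin n × Fin n)) (i : Fin n) :
    mon p (i, 0) = (p.1.map Prod.fst).count i + (p.2.map Prod.snd).count i := by
  have hinj : ∀ s : Multiset (Fin n), Multiset.count (i, (0 : Fin 2)) (s.map fun j => (j, 0)) =
      s.count i := fun s =>
    Multiset.count_map_eq_count' (fun j : Fin n => (j, (0 : Fin 2))) s
      (fun a b h => (Prod.ext_iff.1 h).1) i
  have hne : ∀ s : Multiset (Fin n), Multiset.count (i, (0 : Fin 2)) (s.map fun j => (j, 1)) =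
      0 := fun s => Multiset.count_eq_zero.2 (by simp)
  have h1 := hinj (p.1.map Prod.fst)
  have h2 := hinj (p.2.map Prod.snd)
  have h3 := hne (p.1.map Prod.snd)
  have h4 := hne (p.2.map Prod.fst)
  simp only [Multiset.map_map, Function.comp_def] at h1 h2 h3 h4
  rw [mon, Finsupp.add_apply, sum_single p.1 (fun e => (e.1, 0)) (fun e => (e.2, 1)),
    sum_single p.2 (fun e => (e.2, 0)) (fun e => (e.1, 1)), h1, h2, h3, h4]
  omega

lemma mon_apply_one (p : Multiset (Fin n × Fin n) × Multiset (Fin n × Fin n)) (i : Fin n) :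
    mon p (i, 1) = (p.1.map Prod.snd).count i + (p.2.map Prod.fst).count i := by
  have hinj : ∀ s : Multiset (Fin n), Multiset.count (i, (1 : Fin 2)) (s.map fun j => (j, 1)) =
      s.count i := fun s =>
    Multiset.count_map_eq_count' (fun j : Fin n => (j, (1 : Fin 2))) s
      (fun a b h => (Prod.ext_iff.1 h).1) i
  have hne : ∀ s : Multiset (Fin n), Multiset.count (i, (1 : Fin 2)) (s.map fun j => (j, 0)) =
      0 := fun s => Multiset.count_eq_zero.2 (by simp)
  have h1 := hinj (p.1.map Prod.snd)
  have h2 := hinj (p.2.map Prod.fst)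
  have h3 := hne (p.1.map Prod.fst)
  have h4 := hne (p.2.map Prod.snd)
  simp only [Multiset.map_map, Function.comp_def] at h1 h2 h3 h4
  rw [mon, Finsupp.add_apply, sum_single p.1 (fun e => (e.1, 0)) (fun e => (e.2, 1)),
    sum_single p.2 (fun e => (e.2, 0)) (fun e => (e.1, 1)), h1, h2, h3, h4]
  omega

/-- For bipartite graphs the exponent vector of a term determines all marginals. -/
lemma mon_inj {S : Finset (Fin n)} {p q : Multiset (Fin n × Fin n) × Multiset (Fin n × Fin n)}
    (hp1 : Bip S p.1) (hp2 : Bip S p.2) (hq1 : Bip S q.1) (hq2 : Bip S q.2) (h : mon p = mon q) :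
    (p.1.map Prod.fst = q.1.map Prod.fst ∧ p.1.map Prod.snd = q.1.map Prod.snd) ∧
    (p.2.map Prod.fst = q.2.map Prod.fst ∧ p.2.map Prod.snd = q.2.map Prod.snd) := by
  have hf : ∀ (s : Multiset (Fin n × Fin n)), Bip S s → ∀ i, i ∉ S → (s.map Prod.fst).count i = 0 :=
    fun s hs i hi => Multiset.count_eq_zero.2 fun h => by
      obtain ⟨e, he, rfl⟩ := Multiset.mem_map.1 h
      exact hi (hs e he).1
  have hg : ∀ (s : Multiset (Fin n × Fin n)), Bip S s → ∀ i, i ∈ S → (s.map Prod.snd).count i = 0 :=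
    fun s hs i hi => Multiset.count_eq_zero.2 fun h => by
      obtain ⟨e, he, rfl⟩ := Multiset.mem_map.1 h
      exact (hs e he).2 hi
  have h0 : ∀ i, _ := fun i => DFunLike.congr_fun h (i, (0 : Fin 2))
  have h1 : ∀ i, _ := fun i => DFunLike.congr_fun h (i, (1 : Fin 2))
  simp only [mon_apply_zero, mon_apply_one] at h0 h1
  refine ⟨⟨?_, ?_⟩, ?_, ?_⟩ <;> ext i <;> have a0 := h0 i <;> have a1 := h1 i <;>
    by_cases hi : i ∈ S <;>
    simp only [hf _ hp1 _, hf _ hp2 _, hf _ hq1 _, hf _ hq2 _, hg _ hp1 _, hg _ hp2 _, hg _ hq1 _,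
      hg _ hq2 _, hi, not_false_eq_true] at a0 a1 ⊢ <;> omega

/-- Graphs without three edges that are strictly decreasing. -/
def Free (Γ : Multiset (Fin n × Fin n)) : Prop :=
  ∀ e ∈ Γ, ∀ f ∈ Γ, ∀ g ∈ Γ, e.1 < f.1 → f.1 < g.1 → f.2 < e.2 → ¬ g.2 < f.2

/-- A graph without decreasing triples is the union of two chains. -/
lemma free_split {Γ : Multiset (Fin n × Fin n)} (h : Free Γ) :
    ∃ E E', Γ = E + E' ∧ Chn E ∧ Chn E' := by
  classical
  refine ⟨Γ.filter (fun e => ¬ ∃ f ∈ Γ, f.1 < e.1 ∧ e.2 < f.2),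
    Γ.filter (fun e => ¬ ¬ ∃ f ∈ Γ, f.1 < e.1 ∧ e.2 < f.2),
    (Multiset.filter_add_not _ _).symm, ?_, ?_⟩
  · intro e he f hf hlt
    rw [Multiset.mem_filter] at he hf
    by_contra hc
    exact hf.2 ⟨e, he.1, hlt, not_le.1 hc⟩
  · intro e he f hf hlt
    rw [Multiset.mem_filter, not_not] at he hf
    obtain ⟨g, hg, h1, h2⟩ := he.2
    by_contra hc
    exact h g hg e he.1 f hf.1 h1 hlt h2 (not_le.1 hc)

/-- The graph monomials of bipartite graphs without decreasing triples are linearly independent. -/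
lemma free_indep [CharZero k] (S : Finset (Fin n)) :
    LinearIndependent k (fun Γ : {Γ : Multiset (Fin n × Fin n) // Bip S Γ ∧ Free Γ} =>
      gm k Γ.1) := by
  classical
  rw [linearIndependent_iff']
  intro s c hsum
  by_contra hcon
  push Not at hcon
  obtain ⟨i0, hi0, hci0⟩ := hcon
  obtain ⟨G, hG, hmin⟩ := Finset.exists_min_image (s.filter (fun i => c i ≠ 0)) (fun i => om i.1)
    ⟨i0, Finset.mem_filter.2 ⟨hi0, hci0⟩⟩
  obtain ⟨hGs, hcG⟩ := Finset.mem_filter.1 hG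
  obtain ⟨E, E', hEE, hE, hE'⟩ := free_split G.2.2
  have hBE : Bip S E := fun e he => G.2.1 e (by rw [hEE]; exact Multiset.mem_add.2 (Or.inl he))
  have hBE' : Bip S E' := fun e he => G.2.1 e (by rw [hEE]; exact Multiset.mem_add.2 (Or.inr he))
  -- the chosen term occurs in no other graph of at least the weight of `G`
  have huniq : ∀ H : Multiset (Fin n × Fin n), Bip S H → om G.1 ≤ om H →
      ∀ p ∈ H.antidiagonal, mon p = mon (E, E') → p = (E, E') := by
    intro H hH hle p hp hm
    rw [Multiset.mem_antidiagonal] at hp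
    obtain ⟨⟨m1, m2⟩, m3, m4⟩ := mon_inj (S := S) (p := p) (q := (E, E'))
      (fun e he => hH e (by rw [← hp]; exact Multiset.mem_add.2 (Or.inl he)))
      (fun e he => hH e (by rw [← hp]; exact Multiset.mem_add.2 (Or.inr he))) hBE hBE' hm
    have c1 := chain_max _ E p.1 rfl hE m1 m2
    have c2 := chain_max _ E' p.2 rfl hE' m3 m4
    rw [hEE, ← hp, om_add, om_add] at hle
    rcases c1 with c1 | c1 <;> rcases c2 with c2 | c2
    · omega
    · rw [c2] at hle; omega
    · rw [c1] at hle; omega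
    · exact Prod.ext c1 c2
  have hcoef := congrArg (coeff (mon (E, E'))) hsum
  rw [coeff_sum, coeff_zero, Finset.sum_eq_single G] at hcoef
  · rw [coeff_smul, smul_eq_mul, mul_eq_zero] at hcoef
    refine hcoef.elim hcG fun h => ?_
    rw [coeff_gm] at h
    have h1 : (G.1.antidiagonal.map fun p => if mon p = mon (E, E') then ((-1) ^ p.2.card : k) else 0)
        = G.1.antidiagonal.map fun p => if p = (E, E') then ((-1) ^ E'.card : k) else 0 := by
      refine Multiset.map_congr rfl fun p hp => ?_
      by_cases hpe : p = (E, E')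
      · rw [hpe, if_pos rfl, if_pos rfl]
      · rw [if_neg hpe, if_neg fun hm => hpe (huniq _ G.2.1 le_rfl p hp hm)]
    have h2 : ∀ A : Multiset (Multiset (Fin n × Fin n) × Multiset (Fin n × Fin n)),
        (A.map fun p => if p = (E, E') then ((-1) ^ E'.card : k) else 0).sum =
          A.count (E, E') * (-1) ^ E'.card := by
      intro A
      induction A using Multiset.induction_on with
      | empty => simp
      | cons p A ih =>
        rw [Multiset.map_cons, Multiset.sum_cons, ih, Multiset.count_cons]
        by_cases hpe : p = (E, E')
        · rw [if_pos hpe, if_pos hpe.symm]; push_cast; ring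
        · rw [if_neg hpe, if_neg (Ne.symm hpe)]; push_cast; ring
    rw [h1, h2, mul_eq_zero, Nat.cast_eq_zero, Multiset.count_eq_zero] at h
    refine h.elim (fun h => h (Multiset.mem_antidiagonal.2 hEE.symm)) fun h => ?_
    exact pow_ne_zero _ (neg_ne_zero.2 one_ne_zero) h
  · intro H hHs hne
    rw [coeff_smul, smul_eq_mul]
    by_cases hcH : c H = 0
    · rw [hcH, zero_mul]
    · have hle := hmin H (Finset.mem_filter.2 ⟨hHs, hcH⟩)
      rw [coeff_gm, Multiset.sum_eq_zero, mul_zero]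
      intro x hx
      obtain ⟨p, hp, rfl⟩ := Multiset.mem_map.1 hx
      rw [if_neg]
      intro hm
      have := huniq _ H.2.1 hle p hp hm
      rw [this, Multiset.mem_antidiagonal] at hp
      exact hne (Subtype.ext (by rw [← hp, hEE]))
  · exact fun h => absurd hGs h

lemma om_le {v : Fin n → ℕ} {Γ : Multiset (Fin n × Fin n)} (h : valence n Γ = v) :
    om Γ ≤ (∑ i, v i) * (n * n) := by
  have h1 : Γ.card ≤ ∑ i, v i := by
    rw [← h, sum_val]; simp
  refine le_trans ?_ (Nat.mul_le_mul_right _ h1)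
  rw [om]
  have := Multiset.sum_le_card_nsmul (Γ.map fun e => (e.1 : ℕ) * (e.2 : ℕ)) (n * n) (by
    intro x hx
    obtain ⟨e, _, rfl⟩ := Multiset.mem_map.1 hx
    exact Nat.mul_le_mul e.1.2.le e.2.2.le)
  simpa using this

/-- A function on bipartite graphs of fixed valence which satisfies the minor relations factors
through the graph monomials. -/
lemma factor [CharZero k] (S : Finset (Fin n)) (v : Fin n → ℕ)
    (f : Multiset (Fin n × Fin n) → Q)
    (hf : ∀ N a1 a2 a3 b1 b2 b3, Bip S N → a1 ∈ S → a2 ∈ S → a3 ∈ S → b1 ∉ S → b2 ∉ S → b3 ∉ S →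
      valence n N + (dl a1 + dl a2 + dl a3 + dl b1 + dl b2 + dl b3) = v →
      mnr f N a1 a2 a3 b1 b2 b3 = 0) :
    ∃ L : PtRing k n →ₗ[k] Q, ∀ Γ, Bip S Γ → valence n Γ = v → L (gm k Γ) = f Γ := by
  classical
  have hli := free_indep (k := k) S
  obtain ⟨L, hL⟩ := LinearMap.exists_extend
    ((Finsupp.linearCombination k (fun Γ : {Γ : Multiset (Fin n × Fin n) // Bip S Γ ∧ Free Γ} =>
      f Γ.1)).comp hli.repr)
  have hL' : ∀ Γ, Bip S Γ → Free Γ → L (gm k Γ) = f Γ := by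
    intro Γ h1 h2
    have hmem : gm k Γ ∈ Submodule.span k (Set.range
        (fun Γ : {Γ : Multiset (Fin n × Fin n) // Bip S Γ ∧ Free Γ} => gm k Γ.1)) :=
      Submodule.subset_span ⟨⟨Γ, h1, h2⟩, rfl⟩
    have h3 := LinearMap.congr_fun hL ⟨gm k Γ, hmem⟩
    rw [LinearMap.comp_apply, LinearMap.comp_apply, Submodule.subtype_apply] at h3
    rw [h3, hli.repr_eq_single ⟨Γ, h1, h2⟩ _ rfl]
    simp
  refine ⟨L, ?_⟩
  have main : ∀ d Γ, (∑ i, v i) * (n * n) - om Γ = d → Bip S Γ → valence n Γ = v →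
      L (gm k Γ) = f Γ := by
    intro d
    induction d using Nat.strong_induction_on with
    | _ d ih =>
      intro Γ hd hB hv
      by_cases hF : Free Γ
      · exact hL' Γ hB hF
      unfold Free at hF
      push Not at hF
      obtain ⟨⟨a1, b1⟩, h1, ⟨a2, b2⟩, h2, ⟨a3, b3⟩, h3, l1, l2, l3, l4⟩ := hF
      simp only at l1 l2 l3 l4
      obtain ⟨N1, rfl⟩ := Multiset.exists_cons_of_mem h1
      have h2' := (Multiset.mem_cons.1 h2).resolve_left fun h => l1.ne' (Prod.ext_iff.1 h).1
      obtain ⟨N2, rfl⟩ := Multiset.exists_cons_of_mem h2'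
      have h3' := (Multiset.mem_cons.1 ((Multiset.mem_cons.1 h3).resolve_left fun h =>
        (l1.trans l2).ne' (Prod.ext_iff.1 h).1)).resolve_left fun h => l2.ne' (Prod.ext_iff.1 h).1
      obtain ⟨N, rfl⟩ := Multiset.exists_cons_of_mem h3'
      have e1 := hB _ h1
      have e2 := hB _ h2
      have e3 := hB _ h3
      simp only at e1 e2 e3
      have hBN : Bip S N := fun e he => hB e (by simp [he])
      have hval := val_tri N a1 a2 a3 b1 b2 b3
      rw [hv] at hval
      have hm := hf N a1 a2 a3 b1 b2 b3 hBN e1.1 e2.1 e3.1 e1.2 e2.2 e3.2 hval.symm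
      have hg := congrArg L (mnr_gm (k := k) N a1 a2 a3 b1 b2 b3)
      have step : ∀ c1 c2 c3, c1 ∉ S → c2 ∉ S → c3 ∉ S → dl c1 + dl c2 + dl c3 =
          (dl b1 + dl b2 + dl b3 : Fin n → ℕ) →
          (a1 : ℕ) * b1 + a2 * b2 + a3 * b3 < (a1 : ℕ) * c1 + a2 * c2 + a3 * c3 →
          L (gm k ((a1, c1) ::ₘ (a2, c2) ::ₘ (a3, c3) ::ₘ N)) =
            f ((a1, c1) ::ₘ (a2, c2) ::ₘ (a3, c3) ::ₘ N) := by
        intro c1 c2 c3 t1 t2 t3 hc hlt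
        have hval' : valence n ((a1, c1) ::ₘ (a2, c2) ::ₘ (a3, c3) ::ₘ N) = v := by
          rw [val_tri, hval]
          calc valence n N + (dl a1 + dl a2 + dl a3 + dl c1 + dl c2 + dl c3)
              = valence n N + (dl a1 + dl a2 + dl a3 + (dl c1 + dl c2 + dl c3)) := by abel
            _ = _ := by rw [hc]; abel
        have hB' : Bip S ((a1, c1) ::ₘ (a2, c2) ::ₘ (a3, c3) ::ₘ N) := by
          intro e he
          simp only [Multiset.mem_cons] at he
          rcases he with rfl | rfl | rfl | he
          · exact ⟨e1.1, t1⟩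
          · exact ⟨e2.1, t2⟩
          · exact ⟨e3.1, t3⟩
          · exact hBN e he
        refine ih _ ?_ _ rfl hB' hval'
        have q1 := om_le hval'
        simp only [om_cons] at q1 hd ⊢
        omega
      have A1 : (a1 : ℕ) < a2 := l1
      have A2 : (a2 : ℕ) < a3 := l2
      have B1 : (b2 : ℕ) < b1 := l3
      have B2 : (b3 : ℕ) < b2 := l4
      obtain ⟨p, hp⟩ := Nat.exists_eq_add_of_lt A1
      obtain ⟨q, hq⟩ := Nat.exists_eq_add_of_lt A2
      obtain ⟨r, hr⟩ := Nat.exists_eq_add_of_lt B1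
      obtain ⟨s, hs⟩ := Nat.exists_eq_add_of_lt B2
      have s1 := step b1 b3 b2 e1.2 e3.2 e2.2 (by abel) (by rw [hq, hs]; nlinarith)
      have s2 := step b2 b1 b3 e2.2 e1.2 e3.2 (by abel) (by rw [hp, hr]; nlinarith)
      have s3 := step b2 b3 b1 e2.2 e3.2 e1.2 (by abel) (by rw [hq, hp, hr, hs]; nlinarith)
      have s4 := step b3 b1 b2 e3.2 e1.2 e2.2 (by abel) (by rw [hq, hp, hr, hs]; nlinarith)
      have s5 := step b3 b2 b1 e3.2 e2.2 e1.2 (by abel) (by rw [hq, hp, hr, hs]; nlinarith)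
      simp only [mnr, map_add, map_sub, map_zero, s1, s2, s3, s4, s5] at hg hm
      linear_combination hg - hm
  exact fun Γ => main _ Γ rfl

end PtRel

/-! ### Functionals in all degrees and the conclusion -/

namespace PtRel
variable {k : Type} [Field k] {n : ℕ} {Q : Type} [CommRing Q] [Algebra k Q]

/-- If the function `psi L1 LE` satisfies the minor relations, it descends to a linear map which
is multiplicative in the next degree. -/
lemma next_exists [CharZero k] {e : ℕ} {L1 LE : PtRing k n →ₗ[k] Q} (hs : ∀ y, Star e L1 LE y)
    {S : Finset (Fin n)} (hS : S.card = Sᶜ.card)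
    (hf : ∀ N a1 a2 a3 b1 b2 b3, Bip S N → a1 ∈ S → a2 ∈ S → a3 ∈ S → b1 ∉ S → b2 ∉ S → b3 ∉ S →
      valence n N + (dl a1 + dl a2 + dl a3 + dl b1 + dl b2 + dl b3) = (e + 2) • 1 →
      mnr (psi L1 LE) N a1 a2 a3 b1 b2 b3 = 0) :
    ∃ L : PtRing k n →ₗ[k] Q, HMul (e + 1) L1 LE L := by
  obtain ⟨L, hL⟩ := factor (k := k) S ((e + 2) • 1) (psi L1 LE) hf
  refine ⟨L, ?_⟩
  have hbal : ∀ d : ℕ, ∑ i ∈ S, (d • (1 : Fin n → ℕ)) i = ∑ i ∈ Sᶜ, (d • (1 : Fin n → ℕ)) i := by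
    intro d; simp [hS]
  intro f hf1 g hg
  have h1 : R k (1 : Fin n → ℕ) ≤ LinearMap.eqLocus (L.comp (LinearMap.mulRight k g))
      ((LinearMap.mulRight k (LE g)).comp L1) := by
    refine kempe_bip S (by simpa using hbal 1) _ fun M hM hMB => ?_
    rw [LinearMap.mem_eqLocus]
    simp only [LinearMap.comp_apply, LinearMap.mulRight_apply]
    have h2 : R k ((e + 1) • (1 : Fin n → ℕ)) ≤ LinearMap.eqLocus
        (L.comp (LinearMap.mulLeft k (gm k M))) ((LinearMap.mulLeft k (L1 (gm k M))).comp LE) := by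
      refine kempe_bip S (hbal _) _ fun G hG hGB => ?_
      rw [LinearMap.mem_eqLocus]
      simp only [LinearMap.comp_apply, LinearMap.mulLeft_apply]
      have hv : valence n (M + G) = (e + 2) • 1 := by
        rw [val_add, hM, hG]; ext i; simp; ring
      rw [← gm_add, hL _ (bip_add hMB hGB) hv, psi_eq hs hv (Multiset.le_add_right M G) hM,
        add_tsub_cancel_left]
    have := h2 hg
    rwa [LinearMap.mem_eqLocus] at this
  have := h1 hf1
  rwa [LinearMap.mem_eqLocus] at this

/-- A linear map on degree-one invariants which respects the binomial quadrics extends to all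
degrees; `L i` lives in degree `i + 1`. -/
lemma exists_tower [CharZero k] (hn : Even n) (h6 : n ≠ 6) {L1 : PtRing k n →ₗ[k] Q}
    (hb : HBin L1) (e : ℕ) :
    ∃ L : ℕ → (PtRing k n →ₗ[k] Q), L 0 = L1 ∧ ∀ i < e, HMul (i + 1) L1 (L i) (L (i + 1)) := by
  obtain ⟨S, -, -, hS⟩ := exists_half hn ∅ ∅ (by simp) (by simp) (by simp)
  induction e with
  | zero => exact ⟨fun _ => L1, rfl, by simp⟩
  | succ e ih =>
    obtain ⟨L, h0, hL⟩ := ih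
    have hnext : ∃ L' : PtRing k n →ₗ[k] Q, HMul (e + 1) L1 (L e) L' := by
      match e with
      | 0 =>
        rw [h0]
        have hs := star_of_B4 (B4_zero hb)
        exact next_exists hs hS fun N a1 a2 a3 b1 b2 b3 hN ha1 ha2 ha3 hb1 hb2 hb3 hv =>
          mnr_zero hb hs hS hN ha1 ha2 ha3 hb1 hb2 hb3 hv
      | 1 =>
        have hm := hL 0 (by norm_num)
        rw [h0] at hm
        have hs := star_of_B4 (B4_one hn h6 hb hm)
        exact next_exists hs hS fun N a1 a2 a3 b1 b2 b3 hN ha1 ha2 ha3 hb1 hb2 hb3 hv =>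
          mnr_one hb hm hs hS hN hb1 hb2 hb3 hv
      | e + 2 =>
        have hm := hL (e + 1) (by omega)
        have hs := star_of_B4 (B4_large hn hm)
        exact next_exists hs hS fun N a1 a2 a3 b1 b2 b3 hN ha1 ha2 ha3 hb1 hb2 hb3 hv =>
          mnr_large hs hS hN hb1 hb2 hb3 hv
    obtain ⟨L', hL'⟩ := hnext
    refine ⟨Function.update L (e + 1) L', ?_, fun i hi => ?_⟩
    · rw [Function.update_of_ne (by omega), h0]
    · rw [Function.update_of_ne (by omega : i ≠ e + 1)]
      rcases Nat.lt_succ_iff_lt_or_eq.1 hi with h | rfl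
      · rw [Function.update_of_ne (by omega : i + 1 ≠ e + 1)]
        exact hL i h
      · rw [Function.update_self]; exact hL'

/-- Every graph can be reoriented so that its edges `(a, b)` satisfy `a ≤ b`, up to a sign of its
graph monomial. -/
lemma exists_sorted (Γ : Multiset (Fin n × Fin n)) :
    ∃ Γ', (∀ e ∈ Γ', e.1 ≤ e.2) ∧ valence n Γ' = valence n Γ ∧
      (gm k Γ = gm k Γ' ∨ gm k Γ = - gm k Γ') := by
  induction Γ using Multiset.induction_on with
  | empty => exact ⟨0, by simp, rfl, Or.inl rfl⟩
  | cons e Γ ih =>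
    obtain ⟨G, h1, h2, h3⟩ := ih
    rcases le_total e.1 e.2 with h | h
    · refine ⟨e ::ₘ G, ?_, by rw [val_cons, val_cons, h2], ?_⟩
      · intro f hf
        rcases Multiset.mem_cons.1 hf with rfl | hf
        · exact h
        · exact h1 f hf
      · rw [gm_cons, gm_cons]
        rcases h3 with h3 | h3 <;> rw [h3] <;> simp
    · refine ⟨(e.2, e.1) ::ₘ G, ?_, by rw [val_cons, val_cons, h2, add_comm (dl e.1)], ?_⟩
      · intro f hf
        rcases Multiset.mem_cons.1 hf with rfl | hf
        · exact h
        · exact h1 f hf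
      · rw [gm_cons, gm_cons, br_swap e.2 e.1]
        rcases h3 with h3 | h3 <;> rw [h3] <;> simp

lemma R_ind {v : Fin n → ℕ} {p : PtRing k n → Prop}
    (h : ∀ Γ, valence n Γ = v → (∀ e ∈ Γ, e.1 ≤ e.2) → p (gm k Γ)) (h0 : p 0)
    (hadd : ∀ f g, p f → p g → p (f + g)) (hsmul : ∀ (c : k) f, p f → p (c • f)) :
    ∀ f ∈ R k v, p f := by
  intro f hf
  refine Submodule.span_induction ?_ h0 (fun x y _ _ hx hy => hadd x y hx hy)
    (fun c x _ hx => hsmul c x hx) hf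
  rintro _ ⟨Γ, hΓ, rfl⟩
  obtain ⟨G, h1, h2, h3⟩ := exists_sorted (k := k) Γ
  have hG := h G (h2.trans hΓ) h1
  rcases h3 with h3 | h3
  · rw [h3]; exact hG
  · rw [h3, ← neg_one_smul k]; exact hsmul _ _ hG

lemma isPM {Γ : Multiset (Fin n × Fin n)} (hv : valence n Γ = 1) (h : ∀ e ∈ Γ, e.1 ≤ e.2) :
    IsPerfectMatching n Γ := by
  refine ⟨fun e he => lt_of_le_of_ne (h e he) fun heq => ?_, fun i => congrFun hv i⟩
  obtain ⟨G, rfl⟩ := Multiset.exists_cons_of_mem he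
  have := congrFun hv e.1
  rw [val_cons] at this
  simp only [Pi.add_apply, dl_apply, if_true, if_pos heq, Pi.one_apply] at this
  omega

lemma phi_X (M : Matching n) : phi k n (X M) = gm k M.1 := by simp [phi]

/-- The binomial quadrics give the exchange relation for any linear map sending graph monomials of
matchings to the classes of the corresponding variables. -/
lemma hbin_of {L1 : PtRing k n →ₗ[k] Q} {q : Matching n → Q}
    (hL : ∀ M : Matching n, L1 (gm k M.1) = q M)
    (hq : ∀ M₁ M₂ M₃ M₄ : Matching n, M₁.1 + M₂.1 = M₃.1 + M₄.1 → q M₁ * q M₂ = q M₃ * q M₄) :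
    HBin L1 := by
  intro x y hxy
  have hadd : ∀ {A C : Multiset (Fin n × Fin n)}, valence n A = x → valence n C = y →
      (∀ e ∈ A, e.1 ≤ e.2) → (∀ e ∈ C, e.1 ≤ e.2) → IsPerfectMatching n (A + C) := by
    intro A C hA hC h1 h2
    refine isPM (by rw [val_add, hA, hC, hxy]) fun e he => ?_
    rcases Multiset.mem_add.1 he with he | he
    exacts [h1 e he, h2 e he]
  refine R_ind (fun A hA hA' => ?_) ?_ ?_ ?_
  · refine R_ind (fun B hB hB' => ?_) ?_ ?_ ?_
    · refine R_ind (fun C hC hC' => ?_) ?_ ?_ ?_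
      · refine R_ind (fun D hD hD' => ?_) ?_ ?_ ?_
        · rw [← gm_add, ← gm_add, ← gm_add, ← gm_add]
          have h1 := hL ⟨A + C, hadd hA hC hA' hC'⟩
          have h2 := hL ⟨B + D, hadd hB hD hB' hD'⟩
          have h3 := hL ⟨A + D, hadd hA hD hA' hD'⟩
          have h4 := hL ⟨B + C, hadd hB hC hB' hC'⟩
          simp only at h1 h2 h3 h4
          rw [h1, h2, h3, h4]
          refine hq _ _ _ _ ?_
          change A + C + (B + D) = A + D + (B + C)
          abel
        · simp
        · intro f g h1 h2
          simp only [mul_add, map_add, add_mul, h1, h2]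
        · intro c f h1
          simp only [mul_smul_comm, map_smul, smul_mul_assoc, h1]
      · simp
      · intro f g h1 h2 d hd
        simp only [mul_add, map_add, add_mul, h1 d hd, h2 d hd]
      · intro c f h1 d hd
        simp only [mul_smul_comm, map_smul, smul_mul_assoc, h1 d hd]
    · simp
    · intro f g h1 h2 c hc d hd
      simp only [mul_add, map_add, add_mul, h1 c hc d hd, h2 c hc d hd]
    · intro r f h1 c hc d hd
      simp only [mul_smul_comm, map_smul, smul_mul_assoc, h1 c hc d hd]
  · simp
  · intro f g h1 h2 b hb c hc d hd
    simp only [map_add, add_mul, h1 b hb c hc d hd, h2 b hb c hc d hd]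
  · intro r f h1 b hb c hc d hd
    simp only [map_smul, smul_mul_assoc, h1 b hb c hc d hd]

/-- A linear map vanishing on the kernel of another one factors through it. -/
lemma exists_factor {V W U : Type} [AddCommGroup V] [Module k V] [AddCommGroup W] [Module k W]
    [AddCommGroup U] [Module k U] (f : V →ₗ[k] W) (g : V →ₗ[k] U)
    (h : ∀ v, f v = 0 → g v = 0) : ∃ L : W →ₗ[k] U, ∀ v, L (f v) = g v := by
  obtain ⟨r, hr⟩ := f.rangeRestrict.exists_rightInverse_of_surjective f.range_rangeRestrict
  obtain ⟨L, hL⟩ := LinearMap.exists_extend (g.comp r)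
  refine ⟨L, fun v => ?_⟩
  have h1 := LinearMap.congr_fun hL ⟨f v, v, rfl⟩
  simp only [LinearMap.comp_apply, Submodule.subtype_apply] at h1
  rw [h1, ← sub_eq_zero, ← map_sub]
  apply h
  have h2 := congrArg Subtype.val (LinearMap.congr_fun hr ⟨f v, v, rfl⟩)
  simp only [LinearMap.comp_apply, LinearMap.codRestrict_apply, LinearMap.rangeRestrict,
    LinearMap.id_apply] at h2
  rw [map_sub, sub_eq_zero]
  exact h2

lemma phi_prod_mem (s : Multiset (Matching n)) :
    phi k n (s.map X).prod ∈ R k (s.card • (1 : Fin n → ℕ)) := by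
  induction s using Multiset.induction_on with
  | empty => simpa using one_mem
  | cons M s ih =>
    rw [Multiset.map_cons, Multiset.prod_cons, map_mul, phi_X]
    refine R_mul' (gm_mem' M.1 (v := 1) (funext fun i => M.2.2 i)) ih ?_
    rw [Multiset.card_cons, succ_nsmul, add_comm]

lemma tower_prod {L1 : PtRing k n →ₗ[k] Q} {q : MvPolynomial (Matching n) k →ₐ[k] Q}
    (hL : ∀ M : Matching n, L1 (gm k M.1) = q (X M)) {e : ℕ} {L : ℕ → (PtRing k n →ₗ[k] Q)}
    (h0 : L 0 = L1) (h : ∀ i < e, HMul (i + 1) L1 (L i) (L (i + 1))) (i : ℕ) (hi : i ≤ e) :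
    ∀ s : Multiset (Matching n), s.card = i + 1 →
      L i (phi k n (s.map X).prod) = q (s.map X).prod := by
  induction i with
  | zero =>
    intro s hs
    obtain ⟨M, rfl⟩ := Multiset.card_eq_one.1 hs
    simp only [Multiset.map_singleton, Multiset.prod_singleton, phi_X, h0, hL]
  | succ i ih =>
    intro s hs
    have hne : s ≠ 0 := by rintro rfl; simp at hs
    obtain ⟨M, hM⟩ := Multiset.exists_mem_of_ne_zero hne
    obtain ⟨t, rfl⟩ := Multiset.exists_cons_of_mem hM
    have ht : t.card = i + 1 := by simpa using hs
    have hmem := phi_prod_mem (k := k) t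
    rw [ht] at hmem
    rw [Multiset.map_cons, Multiset.prod_cons, map_mul (phi k n), map_mul q, phi_X,
      h i (by omega) _ (gm_mem' M.1 (v := 1) (funext fun i => M.2.2 i)) _ hmem, hL,
      ih (by omega) t ht]

/-- The functional in degree `e + 1` composed with `phi` is the quotient map on homogeneous
polynomials of that degree. -/
lemma tower_hom {L1 : PtRing k n →ₗ[k] Q} {q : MvPolynomial (Matching n) k →ₐ[k] Q}
    (hL : ∀ M : Matching n, L1 (gm k M.1) = q (X M)) {e : ℕ} {L : ℕ → (PtRing k n →ₗ[k] Q)}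
    (h0 : L 0 = L1) (h : ∀ i < e, HMul (i + 1) L1 (L i) (L (i + 1)))
    {p : MvPolynomial (Matching n) k} (hp : p.IsHomogeneous (e + 1)) :
    L e (phi k n p) = q p := by
  have hm : ∀ m ∈ p.support, L e (phi k n (monomial m (coeff m p))) = q (monomial m (coeff m p)) := by
    intro m hm
    have h1 : (monomial m (coeff m p) : MvPolynomial (Matching n) k) =
        coeff m p • ((Finsupp.toMultiset m).map X).prod := by
      rw [monomial_eq, ← C_mul', Finsupp.toMultiset_map, Finsupp.prod_toMultiset,
        Finsupp.prod_mapDomain_index (by simp) (by simp [pow_add])]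
    have h2 : (Finsupp.toMultiset m).card = e + 1 := by
      rw [Finsupp.card_toMultiset, ← hp (mem_support_iff.1 hm)]
      simp [Finsupp.weight_apply, Finsupp.sum]
    rw [h1, map_smul, map_smul, map_smul, tower_prod hL h0 h e le_rfl _ h2]
  conv_lhs => rw [p.as_sum]
  conv_rhs => rw [p.as_sum]
  simp only [map_sum]
  exact Finset.sum_congr rfl hm

lemma gm_hom (Γ : Multiset (Fin n × Fin n)) : (gm k Γ).IsHomogeneous (2 * Γ.card) := by
  induction Γ using Multiset.induction_on with
  | empty => simpa [gm_zero] using isHomogeneous_one _ _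
  | cons e Γ ih =>
    rw [gm_cons, Multiset.card_cons, mul_add, add_comm]
    refine IsHomogeneous.mul ?_ ih
    exact ((isHomogeneous_X _ _).mul (isHomogeneous_X _ _)).sub
      ((isHomogeneous_X _ _).mul (isHomogeneous_X _ _))

lemma phi_hom {p : MvPolynomial (Matching n) k} {d : ℕ} (hp : p.IsHomogeneous d) :
    (phi k n p).IsHomogeneous (n * d) := by
  refine hp.aeval _ fun M => ?_
  have h := gm_hom (k := k) M.1
  have h2 : 2 * M.1.card = n := by
    have h3 := sum_val Finset.univ M.1
    have h4 : ∑ i, valence n M.1 i = ∑ _i : Fin n, 1 := Finset.sum_congr rfl fun i _ => M.2.2 i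
    rw [h4] at h3
    simp at h3
    omega
  rwa [h2] at h

/-- The kernel of `phi` is homogeneous. -/
lemma ker_component (h4 : 4 ≤ n) {p : MvPolynomial (Matching n) k} (hp : phi k n p = 0) (d : ℕ) :
    phi k n (homogeneousComponent d p) = 0 := by
  by_cases hd : d ∈ Finset.range (p.totalDegree + 1)
  · have h1 := congrArg (homogeneousComponent (n * d)) hp
    conv_lhs at h1 => rw [← sum_homogeneousComponent p]
    rw [map_sum, map_sum, Finset.sum_eq_single d, map_zero] at h1
    · rwa [homogeneousComponent_of_mem (phi_hom (homogeneousComponent_isHomogeneous d p)),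
        if_pos rfl] at h1
    · intro i _ hi
      rw [homogeneousComponent_of_mem (phi_hom (homogeneousComponent_isHomogeneous i p)), if_neg]
      intro h
      exact hi (Nat.eq_of_mul_eq_mul_left (by omega) h).symm
    · exact fun h => absurd hd h
  · rw [homogeneousComponent_eq_zero _ _ (by simpa using hd), map_zero]

end PtRel

/-- Main Theorem, unit weight case: for even `n ≥ 4`, `n ≠ 6`, the ideal of relations among
the degree 1 invariants is generated by its linear part together with the simple binomial
quadrics `t_{M₁} t_{M₂} − t_{M₃} t_{M₄}` for matchings with `M₁ ∪ M₂ = M₃ ∪ M₄` as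
multisets of edges. -/
theorem stmt13 (k : Type) [Field k] [CharZero k] (n : ℕ) (hn : Even n) (h4 : 4 ≤ n)
    (h6 : n ≠ 6) :
    RingHom.ker (phi k n) = Ideal.span
      ({f : MvPolynomial (Matching n) k | f ∈ RingHom.ker (phi k n) ∧ f.IsHomogeneous 1} ∪
       {f : MvPolynomial (Matching n) k | ∃ M₁ M₂ M₃ M₄ : Matching n,
          M₁.1 + M₂.1 = M₃.1 + M₄.1 ∧ f = X M₁ * X M₂ - X M₃ * X M₄}) := by
  apply le_antisymm
  · set I := Ideal.span
      ({f : MvPolynomial (Matching n) k | f ∈ RingHom.ker (phi k n) ∧ f.IsHomogeneous 1} ∪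
       {f : MvPolynomial (Matching n) k | ∃ M₁ M₂ M₃ M₄ : Matching n,
          M₁.1 + M₂.1 = M₃.1 + M₄.1 ∧ f = X M₁ * X M₂ - X M₃ * X M₄}) with hI
    let q : MvPolynomial (Matching n) k →ₐ[k] MvPolynomial (Matching n) k ⧸ I := Ideal.Quotient.mkₐ k I
    have hq0 : ∀ p, q p = 0 ↔ p ∈ I := fun p => Ideal.Quotient.eq_zero_iff_mem
    obtain ⟨L1, hL1⟩ := PtRel.exists_factor
      ((phi k n).toLinearMap.comp (homogeneousSubmodule (Matching n) k 1).subtype)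
      (q.toLinearMap.comp (homogeneousSubmodule (Matching n) k 1).subtype)
      (fun p hp => (hq0 _).2 (Ideal.subset_span (Or.inl ⟨hp, p.2⟩)))
    have hLM : ∀ M : Matching n, L1 (PtRel.gm k M.1) = q (X M) := fun M => by
      rw [← PtRel.phi_X]
      exact hL1 ⟨X M, isHomogeneous_X _ _⟩
    have hb : PtRel.HBin L1 := by
      refine PtRel.hbin_of hLM fun M₁ M₂ M₃ M₄ h => ?_
      rw [← map_mul, ← map_mul, ← sub_eq_zero, ← map_sub, hq0]
      exact Ideal.subset_span (Or.inr ⟨M₁, M₂, M₃, M₄, h, rfl⟩)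
    intro p hp
    rw [RingHom.mem_ker] at hp
    rw [← sum_homogeneousComponent p]
    refine Ideal.sum_mem _ fun d _ => ?_
    have hd := PtRel.ker_component h4 hp d
    rcases d with _ | e
    · rw [homogeneousComponent_zero] at hd ⊢
      rw [phi, aeval_C, algebraMap_eq, ← C_0, C_inj] at hd
      rw [hd, C_0]
      exact I.zero_mem
    · obtain ⟨L, h0, hL⟩ := PtRel.exists_tower hn h6 hb e
      rw [← hq0, ← PtRel.tower_hom hLM h0 hL (homogeneousComponent_isHomogeneous (e + 1) p), hd,
        map_zero]
  · rw [Ideal.span_le]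
    rintro f (hf | ⟨M₁, M₂, M₃, M₄, h, rfl⟩)
    · exact hf.1
    · rw [SetLike.mem_coe, RingHom.mem_ker, map_sub, map_mul, map_mul, PtRel.phi_X, PtRel.phi_X,
        PtRel.phi_X, PtRel.phi_X, ← PtRel.gm_add, ← PtRel.gm_add, h, sub_self]
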